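/- arXiv:2201.04062 — 2 statements merged into one kernel-verified Lean document; each statement's English description precedes it below -/
import Mathlib

section
/- Let K≥k≥1 be integers, let γ,δ,λ,η,c>0 with K ≥ (2+1/c)k, and let A be a blockade with linkage at most λ in a graph G that is not (γ,δ)-divergent, where η/2 ≥ K^{k+1}δ|G|^c + λ + γ. Let (L, M, C) be an A-rainbow bi-levelling with length K and height ℓ, whose blockade C has A-size at least η. Then there is an A-rainbow bi-levelling (L', M', C') with length k and height ℓ+1, such that every block of C' is a subset of a distinct block of C, and C' has C-size at least 1/2. -/
noncomputable section

namespace PurePairs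

open SimpleGraph

variable {V W : Type*}

/-- A pure pair in `G`: a pair of disjoint vertex sets that are complete
or anticomplete to each other. -/
def PurePair (G : SimpleGraph V) (A B : Set V) : Prop :=
  Disjoint A B ∧
    ((∀ a ∈ A, ∀ b ∈ B, G.Adj a b) ∨ (∀ a ∈ A, ∀ b ∈ B, ¬ G.Adj a b))

/-- `G` contains `H`: some induced subgraph of `G` is isomorphic to `H`. -/
def Contains (G : SimpleGraph V) (H : SimpleGraph W) : Prop :=
  Nonempty (H ↪g G)

/-- The congestion of a graph `H`: the maximum (here: supremum, together with `0`)
of `1 - (|J|-1)/|E(J)|` over all subgraphs `J` of `H` with at least one edge.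
If `H` has no edges this is `0`. -/
def congestion (H : SimpleGraph V) : ℝ :=
  sSup ({0} ∪ {x : ℝ | ∃ J : H.Subgraph, J.edgeSet.Nonempty ∧
    x = 1 - ((J.verts.ncard : ℝ) - 1) / (J.edgeSet.ncard : ℝ)})

/-- `A` is anticomplete to `B`: no edges between them. -/
def Anticomplete (G : SimpleGraph V) (A B : Set V) : Prop :=
  ∀ a ∈ A, ∀ b ∈ B, ¬ G.Adj a b

/-- `A` covers `B`: every vertex of `B` has a neighbour in `A`. -/
def Covers (G : SimpleGraph V) (A B : Set V) : Prop :=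
  ∀ b ∈ B, ∃ a ∈ A, G.Adj a b

/-- `G` is `ε`-sparse: every vertex has degree less than `ε|G|`. -/
def EpsSparse (G : SimpleGraph V) [Fintype V] (ε : ℝ) : Prop :=
  ∀ v : V, ((G.neighborSet v).ncard : ℝ) < ε * (Fintype.card V : ℝ)

/-- `G` is `(γ,δ)`-coherent: there is no pair of disjoint anticomplete sets `A`, `B`
with `|A| ≥ γ` and `|B| ≥ δ`. -/
def Coherent (G : SimpleGraph V) (γ δ : ℝ) : Prop :=
  ¬ ∃ A B : Set V, Disjoint A B ∧ Anticomplete G A B ∧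
      γ ≤ (A.ncard : ℝ) ∧ δ ≤ (B.ncard : ℝ)

/-- `N(X)`: the set of vertices with a neighbour in `X`. -/
def nbhd (G : SimpleGraph V) (X : Set V) : Set V :=
  {v | ∃ x ∈ X, G.Adj x v}

/-- A blockade: a family of nonempty pairwise disjoint vertex sets indexed by a
finite set of integers. -/
def IsBlockade (I : Finset ℤ) (A : ℤ → Set V) : Prop :=
  (∀ i ∈ I, (A i).Nonempty) ∧
    ∀ i ∈ I, ∀ j ∈ I, i ≠ j → Disjoint (A i) (A j)

/-- The blockade `(A i : i ∈ I)` is `(γ,δ)`-divergent. -/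
def Divergent (G : SimpleGraph V) (I : Finset ℤ) (A : ℤ → Set V) (γ δ : ℝ) : Prop :=
  ∃ i ∈ I, ∃ j ∈ I, i ≠ j ∧ ∃ X ⊆ A i, ∃ Y ⊆ A j,
    γ * ((A i).ncard : ℝ) ≤ (X.ncard : ℝ) ∧ δ * ((A j).ncard : ℝ) ≤ (Y.ncard : ℝ) ∧
    Anticomplete G X Y

/-- The blockade `(A i : i ∈ I)` is `τ`-expanding. -/
def Expanding (G : SimpleGraph V) (I : Finset ℤ) (A : ℤ → Set V) (τ : ℝ) : Prop :=
  ∀ i ∈ I, ∀ j ∈ I, i ≠ j → ∀ X ⊆ A i,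
    min (τ * (X.ncard : ℝ) / ((A i).ncard : ℝ)) (1/4)
      ≤ (((nbhd G X) ∩ A j).ncard : ℝ) / ((A j).ncard : ℝ)

/-- The linkage of the blockade `(A i : i ∈ I)` is at most `lam`. -/
def LinkageLE (G : SimpleGraph V) (I : Finset ℤ) (A : ℤ → Set V) (lam : ℝ) : Prop :=
  ∀ i ∈ I, ∀ j ∈ I, i ≠ j → ∀ v ∈ A i,
    ((G.neighborSet v ∩ A j).ncard : ℝ) ≤ lam * ((A j).ncard : ℝ)

/-- The shrinkage of the blockade `(A i : i ∈ I)` is at most `σ`, i.e. its width is at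
least `|G|^{1-σ}`. -/
def ShrinkageLE [Fintype V] (I : Finset ℤ) (A : ℤ → Set V) (σ : ℝ) : Prop :=
  ∀ i ∈ I, (Fintype.card V : ℝ) ^ (1 - σ) ≤ ((A i).ncard : ℝ)

/-- `(L 0, …, L k)` is a levelling in `G`. -/
def IsLevelling (G : SimpleGraph V) (L : ℕ → Set V) (k : ℕ) : Prop :=
  1 ≤ k ∧ (L 0).ncard = 1 ∧
  (∀ i ≤ k, ∀ j ≤ k, i ≠ j → Disjoint (L i) (L j)) ∧
  (∀ i, 1 ≤ i → i ≤ k → Covers G (L (i-1)) (L i)) ∧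
  (∀ i, 2 ≤ i → i ≤ k → ∀ h, h + 2 ≤ i → Anticomplete G (L h) (L i))

/-- The levelling `(L 0, …, L k)` reaches `C`, i.e. `(L 0, …, L k, C)` is a levelling. -/
def Reaches (G : SimpleGraph V) (L : ℕ → Set V) (k : ℕ) (C : Set V) : Prop :=
  IsLevelling G (fun i => if i = k + 1 then C else L i) (k + 1)

/-- The levelling `(L 0, …, L k)` is `(B i : i ∈ I)`-rainbow. -/
def RainbowLevelling (I : Finset ℤ) (B : ℤ → Set V) (L : ℕ → Set V) (k : ℕ) : Prop :=
  ∃ q : ℕ → ℤ, (∀ i ≤ k, q i ∈ I ∧ L i ⊆ B (q i)) ∧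
    ∀ i ≤ k, ∀ j ≤ k, q i = q j → i = j

/-- The levelling `(L 0, …, L k)` grades the blockade `(C j : j ∈ J)` (in some order). -/
def Grades (G : SimpleGraph V) (L : ℕ → Set V) (k : ℕ) (J : Finset ℤ) (C : ℤ → Set V) :
    Prop :=
  Reaches G L k (⋃ j ∈ J, C j) ∧
  ∃ e : ℕ → ℤ, (∀ g < J.card, e g ∈ J) ∧
    (∀ g < J.card, ∀ h < J.card, e g = e h → g = h) ∧
    ∀ g < J.card, ∃ Y ⊆ L k,
      (∀ h, g ≤ h → h < J.card → Covers G Y (C (e h))) ∧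
      (∀ h, h < g → Anticomplete G Y (C (e h)))

/-- The levelling `(L 0, …, L k)` grades the blockade `(C j : j ∈ J)` forwards. -/
def GradesFwd (G : SimpleGraph V) (L : ℕ → Set V) (k : ℕ) (J : Finset ℤ) (C : ℤ → Set V) :
    Prop :=
  Reaches G L k (⋃ j ∈ J, C j) ∧
  ∀ j ∈ J, ∃ Y ⊆ L k,
    (∀ i ∈ J, j ≤ i → Covers G Y (C i)) ∧
    (∀ i ∈ J, i < j → Anticomplete G Y (C i))

/-- The levelling `(L 0, …, L k)` grades the blockade `(C j : j ∈ J)` backwards. -/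
def GradesBwd (G : SimpleGraph V) (L : ℕ → Set V) (k : ℕ) (J : Finset ℤ) (C : ℤ → Set V) :
    Prop :=
  Reaches G L k (⋃ j ∈ J, C j) ∧
  ∀ j ∈ J, ∃ Y ⊆ L k,
    (∀ i ∈ J, i ≤ j → Covers G Y (C i)) ∧
    (∀ i ∈ J, j < i → Anticomplete G Y (C i))

/-- Two levellings are parallel. -/
def Parallel (G : SimpleGraph V) (L : ℕ → Set V) (k : ℕ) (M : ℕ → Set V) (m : ℕ) : Prop :=
  L 0 = M 0 ∧
  Disjoint (⋃ j ∈ Finset.Icc 1 m, M j) (⋃ i ∈ Finset.Icc 1 k, L i) ∧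
  Anticomplete G (⋃ j ∈ Finset.Icc 1 m, M j) (⋃ i ∈ Finset.Icc 1 k, L i)

/-- `(L, M, C)` is a bi-levelling, where `L` has height `k` and `M` has height `m`:
`C` is a blockade, `L, M` are parallel levellings both reaching the union of the
blocks of `C`, and `L` grades `C` forwards. Its height is `k + m` and its length is
the length of `C`. -/
def IsBiLevelling (G : SimpleGraph V) (L : ℕ → Set V) (k : ℕ) (M : ℕ → Set V) (m : ℕ)
    (J : Finset ℤ) (C : ℤ → Set V) : Prop :=
  IsBlockade J C ∧ IsLevelling G L k ∧ IsLevelling G M m ∧ Parallel G L k M m ∧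
    Reaches G M m (⋃ j ∈ J, C j) ∧ GradesFwd G L k J C

/-- A bi-grading: a bi-levelling in which `M` also grades `C` backwards. -/
def IsBiGrading (G : SimpleGraph V) (L : ℕ → Set V) (k : ℕ) (M : ℕ → Set V) (m : ℕ)
    (J : Finset ℤ) (C : ℤ → Set V) : Prop :=
  IsBiLevelling G L k M m J C ∧ GradesBwd G M m J C

/-- The bi-levelling `(L, M, C)` is `(A i : i ∈ I)`-rainbow: each block of `C`, each
level of `L`, and each level of `M` other than `M 0 = L 0` is included in a block of
`A`, and distinct such sets lie in distinct blocks. -/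
def RainbowBiLevelling (I : Finset ℤ) (A : ℤ → Set V)
    (L : ℕ → Set V) (k : ℕ) (M : ℕ → Set V) (m : ℕ)
    (J : Finset ℤ) (C : ℤ → Set V) : Prop :=
  ∃ (qc : ℤ → ℤ) (ql qm : ℕ → ℤ),
    (∀ j ∈ J, qc j ∈ I ∧ C j ⊆ A (qc j)) ∧
    (∀ i ≤ k, ql i ∈ I ∧ L i ⊆ A (ql i)) ∧
    (∀ i, 1 ≤ i → i ≤ m → qm i ∈ I ∧ M i ⊆ A (qm i)) ∧
    (∀ j ∈ J, ∀ j' ∈ J, qc j = qc j' → j = j') ∧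
    (∀ i ≤ k, ∀ i' ≤ k, ql i = ql i' → i = i') ∧
    (∀ i, 1 ≤ i → i ≤ m → ∀ i', 1 ≤ i' → i' ≤ m → qm i = qm i' → i = i') ∧
    (∀ j ∈ J, ∀ i ≤ k, qc j ≠ ql i) ∧
    (∀ j ∈ J, ∀ i, 1 ≤ i → i ≤ m → qc j ≠ qm i) ∧
    (∀ i ≤ k, ∀ i', 1 ≤ i' → i' ≤ m → ql i ≠ qm i')

/-- Each block of `(C j : j ∈ J)` lies in a block of `(A i : i ∈ I)`; the `A`-size of
`C` is at least `η` when every block of `C` has size at least `η` times the size of the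
block of `A` containing it. -/
def SizeGE (I : Finset ℤ) (A : ℤ → Set V) (J : Finset ℤ) (C : ℤ → Set V) (η : ℝ) : Prop :=
  ∀ j ∈ J, ∀ i ∈ I, C j ⊆ A i → η * ((A i).ncard : ℝ) ≤ ((C j).ncard : ℝ)

/-- A `(B i : i ∈ I)`-rainbow induced path `p 0 - p 1 - ⋯ - p n` in `G`. -/
def RainbowPath (G : SimpleGraph V) (I : Finset ℤ) (B : ℤ → Set V)
    (n : ℕ) (p : ℕ → V) : Prop :=
  (∀ i ≤ n, ∀ j ≤ n, p i = p j → i = j) ∧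
  (∀ i < n, G.Adj (p i) (p (i+1))) ∧
  (∀ i j, i + 1 < j → j ≤ n → ¬ G.Adj (p i) (p j)) ∧
  ∃ q : ℕ → ℤ, (∀ i ≤ n, q i ∈ I ∧ p i ∈ B (q i)) ∧
    ∀ i ≤ n, ∀ j ≤ n, q i = q j → i = j

/-- A `(B i : i ∈ I)`-rainbow copy of `H` in `G`: an induced copy of `H` with each
vertex in a different block. -/
def RainbowCopy (G : SimpleGraph V) (I : Finset ℤ) (B : ℤ → Set V)
    (H : SimpleGraph W) : Prop :=
  ∃ (f : H ↪g G) (q : W → ℤ), Function.Injective q ∧ ∀ w : W, q w ∈ I ∧ f w ∈ B (q w)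

/-- `(N,K,σ,lam,c)` forces `H`. -/
def Forces (H : SimpleGraph W) (N K : ℕ) (σ lam c : ℝ) : Prop :=
  ∀ {V : Type} [Fintype V] (G : SimpleGraph V),
    Coherent G ((Fintype.card V : ℝ) ^ (1 - c)) ((Fintype.card V : ℝ) ^ (1 - c)) →
    N ≤ Fintype.card V →
    ∀ (I : Finset ℤ) (A : ℤ → Set V), IsBlockade I A → I.card = K →
      ShrinkageLE I A σ → LinkageLE G I A lam →
      RainbowCopy G I A H

/-- `p 0 - ⋯ - p n` is a handle of length `n` that can be added to (the graph induced
on) `S` inside the ambient graph `H`: an induced path of `H[S ∪ p]` of length at least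
two whose ends lie in `S`, whose internal vertices avoid `S` and have degree two in
`H[S ∪ p]`. -/
def IsHandle (H : SimpleGraph V) (S : Set V) (n : ℕ) (p : ℕ → V) : Prop :=
  2 ≤ n ∧
  (∀ i ≤ n, ∀ j ≤ n, p i = p j → i = j) ∧
  p 0 ∈ S ∧ p n ∈ S ∧
  (∀ i, 0 < i → i < n → p i ∉ S) ∧
  (∀ i < n, H.Adj (p i) (p (i+1))) ∧
  (∀ i j, i + 1 < j → j ≤ n → ¬ H.Adj (p i) (p j)) ∧
  (∀ i, 0 < i → i < n → ∀ w, (w ∈ S ∨ ∃ j ≤ n, w = p j) → H.Adj (p i) w →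
    w = p (i-1) ∨ w = p (i+1))

/-- The vertex sets `S` such that the induced subgraph `H[S]` can be built, starting
from the two-vertex graph with no edges, by repeatedly adding handles of length at
least `β`. -/
inductive BuildableOn (H : SimpleGraph V) (β : ℕ) : Set V → Prop
  | base (u v : V) (huv : u ≠ v) (hadj : ¬ H.Adj u v) : BuildableOn H β {u, v}
  | handle (S : Set V) (n : ℕ) (p : ℕ → V) (hS : BuildableOn H β S)
      (hh : IsHandle H S n p) (hn : β ≤ n) :
      BuildableOn H β (S ∪ {w | ∃ j ≤ n, w = p j})

/-- `H` is `β`-buildable. -/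
def Buildable [Fintype V] (H : SimpleGraph V) (β : ℕ) : Prop :=
  BuildableOn H β Set.univ

/-- The vertex sets `S` such that the induced subgraph `H[S]` can be built, starting
from the null graph, by repeatedly adding a subleaf or a handle of length at least
`β`. -/
inductive WeaklyBuildableOn (H : SimpleGraph V) (β : ℕ) : Set V → Prop
  | empty : WeaklyBuildableOn H β ∅
  | subleaf (S : Set V) (v : V) (hv : v ∉ S) (hdeg : (S ∩ H.neighborSet v).ncard ≤ 1)
      (hS : WeaklyBuildableOn H β S) : WeaklyBuildableOn H β (insert v S)
  | handle (S : Set V) (n : ℕ) (p : ℕ → V) (hS : WeaklyBuildableOn H β S)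
      (hh : IsHandle H S n p) (hn : β ≤ n) :
      WeaklyBuildableOn H β (S ∪ {w | ∃ j ≤ n, w = p j})

/-- `H` is weakly `β`-buildable. -/
def WeaklyBuildable [Fintype V] (H : SimpleGraph V) (β : ℕ) : Prop :=
  WeaklyBuildableOn H β Set.univ


/-- Chain argument. -/
lemma chain_aux (J : Finset ℤ) (K k : ℕ) (hk : 1 ≤ k) (hJ : J.card = K) (d : ℤ → ℝ) (g : ℝ)
    (hg : 0 < g) (j0 : ℤ) (hj0 : j0 ∈ J) (hmin : ∀ j ∈ J, j0 ≤ j) (hd0 : 0 < d j0)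
    (hbad : ∀ h ∈ J, 0 < d h → (J.filter (fun i => h < i ∧ d i ≤ g * d h)).card < k) :
    ∀ m : ℕ, m * k + 1 ≤ K → ∃ h ∈ J, g ^ m * d j0 ≤ d h ∧
      K ≤ (J.filter (fun i => h < i)).card + 1 + m * k := by
  intro m
  induction m with
  | zero =>
    intro _
    refine ⟨j0, hj0, by simp, ?_⟩
    have : J ⊆ insert j0 (J.filter (fun i => j0 < i)) := by
      intro x hx
      rcases (hmin x hx).eq_or_lt with h | h
      · simp [h]
      · simp [hx, h]
    have h2 := (Finset.card_le_card this).trans (Finset.card_insert_le _ _)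
    omega
  | succ m ih =>
    intro hm
    have e : (m + 1) * k = m * k + k := by ring
    obtain ⟨h, hh, hd, hc⟩ := ih (by omega)
    have hpos : 0 < d h := lt_of_lt_of_le (by positivity) hd
    have hb := hbad h hh hpos
    set T := J.filter (fun i => h < i) with hT
    set B := J.filter (fun i => h < i ∧ d i ≤ g * d h) with hB
    have hBT : B ⊆ T := by
      intro x hx
      simp only [hB, hT, Finset.mem_filter] at hx ⊢
      exact ⟨hx.1, hx.2.1⟩
    have hne : (T \ B).Nonempty := by
      rw [← Finset.card_pos, Finset.card_sdiff_of_subset hBT]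
      omega
    have hmem := Finset.min'_mem _ hne
    set p := (T \ B).min' hne with hp
    have hp2 : p ∈ J ∧ h < p ∧ g * d h < d p := by
      simp only [hB, hT, Finset.mem_filter, Finset.mem_sdiff, not_and, not_le] at hmem
      exact ⟨hmem.1.1, hmem.1.2, hmem.2 hmem.1.1 hmem.1.2⟩
    refine ⟨p, hp2.1, ?_, ?_⟩
    · have := mul_le_mul_of_nonneg_left hd hg.le
      have e : g ^ (m + 1) * d j0 = g * (g ^ m * d j0) := by ring
      linarith [hp2.2.2]
    · have hsub : T ⊆ insert p (B ∪ J.filter (fun i => p < i)) := by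
        intro x hx
        by_cases hxB : x ∈ B
        · simp [hxB]
        · have h1 : x ∈ T \ B := Finset.mem_sdiff.2 ⟨hx, hxB⟩
          have h2 : p ≤ x := Finset.min'_le _ _ h1
          rcases h2.eq_or_lt with h | h
          · simp [h]
          · have : x ∈ J := (Finset.mem_filter.1 hx).1
            simp [this, h]
      have h2 := (Finset.card_le_card hsub).trans (Finset.card_insert_le _ _)
      have h3 := Finset.card_union_le B (J.filter (fun i => p < i))
      omega

/-- Numerical consequence of the chain argument: there is a good pair. -/
lemma good_pair (J : Finset ℤ) (K k n : ℕ) (hk : 1 ≤ k) (hJ : J.card = K) (c : ℝ) (hc : 0 < c)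
    (hK : (2 + 1/c) * (k : ℝ) ≤ (K : ℝ)) (hn : 1 ≤ n) (d : ℤ → ℝ)
    (j0 : ℤ) (hj0 : j0 ∈ J) (hmin : ∀ j ∈ J, j0 ≤ j) (hd0 : 1 ≤ n * d j0)
    (hd1 : ∀ j ∈ J, d j < 1) :
    ∃ h ∈ J, 0 < d h ∧ ∃ S ⊆ J, S.card = k ∧ ∀ i ∈ S, h < i ∧ d i ≤ (n : ℝ) ^ c * d h := by
  by_contra hcon
  have hn' : (1 : ℝ) ≤ n := by exact_mod_cast hn
  have hg : 0 < (n : ℝ) ^ c := by positivity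
  have hd0' : 0 < d j0 := by
    by_contra h
    push Not at h
    nlinarith
  have hbad : ∀ h ∈ J, 0 < d h →
      (J.filter (fun i => h < i ∧ d i ≤ (n : ℝ) ^ c * d h)).card < k := by
    intro h hh hdh
    by_contra hlt
    push Not at hlt
    obtain ⟨S, hS, hSc⟩ := Finset.exists_subset_card_eq hlt
    refine hcon ⟨h, hh, hdh, S, hS.trans (Finset.filter_subset _ _), hSc, ?_⟩
    intro i hi
    exact (Finset.mem_filter.1 (hS hi)).2
  have hm1 : (1 : ℝ) / c ≤ ⌈1 / c⌉₊ := Nat.le_ceil _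
  have hm2 : (⌈1 / c⌉₊ : ℝ) < 1 / c + 1 := Nat.ceil_lt_add_one (by positivity)
  set m := ⌈1 / c⌉₊
  have hk' : (1 : ℝ) ≤ k := by exact_mod_cast hk
  have hmk : m * k + 1 ≤ K := by
    have : (m : ℝ) * k + 1 ≤ K := by nlinarith
    exact_mod_cast this
  obtain ⟨h, hh, hd, -⟩ := chain_aux J K k hk hJ d _ hg j0 hj0 hmin hd0' hbad m hmk
  have h1 : (n : ℝ) ≤ ((n : ℝ) ^ c) ^ m := by
    rw [← Real.rpow_natCast, ← Real.rpow_mul (by positivity)]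
    calc (n : ℝ) = (n : ℝ) ^ (1 : ℝ) := by simp
      _ ≤ _ := by
        apply Real.rpow_le_rpow_of_exponent_le hn'
        rw [div_le_iff₀ hc] at hm1
        linarith
  have := hd1 h hh
  nlinarith

/-- The greedy process. -/
lemma greedy {V : Type} [Fintype V] (G : SimpleGraph V)
    (K k : ℕ) (hk : 1 ≤ k)
    (δ lam c : ℝ) (hδ : 0 < δ)
    (hc : 0 < c) (hK : (2 + 1/c) * (k : ℝ) ≤ (K : ℝ))
    (J : Finset ℤ) (hJ : J.card = K) (C : ℤ → Set V) (α : ℤ → ℝ)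
    (hα : ∀ j ∈ J, 0 < α j) (hαV : ∀ j ∈ J, α j ≤ Fintype.card V)
    (B : Set V) (hcov : ∀ j ∈ J, Covers G B (C j))
    (hlam : lam < 1)
    (hdeg : ∀ v ∈ B, ∀ j ∈ J, ((G.neighborSet v ∩ C j).ncard : ℝ) ≤ lam * α j)
    (hbig : ∀ j ∈ J, (K : ℝ) ^ (k + 1) * δ * (Fintype.card V : ℝ) ^ c * α j
      < ((C j).ncard : ℝ)) :
    ∃ h ∈ J, ∃ S ⊆ J, S.card = k ∧ (∀ i ∈ S, h < i) ∧ ∃ N ⊆ B,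
      δ * α h ≤ ((nbhd G N ∩ C h).ncard : ℝ) ∧
      ∀ i ∈ S, ((nbhd G N ∩ C i).ncard : ℝ) ≤
        ((K : ℝ) ^ (k + 1) * δ * (Fintype.card V : ℝ) ^ c + lam) * α i := by
  classical
  by_contra hcon
  have hkK : 1 ≤ K := by
    have hk' : (1 : ℝ) ≤ k := by exact_mod_cast hk
    have : 0 < 1 / c := by positivity
    have : (1 : ℝ) ≤ K := by nlinarith
    exact_mod_cast this
  have hJne : J.Nonempty := by rw [← Finset.card_pos]; omega
  have hj0 := Finset.min'_mem J hJne
  have hmin := Finset.min'_le J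
  set j0 := J.min' hJne
  set n := Fintype.card V with hn
  have hnpos : 1 ≤ n := by
    have := (hα j0 hj0).trans_le (hαV j0 hj0)
    exact_mod_cast this
  have hn' : (1 : ℝ) ≤ n := by exact_mod_cast hnpos
  have hg1 : 1 ≤ (n : ℝ) ^ c := Real.one_le_rpow hn' hc.le
  set g := (n : ℝ) ^ c with hgdef
  set P : Finset (ℤ × Finset ℤ) := J ×ˢ J.powersetCard k with hP
  have hPc : (P.card : ℝ) ≤ (K : ℝ) ^ (k + 1) := by
    have : P.card ≤ K ^ (k + 1) := by
      rw [hP, Finset.card_product, Finset.card_powersetCard, hJ, pow_succ, mul_comm]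
      exact Nat.mul_le_mul_right _ (Nat.choose_le_pow K k)
    exact_mod_cast this
  have main : ∀ t : ℕ, ∃ (R : ℤ → Set V) (N : ℤ × Finset ℤ → Set V) (w : ℤ × Finset ℤ → ℝ),
      t ≤ ∑ j ∈ J, (R j ∩ C j).ncard ∧
      (∀ κ ∈ P, N κ ⊆ B ∧ w κ < δ) ∧
      (∀ κ ∈ P, w κ * α κ.1 ≤ ((nbhd G (N κ) ∩ C κ.1 ∩ R κ.1).ncard : ℝ)) ∧
      (∀ κ ∈ P, ∀ i ∈ κ.2, nbhd G (N κ) ∩ C i ⊆ R i) ∧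
      (∀ j ∈ J, ((R j).ncard : ℝ) ≤ α j * g * ∑ κ ∈ P, w κ) := by
    intro t
    induction t with
    | zero =>
      refine ⟨fun _ => ∅, fun _ => ∅, fun _ => 0, by simp, ?_, by simp, ?_, by simp⟩
      · simp [hδ]
      · simp [nbhd]
    | succ t ih =>
      obtain ⟨R, N, w, ht, h1, h2, h3, h4⟩ := ih
      have hwsum : ∑ κ ∈ P, w κ ≤ (K : ℝ) ^ (k + 1) * δ := by
        calc ∑ κ ∈ P, w κ ≤ ∑ κ ∈ P, δ := Finset.sum_le_sum fun κ hκ => (h1 κ hκ).2.le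
          _ = P.card * δ := by simp
          _ ≤ _ := by gcongr
      have hRb : ∀ j ∈ J, ((R j).ncard : ℝ) ≤ (K : ℝ) ^ (k + 1) * δ * g * α j := by
        intro j hj
        have := hα j hj
        calc _ ≤ _ := h4 j hj
          _ ≤ α j * g * ((K : ℝ) ^ (k + 1) * δ) := by gcongr
          _ = _ := by ring
      -- find vertex of C j0 outside R j0
      obtain ⟨x, hxC, hxR⟩ : ∃ x ∈ C j0, x ∉ R j0 := by
        by_contra hh
        push Not at hh
        have : (C j0).ncard ≤ (R j0).ncard := Set.ncard_le_ncard hh (Set.toFinite _)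
        have : ((C j0).ncard : ℝ) ≤ (R j0).ncard := by exact_mod_cast this
        linarith [hRb j0 hj0, hbig j0 hj0]
      obtain ⟨v, hvB, hvx⟩ := hcov j0 hj0 x hxC
      set D : ℤ → Set V := fun j => (G.neighborSet v ∩ C j) \ R j with hD
      set d : ℤ → ℝ := fun j => ((D j).ncard : ℝ) / α j with hd
      have hd1 : ∀ j ∈ J, d j < 1 := by
        intro j hj
        rw [hd]
        simp only
        rw [div_lt_one (hα j hj)]
        have : (D j).ncard ≤ (G.neighborSet v ∩ C j).ncard :=
          Set.ncard_le_ncard Set.sdiff_subset (Set.toFinite _)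
        have : ((D j).ncard : ℝ) ≤ (G.neighborSet v ∩ C j).ncard := by exact_mod_cast this
        nlinarith [hdeg v hvB j hj, hα j hj]
      have hd0 : 1 ≤ n * d j0 := by
        have hx1 : 1 ≤ (D j0).ncard := by
          rw [Nat.succ_le_iff, Set.ncard_pos (Set.toFinite _)]
          exact ⟨x, ⟨hvx, hxC⟩, hxR⟩
        have hx2 : (1 : ℝ) ≤ (D j0).ncard := by exact_mod_cast hx1
        simp only [hd]
        rw [mul_div_assoc', le_div_iff₀ (hα j0 hj0)]
        nlinarith [hαV j0 hj0]
      obtain ⟨h, hh, hdh, S, hSJ, hSc, hS⟩ := good_pair J K k n hk hJ c hc hK hnpos d j0 hj0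
        hmin hd0 hd1
      set κ0 : ℤ × Finset ℤ := (h, S) with hκ0
      have hκP : κ0 ∈ P := by
        simp [hP, hκ0, hh, Finset.mem_powersetCard, hSJ, hSc]
      have hdα : ∀ j ∈ J, ((D j).ncard : ℝ) = d j * α j := by
        intro j hj
        simp only [hd]
        rw [div_mul_cancel₀ _ (hα j hj).ne']
      have hnb : nbhd G (insert v (N κ0)) = nbhd G (N κ0) ∪ G.neighborSet v := by
        ext y
        simp only [nbhd, Set.mem_insert_iff, Set.mem_ofPred_eq, Set.mem_union,
          SimpleGraph.mem_neighborSet]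
        constructor
        · rintro ⟨x, rfl | hx, hxy⟩
          · exact Or.inr hxy
          · exact Or.inl ⟨x, hx, hxy⟩
        · rintro (⟨x, hx, hxy⟩ | hxy)
          · exact ⟨x, Or.inr hx, hxy⟩
          · exact ⟨v, Or.inl rfl, hxy⟩
      -- new covered amount in C h
      have hnew : ∀ Z : Set V, R h ⊆ Z → D h ⊆ Z → (w κ0 + d h) * α h ≤
          ((nbhd G (insert v (N κ0)) ∩ C h ∩ Z).ncard : ℝ) := by
        intro Z hZ1 hZ2
        have hdisj : Disjoint (nbhd G (N κ0) ∩ C h ∩ R h) (D h) := by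
          rw [Set.disjoint_left]
          rintro y ⟨_, hy⟩ hy2
          exact hy2.2 hy
        have hsub : (nbhd G (N κ0) ∩ C h ∩ R h) ∪ D h ⊆
            nbhd G (insert v (N κ0)) ∩ C h ∩ Z := by
          rw [hnb]
          rintro y (⟨⟨hy1, hy2⟩, hy3⟩ | hy)
          · exact ⟨⟨Or.inl hy1, hy2⟩, hZ1 hy3⟩
          · exact ⟨⟨Or.inr hy.1.1, hy.1.2⟩, hZ2 hy⟩
        have e1 := Set.ncard_le_ncard hsub (Set.toFinite _)
        rw [Set.ncard_union_eq hdisj (Set.toFinite _) (Set.toFinite _)] at e1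
        have e2 : ((nbhd G (N κ0) ∩ C h ∩ R h).ncard : ℝ) + (D h).ncard ≤
          (nbhd G (insert v (N κ0)) ∩ C h ∩ Z).ncard := by exact_mod_cast e1
        have e3 := h2 κ0 hκP
        have e4 := hdα h hh
        simp only [hκ0] at e3 e2 ⊢
        linarith
      have hBins : insert v (N κ0) ⊆ B := Set.insert_subset hvB (h1 κ0 hκP).1
      by_cases hw : w κ0 + d h < δ
      swap
      · exfalso
        push Not at hw
        refine hcon ⟨h, hh, S, hSJ, hSc, fun i hi => (hS i hi).1, insert v (N κ0), hBins, ?_, ?_⟩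
        · have := hnew Set.univ (Set.subset_univ _) (Set.subset_univ _)
          rw [Set.inter_univ] at this
          nlinarith [hα h hh]
        · intro i hi
          have hsub : nbhd G (insert v (N κ0)) ∩ C i ⊆ R i ∪ (G.neighborSet v ∩ C i) := by
            rw [hnb]
            rintro y ⟨hy | hy, hyC⟩
            · exact Or.inl (h3 κ0 hκP i hi ⟨hy, hyC⟩)
            · exact Or.inr ⟨hy, hyC⟩
          have e1 := (Set.ncard_le_ncard hsub (Set.toFinite _)).trans (Set.ncard_union_le _ _)
          have e2 : ((nbhd G (insert v (N κ0)) ∩ C i).ncard : ℝ) ≤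
            (R i).ncard + (G.neighborSet v ∩ C i).ncard := by exact_mod_cast e1
          have := hRb i (hSJ hi)
          have := hdeg v hvB i (hSJ hi)
          linarith
      · set R' : ℤ → Set V := fun j => if j = h ∨ j ∈ S then R j ∪ D j else R j with hR'
        have hRR' : ∀ j, R j ⊆ R' j := by
          intro j
          simp only [hR']
          split_ifs
          · exact Set.subset_union_left
          · exact subset_rfl
        refine ⟨R', Function.update N κ0 (insert v (N κ0)),
          Function.update w κ0 (w κ0 + d h), ?_, ?_, ?_, ?_, ?_⟩
        · have : ∑ j ∈ J, (R j ∩ C j).ncard < ∑ j ∈ J, (R' j ∩ C j).ncard := by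
            apply Finset.sum_lt_sum
            · intro j hj
              exact Set.ncard_le_ncard (Set.inter_subset_inter_left _ (hRR' j)) (Set.toFinite _)
            · refine ⟨h, hh, Set.ncard_lt_ncard ?_ (Set.toFinite _)⟩
              have hne : (D h).Nonempty := by
                rw [← Set.ncard_pos (Set.toFinite _)]
                have := hdα h hh
                have h5 : (0 : ℝ) < (D h).ncard := by
                  rw [this]; exact mul_pos hdh (hα h hh)
                exact_mod_cast h5
              obtain ⟨y, hy⟩ := hne
              refine ⟨Set.inter_subset_inter_left _ (hRR' h), fun hc => ?_⟩
              have : y ∈ R' h ∩ C h := ⟨by simp only [hR', true_or, if_true]; exact Or.inr hy,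
                hy.1.2⟩
              exact hy.2 (hc this).1
          omega
        · intro κ hκ
          by_cases e : κ = κ0
          · subst e; simp [hBins, hw]
          · simpa [Function.update_of_ne e] using h1 κ hκ
        · intro κ hκ
          by_cases e : κ = κ0
          · subst e
            simp only [Function.update_self]
            apply hnew _ (hRR' h)
            simp only [hR', true_or, if_true]
            exact Set.subset_union_right
          · simp only [Function.update_of_ne e]
            refine (h2 κ hκ).trans ?_
            exact_mod_cast Set.ncard_le_ncard (Set.inter_subset_inter_right _ (hRR' _))
              (Set.toFinite _)
        · intro κ hκ i hi
          by_cases e : κ = κ0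
          · subst e
            simp only [Function.update_self]
            have hi' : i ∈ S := hi
            simp only [hR', hi', or_true, if_true]
            rw [hnb]
            rintro y ⟨hy | hy, hyC⟩
            · exact Or.inl (h3 κ0 hκP i hi ⟨hy, hyC⟩)
            · by_cases hyR : y ∈ R i
              · exact Or.inl hyR
              · exact Or.inr ⟨⟨hy, hyC⟩, hyR⟩
          · simp only [Function.update_of_ne e]
            exact (h3 κ hκ i hi).trans (hRR' i)
        · intro j hj
          have hsum : ∑ κ ∈ P, Function.update w κ0 (w κ0 + d h) κ = ∑ κ ∈ P, w κ + d h := by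
            rw [← Finset.add_sum_erase _ _ hκP, ← Finset.add_sum_erase P w hκP]
            simp only [Function.update_self]
            rw [Finset.sum_congr rfl (fun κ hκ =>
              Function.update_of_ne (Finset.ne_of_mem_erase hκ) _ _)]
            ring
          rw [hsum]
          have h5 := h4 j hj
          have hαj := hα j hj
          have hpos : 0 ≤ α j * g * d h := by positivity
          by_cases hjS : j = h ∨ j ∈ S
          · have h6 : d j ≤ g * d h := by
              rcases hjS with rfl | hjS
              · nlinarith
              · exact (hS j hjS).2
            have h7 : ((R' j).ncard : ℝ) ≤ (R j).ncard + (D j).ncard := by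
              simp only [hR', hjS, if_true]
              exact_mod_cast Set.ncard_union_le _ _
            rw [hdα j hj] at h7
            nlinarith
          · simp only [hR', hjS, if_false]
            nlinarith
  obtain ⟨R, N, w, ht, -⟩ := main (∑ j ∈ J, (C j).ncard + 1)
  have : ∑ j ∈ J, (R j ∩ C j).ncard ≤ ∑ j ∈ J, (C j).ncard :=
    Finset.sum_le_sum fun j _ => Set.ncard_le_ncard Set.inter_subset_right (Set.toFinite _)
  omega

lemma trim_levelling {V : Type} (G : SimpleGraph V) (L : ℕ → Set V) (k : ℕ) (Y : Set V)
    (hL : IsLevelling G L k) (hY : Y ⊆ L k) :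
    IsLevelling G (fun i => if i = k then Y else L i) k := by
  obtain ⟨h1, h2, h3, h4, h5⟩ := hL
  have hsub : ∀ i, (if i = k then Y else L i) ⊆ L i := by
    intro i
    split_ifs with h
    · rw [h]; exact hY
    · exact subset_rfl
  refine ⟨h1, ?_, ?_, ?_, ?_⟩
  · have : (0 : ℕ) ≠ k := by omega
    simpa [this] using h2
  · intro i hi j hj hij
    exact (h3 i hi j hj hij).mono (hsub i) (hsub j)
  · intro i hi hik x hx
    obtain ⟨y, hy, hyx⟩ := h4 i hi hik x (hsub i hx)
    refine ⟨y, ?_, hyx⟩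
    have : i - 1 ≠ k := by omega
    simpa [this] using hy
  · intro i hi hik h hh x hx y hy
    exact h5 i hi hik h hh x (hsub h hx) y (hsub i hy)

lemma reaches_mk {V : Type} (G : SimpleGraph V) (L : ℕ → Set V) (k : ℕ) (X : Set V)
    (hL : IsLevelling G L k) (hd : ∀ i ≤ k, Disjoint (L i) X) (hc : Covers G (L k) X)
    (ha : ∀ h < k, Anticomplete G (L h) X) : Reaches G L k X := by
  obtain ⟨h1, h2, h3, h4, h5⟩ := hL
  refine ⟨by omega, ?_, ?_, ?_, ?_⟩
  · simpa using h2
  · intro i hi j hj hij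
    dsimp only
    split_ifs with e1 e2 e2
    · omega
    · exact (hd j (by omega)).symm
    · exact hd i (by omega)
    · exact h3 i (by omega) j (by omega) hij
  · intro i hi hik
    dsimp only
    by_cases e : i = k + 1
    · subst e
      simpa using hc
    · have : i - 1 ≠ k + 1 := by omega
      simp only [e, this, if_false]
      exact h4 i hi (by omega)
  · intro i hi hik h hh
    dsimp only
    have : h ≠ k + 1 := by omega
    by_cases e : i = k + 1
    · simp only [e, this, if_false, if_true]
      exact ha h (by omega)
    · simp only [e, this, if_false]
      exact h5 i hi (by omega) h hh

lemma reaches_prop {V : Type} (G : SimpleGraph V) (L : ℕ → Set V) (k : ℕ) (X : Set V)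
    (h : Reaches G L k X) : (∀ i ≤ k, Disjoint (L i) X) ∧ Covers G (L k) X ∧
    ∀ h < k, Anticomplete G (L h) X := by
  obtain ⟨h1, h2, h3, h4, h5⟩ := h
  refine ⟨?_, ?_, ?_⟩
  · intro i hi
    have := h3 i (by omega) (k + 1) le_rfl (by omega)
    have e : i ≠ k + 1 := by omega
    simpa [e] using this
  · simpa using h4 (k + 1) (by omega) le_rfl
  · intro h hh
    have := h5 (k + 1) (by omega) le_rfl h (by omega)
    have e : h ≠ k + 1 := by omega
    simpa [e] using this

/-- extending a bi-levelling, increasing its height by one. -/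
theorem statement_14 {V : Type} [Fintype V] (G : SimpleGraph V)
    (K k : ℕ) (hk : 1 ≤ k) (hKk : k ≤ K)
    (γ δ lam η c : ℝ) (hγ : 0 < γ) (hδ : 0 < δ) (hlam : 0 < lam) (hη : 0 < η)
    (hc : 0 < c) (hK : (2 + 1/c) * (k : ℝ) ≤ (K : ℝ))
    (I : Finset ℤ) (A : ℤ → Set V) (hA : IsBlockade I A)
    (hlink : LinkageLE G I A lam) (hdiv : ¬ Divergent G I A γ δ)
    (hη2 : (K : ℝ) ^ (k + 1) * δ * (Fintype.card V : ℝ) ^ c + lam + γ ≤ η / 2)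
    (L : ℕ → Set V) (a : ℕ) (M : ℕ → Set V) (b : ℕ) (J : Finset ℤ) (C : ℤ → Set V)
    (hbl : IsBiLevelling G L a M b J C) (hrb : RainbowBiLevelling I A L a M b J C)
    (hlenC : J.card = K) (hsize : SizeGE I A J C η) :
    ∃ (L' : ℕ → Set V) (a' : ℕ) (M' : ℕ → Set V) (b' : ℕ)
      (J' : Finset ℤ) (C' : ℤ → Set V),
      IsBiLevelling G L' a' M' b' J' C' ∧ RainbowBiLevelling I A L' a' M' b' J' C' ∧
      J'.card = k ∧ a' + b' = a + b + 1 ∧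
      (∃ r : ℤ → ℤ, (∀ j ∈ J', r j ∈ J ∧ C' j ⊆ C (r j)) ∧
        ∀ j ∈ J', ∀ j' ∈ J', r j = r j' → j = j') ∧
      SizeGE J C J' C' (1/2) := by
  classical
  obtain ⟨hC, hLl, hMl, hpar, hMr, hLr, hgr⟩ := hbl
  obtain ⟨qc, ql, qm, r1, r2, r3, r4, r5, r6, r7, r8, r9⟩ := hrb
  obtain ⟨hMd, hMc, hMa⟩ := reaches_prop _ _ _ _ hMr
  obtain ⟨hLd, hLc, hLa⟩ := reaches_prop _ _ _ _ hLr
  have ha1 : 1 ≤ a := hLl.1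
  have hb1 : 1 ≤ b := hMl.1
  have hCU : ∀ j ∈ J, C j ⊆ ⋃ j ∈ J, C j := fun j hj => Set.subset_biUnion_of_mem hj
  set α : ℤ → ℝ := fun j => ((A (qc j)).ncard : ℝ) with hαdef
  have hα : ∀ j ∈ J, 0 < α j := by
    intro j hj
    have := (Set.ncard_pos (Set.toFinite _)).2 (hA.1 _ (r1 j hj).1)
    simp only [hαdef]
    exact_mod_cast this
  have hαV : ∀ j ∈ J, α j ≤ Fintype.card V := by
    intro j hj
    have : (A (qc j)).ncard ≤ Fintype.card V := by
      rw [← Nat.card_eq_fintype_card, ← Set.ncard_univ]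
      exact Set.ncard_le_ncard (Set.subset_univ _) (Set.toFinite _)
    simp only [hαdef]
    exact_mod_cast this
  have hsz : ∀ j ∈ J, η * α j ≤ ((C j).ncard : ℝ) := fun j hj =>
    hsize j hj _ (r1 j hj).1 (r1 j hj).2
  have hCα : ∀ j ∈ J, ((C j).ncard : ℝ) ≤ α j := by
    intro j hj
    simp only [hαdef]
    exact_mod_cast Set.ncard_le_ncard (r1 j hj).2 (Set.toFinite _)
  have hQ : 0 ≤ (K : ℝ) ^ (k + 1) * δ * (Fintype.card V : ℝ) ^ c := by positivity
  have hJne : J.Nonempty := by rw [← Finset.card_pos]; omega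
  have hlam1 : lam < 1 := by
    obtain ⟨j, hj⟩ := hJne
    have h1 := (hsz j hj).trans (hCα j hj)
    have h2 := hα j hj
    have : η ≤ 1 := by
      by_contra h
      push Not at h
      nlinarith
    linarith
  have hdeg : ∀ v ∈ M b, ∀ j ∈ J, ((G.neighborSet v ∩ C j).ncard : ℝ) ≤ lam * α j := by
    intro v hv j hj
    have hq := r3 b hb1 le_rfl
    refine le_trans ?_ (hlink _ hq.1 _ (r1 j hj).1 (fun h => r8 j hj b hb1 le_rfl h.symm) v
      (hq.2 hv))
    exact_mod_cast Set.ncard_le_ncard (Set.inter_subset_inter_right _ (r1 j hj).2)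
      (Set.toFinite _)
  have hbig : ∀ j ∈ J, (K : ℝ) ^ (k + 1) * δ * (Fintype.card V : ℝ) ^ c * α j
      < ((C j).ncard : ℝ) := by
    intro j hj
    have := hα j hj
    have h2 := hsz j hj
    have h3 : (K : ℝ) ^ (k + 1) * δ * (Fintype.card V : ℝ) ^ c < η := by linarith
    nlinarith
  obtain ⟨h, hh, S, hSJ, hSc, hS, N, hN, hX1, hX2⟩ := greedy G K k hk δ lam c hδ hc hK J hlenC C α
    hα hαV (M b) (fun j hj x hx => hMc x (hCU j hj hx)) hlam1 hdeg hbig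
  set X : Set V := nbhd G N ∩ C h with hX
  have hXC : X ⊆ C h := Set.inter_subset_right
  set C' : ℤ → Set V := fun i => (C i \ nbhd G N) ∩ nbhd G X with hC'
  have hC'C : ∀ i, C' i ⊆ C i := fun i y hy => hy.1.1
  have hhalf : ∀ i ∈ S, (1/2) * ((C i).ncard : ℝ) ≤ ((C' i).ncard : ℝ) := by
    intro i hi
    have hiJ := hSJ hi
    have hne : qc h ≠ qc i := fun e => (hS i hi).ne (r4 h hh i hiJ e)
    set Z : Set V := (C i \ nbhd G N) \ nbhd G X with hZ
    have hZsmall : (Z.ncard : ℝ) < γ * α i := by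
      by_contra hge
      push Not at hge
      refine hdiv ⟨qc i, (r1 i hiJ).1, qc h, (r1 h hh).1, hne.symm, Z, ?_, X, ?_, hge, hX1, ?_⟩
      · exact fun y hy => (r1 i hiJ).2 hy.1.1
      · exact hXC.trans (r1 h hh).2
      · intro z hz x hx hzx
        exact hz.2 ⟨x, hx, hzx.symm⟩
    have hsub : C i ⊆ (nbhd G N ∩ C i) ∪ (C' i ∪ Z) := by
      intro y hy
      by_cases h1 : y ∈ nbhd G N
      · exact Or.inl ⟨h1, hy⟩
      · by_cases h2 : y ∈ nbhd G X
        · exact Or.inr (Or.inl ⟨⟨hy, h1⟩, h2⟩)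
        · exact Or.inr (Or.inr ⟨⟨hy, h1⟩, h2⟩)
    have e1 := (Set.ncard_le_ncard hsub (Set.toFinite _)).trans (Set.ncard_union_le _ _)
    have e2 := Set.ncard_union_le (C' i) Z
    have e3 : ((C i).ncard : ℝ) ≤ (nbhd G N ∩ C i).ncard + ((C' i).ncard + Z.ncard) := by
      exact_mod_cast e1.trans (by omega)
    have e4 := hX2 i hi
    have e5 := hsz i hiJ
    have e6 := hα i hiJ
    nlinarith
  have hC'ne : ∀ i ∈ S, (C' i).Nonempty := by
    intro i hi
    have e1 := (Set.ncard_pos (Set.toFinite _)).2 (hC.1 i (hSJ hi))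
    have e2 : (0 : ℝ) < (C i).ncard := by exact_mod_cast e1
    have e3 : (0 : ℝ) < (C' i).ncard := by linarith [hhalf i hi]
    exact (Set.ncard_pos (Set.toFinite _)).1 (by exact_mod_cast e3)
  have hC'U : (⋃ j ∈ S, C' j) ⊆ ⋃ j ∈ J, C j := by
    intro y hy
    simp only [Set.mem_iUnion] at hy ⊢
    obtain ⟨j, hj, hy⟩ := hy
    exact ⟨j, hSJ hj, hC'C j hy⟩
  have hXU : X ⊆ ⋃ j ∈ J, C j := hXC.trans (hCU h hh)
  -- the new last level of L
  choose! Yf hY1 hY2 hY3 using hgr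
  set Y : Set V := ⋃ j ∈ S, Yf j with hYdef
  have hYL : Y ⊆ L a := by
    intro y hy
    simp only [hYdef, Set.mem_iUnion] at hy
    obtain ⟨j, hj, hy⟩ := hy
    exact hY1 j (hSJ hj) hy
  have hYX : Anticomplete G Y X := by
    intro y hy x hx
    simp only [hYdef, Set.mem_iUnion] at hy
    obtain ⟨j, hj, hy⟩ := hy
    exact hY3 j (hSJ hj) h hh (hS j hj) y hy x (hXC hx)
  have hYf : ∀ j ∈ S, Yf j ⊆ Y := fun j hj => Set.subset_biUnion_of_mem hj
  set L' : ℕ → Set V := fun i => if i = a then Y else L i with hL'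
  set M1 : ℕ → Set V := fun i => if i = b then N else M i with hM1
  set M' : ℕ → Set V := fun i => if i = b + 1 then X else M1 i with hM'
  have hL'lev : IsLevelling G L' a := trim_levelling G L a Y hLl hYL
  have hM1lev : IsLevelling G M1 b := trim_levelling G M b N hMl hN
  have hL'sub : ∀ i, L' i ⊆ L i := by
    intro i
    simp only [hL']
    split_ifs with e
    · rw [e]; exact hYL
    · exact subset_rfl
  have hM1sub : ∀ i, M1 i ⊆ M i := by
    intro i
    simp only [hM1]
    split_ifs with e
    · rw [e]; exact hN
    · exact subset_rfl
  have hL'a : L' a = Y := by simp [hL']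
  have hM1b : M1 b = N := by simp [hM1]
  have hM'lt : ∀ i ≤ b, M' i = M1 i := by
    intro i hi
    have : i ≠ b + 1 := by omega
    simp [hM', this]
  have hM'b : M' (b + 1) = X := by simp [hM']
  have hM'lev : IsLevelling G M' (b + 1) := by
    refine reaches_mk G M1 b X hM1lev ?_ ?_ ?_
    · intro i hi
      exact (hMd i hi).mono (hM1sub i) hXU
    · rw [hM1b]
      rintro x ⟨⟨y, hy, hyx⟩, -⟩
      exact ⟨y, hy, hyx⟩
    · intro i hi y hy x hx
      exact hMa i hi y (hM1sub i hy) x (hXU hx)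
  have hL'r : Reaches G L' a (⋃ j ∈ S, C' j) := by
    refine reaches_mk G L' a _ hL'lev ?_ ?_ ?_
    · intro i hi
      exact (hLd i hi).mono (hL'sub i) hC'U
    · rw [hL'a]
      intro x hx
      simp only [Set.mem_iUnion] at hx
      obtain ⟨j, hj, hx⟩ := hx
      obtain ⟨y, hy, hyx⟩ := hY2 j (hSJ hj) j (hSJ hj) le_rfl x (hC'C j hx)
      exact ⟨y, hYf j hj hy, hyx⟩
    · intro i hi y hy x hx
      exact hLa i hi y (hL'sub i hy) x (hC'U hx)
  have hM'r : Reaches G M' (b + 1) (⋃ j ∈ S, C' j) := by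
    refine reaches_mk G M' (b + 1) _ hM'lev ?_ ?_ ?_
    · intro i hi
      by_cases e : i = b + 1
      · rw [e, hM'b, Set.disjoint_left]
        intro x hx hx2
        simp only [Set.mem_iUnion] at hx2
        obtain ⟨j, hj, hx2⟩ := hx2
        exact Set.disjoint_left.1 (hC.2 h hh j (hSJ hj) (hS j hj).ne) (hXC hx) (hC'C j hx2)
      · rw [hM'lt i (by omega)]
        exact (hMd i (by omega)).mono (hM1sub i) hC'U
    · rw [hM'b]
      intro x hx
      simp only [Set.mem_iUnion] at hx
      obtain ⟨j, hj, hx⟩ := hx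
      exact hx.2
    · intro i hi y hy x hx hyx
      rw [hM'lt i (by omega)] at hy
      by_cases e : i = b
      · subst e
        rw [hM1b] at hy
        simp only [Set.mem_iUnion] at hx
        obtain ⟨j, hj, hx⟩ := hx
        exact hx.1.2 ⟨y, hy, hyx⟩
      · exact hMa i (by omega) y (hM1sub i hy) x (hC'U hx) hyx
  have hpar' : Parallel G L' a M' (b + 1) := by
    obtain ⟨p1, p2, p3⟩ := hpar
    refine ⟨?_, ?_, ?_⟩
    · have e1 : (0 : ℕ) ≠ a := by omega
      have e2 : (0 : ℕ) ≠ b := by omega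
      rw [hM'lt 0 (by omega)]
      simpa [hL', hM1, e1, e2] using p1
    · rw [Set.disjoint_left]
      intro x hx hx2
      simp only [Set.mem_iUnion, Finset.mem_Icc] at hx hx2
      obtain ⟨j, hj, hx⟩ := hx
      obtain ⟨i, hi, hx2⟩ := hx2
      by_cases e : j = b + 1
      · rw [e, hM'b] at hx
        exact Set.disjoint_left.1 (hLd i hi.2) (hL'sub i hx2) (hXU hx)
      · rw [hM'lt j (by omega)] at hx
        refine (Set.disjoint_left.1 p2 : _) (?_ : x ∈ _) ?_
        · simp only [Set.mem_iUnion, Finset.mem_Icc]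
          exact ⟨j, ⟨hj.1, by omega⟩, hM1sub j hx⟩
        · simp only [Set.mem_iUnion, Finset.mem_Icc]
          exact ⟨i, hi, hL'sub i hx2⟩
    · intro x hx y hy hxy
      simp only [Set.mem_iUnion, Finset.mem_Icc] at hx hy
      obtain ⟨j, hj, hx⟩ := hx
      obtain ⟨i, hi, hy⟩ := hy
      by_cases e : j = b + 1
      · rw [e, hM'b] at hx
        by_cases e2 : i = a
        · rw [e2, hL'a] at hy
          exact hYX y hy x hx hxy.symm
        · exact hLa i (by omega) y (hL'sub i hy) x (hXU hx) hxy.symm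
      · rw [hM'lt j (by omega)] at hx
        refine p3 x ?_ y ?_ hxy
        · simp only [Set.mem_iUnion, Finset.mem_Icc]
          exact ⟨j, ⟨hj.1, by omega⟩, hM1sub j hx⟩
        · simp only [Set.mem_iUnion, Finset.mem_Icc]
          exact ⟨i, hi, hL'sub i hy⟩
  refine ⟨L', a, M', b + 1, S, C', ⟨⟨hC'ne, ?_⟩, hL'lev, hM'lev, hpar', hM'r, hL'r, ?_⟩, ?_, hSc,
    by omega, ⟨id, fun j hj => ⟨hSJ hj, hC'C j⟩, fun j _ j' _ e => e⟩, ?_⟩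
  · intro i hi j hj hij
    exact (hC.2 i (hSJ hi) j (hSJ hj) hij).mono (hC'C i) (hC'C j)
  · intro j hj
    refine ⟨Yf j, by rw [hL'a]; exact hYf j hj, ?_, ?_⟩
    · intro i hi hji x hx
      exact hY2 j (hSJ hj) i (hSJ hi) hji x (hC'C i hx)
    · intro i hi hij y hy x hx
      exact hY3 j (hSJ hj) i (hSJ hi) hij y hy x (hC'C i hx)
  · refine ⟨qc, ql, fun i => if i = b + 1 then qc h else qm i, ?_, ?_, ?_, ?_, r5, ?_, ?_, ?_, ?_⟩
    · exact fun j hj => ⟨(r1 j (hSJ hj)).1, (hC'C j).trans (r1 j (hSJ hj)).2⟩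
    · exact fun i hi => ⟨(r2 i hi).1, (hL'sub i).trans (r2 i hi).2⟩
    · intro i hi hib
      by_cases e : i = b + 1
      · rw [e, hM'b]
        simp only [if_true]
        exact ⟨(r1 h hh).1, hXC.trans (r1 h hh).2⟩
      · rw [hM'lt i (by omega)]
        simp only [e, if_false]
        have := r3 i hi (by omega)
        exact ⟨this.1, (hM1sub i).trans this.2⟩
    · exact fun j hj j' hj' e => r4 j (hSJ hj) j' (hSJ hj') e
    · intro i hi hib i' hi' hib'
      dsimp only
      split_ifs with e1 e2 e2
      · intro _; omega
      · exact fun e => absurd e (r8 h hh i' hi' (by omega))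
      · exact fun e => absurd e.symm (r8 h hh i hi (by omega))
      · exact r6 i hi (by omega) i' hi' (by omega)
    · exact fun j hj i hi => r7 j (hSJ hj) i hi
    · intro j hj i hi hib
      dsimp only
      split_ifs with e1
      · exact fun e => (hS j hj).ne' (r4 j (hSJ hj) h hh e)
      · exact r8 j (hSJ hj) i hi (by omega)
    · intro i hi i' hi' hib'
      dsimp only
      split_ifs with e1
      · exact fun e => r7 h hh i hi e.symm
      · exact r9 i hi i' hi' (by omega)
  · intro j hj i hi hji
    have : i = j := by
      by_contra hne
      obtain ⟨y, hy⟩ := hC'ne j hj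
      exact Set.disjoint_left.1 (hC.2 i hi j (hSJ hj) hne) (hji hy) (hC'C j hy)
    rw [this]
    exact hhalf j hj

end PurePairs
end
end

section
/- Let k≥1 be an integer, let c>0, let ρ = ⌈1+1/c⌉, and let ℓ ≥ 3ρ−2 be an integer. Let K = ⌈k(3+1/c)^{ℓ+2}⌉, and let γ,λ>0 with λ,γ ≤ 2^{−8−ℓ}/(ρ³K). Let G be a graph, define δ = K^{−K}|G|^{−c}, and let A=(A_i : i∈I) be a blockade in G of length K, with linkage at most λ, that is not (γ,δ)-divergent. Then there is an A-rainbow bi-levelling (L, M, C) with length k and height exactly ℓ, such that C has A-size at least 2^{4−ℓ}/(ρ³K). -/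
noncomputable section

namespace PurePairs

open SimpleGraph

variable {V W : Type*}

set_option linter.unusedVariables false
set_option linter.unusedSectionVars false

/-- Relative measure of `X` in block `A i`. -/
def mm {V : Type} (A : ℤ → Set V) (i : ℤ) (X : Set V) : ℝ :=
  ((X ∩ A i).ncard : ℝ) / ((A i).ncard : ℝ)

section Measure
variable {V : Type} [Fintype V] (A : ℤ → Set V) (i : ℤ)

theorem mm_nonneg (X : Set V) : 0 ≤ mm A i X := by unfold mm; positivity

theorem mm_mono {X Y : Set V} (h : X ⊆ Y) : mm A i X ≤ mm A i Y := by
  unfold mm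
  have : (X ∩ A i).ncard ≤ (Y ∩ A i).ncard :=
    Set.ncard_le_ncard (Set.inter_subset_inter_left _ h) (Set.toFinite _)
  gcongr

theorem mm_mono' {X Y : Set V} (h : X ∩ A i ⊆ Y) : mm A i X ≤ mm A i Y := by
  unfold mm
  have : (X ∩ A i).ncard ≤ (Y ∩ A i).ncard :=
    Set.ncard_le_ncard (Set.subset_inter h Set.inter_subset_right) (Set.toFinite _)
  gcongr

theorem mm_union_le (X Y : Set V) : mm A i (X ∪ Y) ≤ mm A i X + mm A i Y := by
  unfold mm
  rw [← add_div, Set.union_inter_distrib_right]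
  have := Set.ncard_union_le (X ∩ A i) (Y ∩ A i)
  gcongr
  exact_mod_cast this

theorem mm_union {X Y : Set V} (h : Disjoint X Y) : mm A i (X ∪ Y) = mm A i X + mm A i Y := by
  unfold mm
  rw [← add_div, Set.union_inter_distrib_right,
    Set.ncard_union_eq (h.mono Set.inter_subset_left Set.inter_subset_left)
      (Set.toFinite _) (Set.toFinite _)]
  push_cast; rfl

theorem mm_inter_add_diff (X Y : Set V) : mm A i (X ∩ Y) + mm A i (X \ Y) = mm A i X := by
  rw [← mm_union A i (Set.disjoint_sdiff_inter.symm), Set.inter_union_sdiff]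

theorem mm_empty : mm A i (∅ : Set V) = 0 := by simp [mm]

theorem mm_add_compl (h : (A i).Nonempty) (X : Set V) : mm A i X + mm A i Xᶜ = 1 := by
  rw [← mm_union A i disjoint_compl_right, Set.union_compl_self]
  have : ((A i).ncard : ℝ) ≠ 0 := by
    have := (Set.ncard_pos (Set.toFinite (A i))).2 h
    positivity
  simp [mm, this]

theorem mm_le_one (X : Set V) : mm A i X ≤ 1 := by
  by_cases h : (A i).Nonempty
  · linarith [mm_add_compl A i h X, mm_nonneg A i Xᶜ]
  · rw [Set.not_nonempty_iff_eq_empty] at h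
    simp [mm, h]

theorem mm_biUnion_le {ι : Type*} (s : Finset ι) (F : ι → Set V) :
    mm A i (⋃ x ∈ s, F x) ≤ ∑ x ∈ s, mm A i (F x) := by
  classical
  induction s using Finset.induction_on with
  | empty => simp [mm_empty]
  | insert a s ha ih =>
    rw [Finset.set_biUnion_insert, Finset.sum_insert ha]
    linarith [mm_union_le A i (F a) (⋃ x ∈ s, F x)]

/-- pigeonhole -/
theorem mm_pigeon {ι : Type*} (s : Finset ι) (F : ι → Set V) (X : Set V) (N : ℝ) (μ : ℝ)
    (hN : 0 < N) (hs : (s.card : ℝ) ≤ N) (hX : X ⊆ ⋃ x ∈ s, F x) (hμ : μ ≤ mm A i X) (hμ0 : 0 < μ) :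
    ∃ x ∈ s, μ / N ≤ mm A i (F x) := by
  by_contra hcon
  push Not at hcon
  have h1 := (mm_mono A i hX).trans (mm_biUnion_le A i s F)
  have hne : s.Nonempty := by
    rw [Finset.nonempty_iff_ne_empty]
    rintro rfl
    simp at h1
    linarith
  have h2 : ∑ x ∈ s, mm A i (F x) < ∑ x ∈ s, μ / N := Finset.sum_lt_sum_of_nonempty hne hcon
  rw [Finset.sum_const, nsmul_eq_mul] at h2
  have : (s.card : ℝ) * (μ / N) ≤ N * (μ / N) := by gcongr
  have h3 : N * (μ / N) = μ := by field_simp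
  linarith

theorem mm_pos_nonempty {X : Set V} (h : 0 < mm A i X) : (X ∩ A i).Nonempty := by
  by_contra hc
  rw [Set.not_nonempty_iff_eq_empty] at hc
  simp [mm, hc] at h

end Measure

theorem nbhd_mono {V : Type} (G : SimpleGraph V) {X Y : Set V} (h : X ⊆ Y) : nbhd G X ⊆ nbhd G Y :=
  fun _ ⟨x, hx, hv⟩ => ⟨x, h hx, hv⟩

theorem nbhd_union {V : Type} (G : SimpleGraph V) (X Y : Set V) :
    nbhd G (X ∪ Y) = nbhd G X ∪ nbhd G Y := by
  ext v; constructor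
  · rintro ⟨x, hx | hx, h⟩
    · exact Or.inl ⟨x, hx, h⟩
    · exact Or.inr ⟨x, hx, h⟩
  · rintro (⟨x, hx, h⟩ | ⟨x, hx, h⟩)
    · exact ⟨x, Or.inl hx, h⟩
    · exact ⟨x, Or.inr hx, h⟩

theorem nbhd_insert {V : Type} (G : SimpleGraph V) (x : V) (Y : Set V) :
    nbhd G (insert x Y) = nbhd G {x} ∪ nbhd G Y := by
  rw [Set.insert_eq, nbhd_union]

theorem nbhd_empty {V : Type} (G : SimpleGraph V) : nbhd G ∅ = ∅ := by
  ext v; simp [nbhd]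

theorem nbhd_singleton {V : Type} (G : SimpleGraph V) (v : V) : nbhd G {v} = G.neighborSet v := by
  ext; simp [nbhd]

/-- The working hypotheses. -/
structure Setup {V : Type} [Fintype V] (G : SimpleGraph V) (I : Finset ℤ) (A : ℤ → Set V)
    (θ δ β : ℝ) (ρ : ℕ) : Prop where
  blk : IsBlockade I A
  link : ∀ i ∈ I, ∀ j ∈ I, i ≠ j → ∀ v ∈ A i, mm A j (nbhd G {v}) ≤ θ
  nd : ∀ i ∈ I, ∀ j ∈ I, i ≠ j → ∀ X ⊆ A i, δ ≤ mm A i X → mm A j (nbhd G X)ᶜ < θ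
  card : 2 ≤ I.card
  δpos : 0 < δ
  θpos : 0 < θ
  βpos : 0 < β
  βhalf : β ≤ 1 / 2
  ρ2 : 2 ≤ ρ
  δθ : 8 * ρ * δ ≤ β * θ
  θsmall : 256 * (ρ : ℝ) ^ 5 * θ ≤ 1
  βn : β ^ (ρ - 1) * (Fintype.card V : ℝ) < 1

namespace Setup
variable {V : Type} [Fintype V] {G : SimpleGraph V} {I : Finset ℤ} {A : ℤ → Set V}
    {θ δ β : ℝ} {ρ : ℕ}

theorem disj (S : Setup G I A θ δ β ρ) {i j : ℤ} (hi : i ∈ I) (hj : j ∈ I) (h : i ≠ j) :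
    Disjoint (A i) (A j) := S.blk.2 i hi j hj h

theorem ρ2' (S : Setup G I A θ δ β ρ) : (2 : ℝ) ≤ ρ := by exact_mod_cast S.ρ2

theorem θlt (S : Setup G I A θ δ β ρ) : 256 * (ρ : ℝ) ^ 4 * θ ≤ 1 / 2 := by
  have h := S.θsmall
  have h1 := S.ρ2'
  have h2 := S.θpos
  have : 256 * (ρ : ℝ) ^ 5 * θ = (256 * (ρ : ℝ) ^ 4 * θ) * ρ := by ring
  rw [this] at h
  have h3 : 0 ≤ 256 * (ρ : ℝ) ^ 4 * θ := by positivity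
  nlinarith

theorem θρ (S : Setup G I A θ δ β ρ) : 256 * ρ * θ ≤ 1 / 16 := by
  have h := S.θlt
  have h1 := S.ρ2'
  have h2 := S.θpos
  have h8 : (8 : ℝ) ≤ (ρ : ℝ) ^ 3 := by
    calc (8 : ℝ) = 2 ^ 3 := by norm_num
      _ ≤ _ := by gcongr
  have : 256 * (ρ : ℝ) ^ 4 * θ = (256 * ρ * θ) * (ρ : ℝ) ^ 3 := by ring
  rw [this] at h
  have h3 : 0 ≤ 256 * (ρ : ℝ) * θ := by positivity
  nlinarith

theorem θ1 (S : Setup G I A θ δ β ρ) : 8192 * θ ≤ 1 := by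
  have h := S.θρ
  have h1 := S.ρ2'
  have h2 := S.θpos
  nlinarith

theorem ρδ (S : Setup G I A θ δ β ρ) : 16 * (ρ * δ) ≤ θ := by
  have h := S.δθ
  have h1 := S.βhalf
  have h2 := S.θpos
  nlinarith

theorem δle (S : Setup G I A θ δ β ρ) : 32 * δ ≤ θ := by
  have := S.ρδ
  have h1 := S.ρ2'
  have h2 := S.δpos
  nlinarith

theorem single (S : Setup G I A θ δ β ρ) {i : ℤ} (hi : i ∈ I) {v : V} (hv : v ∈ A i) :
    mm A i {v} < δ := by
  by_contra hc
  push Not at hc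
  obtain ⟨j, hj, hij⟩ := Finset.exists_mem_ne (s := I) (by have := S.card; omega) i
  have h1 := S.nd i hi j hj hij.symm {v} (by simpa using hv) hc
  have h2 := S.link i hi j hj hij.symm v hv
  have h3 := mm_add_compl A j (S.blk.1 j hj) (nbhd G {v})
  have := S.θ1
  linarith

theorem single_ge (S : Setup G I A θ δ β ρ) {i : ℤ} (hi : i ∈ I) {v : V} (hv : v ∈ A i) :
    1 ≤ mm A i {v} * (Fintype.card V : ℝ) := by
  have h1 : ({v} ∩ A i) = {v} := by simpa using hv
  unfold mm
  rw [h1, Set.ncard_singleton]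
  have h2 : 0 < (A i).ncard := (Set.ncard_pos (Set.toFinite _)).2 ⟨v, hv⟩
  have h3 : (A i).ncard ≤ Fintype.card V := by
    rw [← Nat.card_eq_fintype_card]; exact Set.ncard_le_card _
  have h2' : (0 : ℝ) < (A i).ncard := by exact_mod_cast h2
  have h3' : ((A i).ncard : ℝ) ≤ Fintype.card V := by exact_mod_cast h3
  rw [div_mul_eq_mul_div, le_div_iff₀ h2']
  simpa using h3'

theorem ρ3 (S : Setup G I A θ δ β ρ) : 3 ≤ ρ := by
  by_contra hc
  have h2 : ρ = 2 := by have := S.ρ2; omega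
  have hn := S.βn
  rw [h2] at hn
  simp at hn
  obtain ⟨i, hi⟩ : I.Nonempty := Finset.card_pos.1 (by have := S.card; omega)
  obtain ⟨v, hv⟩ := S.blk.1 i hi
  have a := S.single hi hv
  have b := S.single_ge hi hv
  have hn0 : (0 : ℝ) ≤ Fintype.card V := by positivity
  have : δ ≤ β := by
    have := S.δθ
    have := S.ρ2'
    have := S.θ1
    have := S.δpos
    have := S.βpos
    nlinarith
  nlinarith

/-- The expansion lower bound. -/
theorem nd' (S : Setup G I A θ δ β ρ) {i j : ℤ} (hi : i ∈ I) (hj : j ∈ I) (hij : i ≠ j)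
    {X : Set V} (hX : X ⊆ A i) (h : δ ≤ mm A i X) (F : Set V) :
    mm A j F - θ < mm A j (nbhd G X ∩ F) := by
  have h1 := S.nd i hi j hj hij X hX h
  have h2 := mm_inter_add_diff A j F (nbhd G X)
  have h3 : mm A j (F \ nbhd G X) ≤ mm A j (nbhd G X)ᶜ := mm_mono A j (fun x hx => hx.2)
  rw [Set.inter_comm] at h2
  linarith

end Setup

/-- Finite induction: first time a property becomes true. -/
theorem first_time {V : Type} [Finite V] (P : Set V → Prop) (B S : Set V) (h0 : ¬ P B)
    (h1 : P (B ∪ S)) : ∃ T ⊆ S, ∃ y ∈ S, ¬ P (B ∪ T) ∧ P (B ∪ insert y T) := by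
  induction S, (Set.toFinite S) using Set.Finite.induction_on with
  | empty => simp at h1; exact absurd h1 h0
  | @insert a S ha hS ih =>
    by_cases hP : P (B ∪ S)
    · obtain ⟨T, hT, y, hy, h⟩ := ih hP
      exact ⟨T, hT.trans (Set.subset_insert _ _), y, Or.inr hy, h⟩
    · exact ⟨S, Set.subset_insert _ _, a, Or.inl rfl, hP, h1⟩

/-- levels condition -/
def Lev {V : Type} (G : SimpleGraph V) (R : ℕ → Set V) (h : ℕ) : Prop :=
  (∀ t < h, Covers G (R t) (R (t + 1))) ∧ ∀ s t, s + 2 ≤ t → t ≤ h → Anticomplete G (R s) (R t)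

theorem Lev.mono {V : Type} {G : SimpleGraph V} {R : ℕ → Set V} {h h' : ℕ} (H : Lev G R h)
    (hh : h' ≤ h) : Lev G R h' :=
  ⟨fun t ht => H.1 t (by omega), fun s t hst ht => H.2 s t hst (by omega)⟩

/-- truncating the top level -/
theorem Lev.trunc {V : Type} {G : SimpleGraph V} {R : ℕ → Set V} {h : ℕ} (H : Lev G R h)
    {T : Set V} (hT : T ⊆ R h) : Lev G (fun t => if t = h then T else R t) h := by
  constructor
  · intro t ht
    have : t ≠ h := by omega
    simp only [this, if_false]
    split_ifs with h1
    · intro b hb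
      exact H.1 t ht b (h1 ▸ hT hb)
    · exact H.1 t ht
  · intro s t hst ht
    have : s ≠ h := by omega
    simp only [this, if_false]
    split_ifs with h1
    · intro a ha b hb
      exact H.2 s t hst ht a ha b (h1 ▸ hT hb)
    · exact H.2 s t hst ht

/-- Union of the levels up to `h`. -/
def lun {V : Type} (R : ℕ → Set V) (h : ℕ) : Set V := {x | ∃ t ≤ h, x ∈ R t}

theorem lun_zero {V : Type} (R : ℕ → Set V) : lun R 0 = R 0 := by
  ext x; simp [lun]

theorem lun_succ {V : Type} (R : ℕ → Set V) (h : ℕ) : lun R (h + 1) = lun R h ∪ R (h + 1) := by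
  ext x; constructor
  · rintro ⟨t, ht, hx⟩
    rcases Nat.lt_or_ge t (h + 1) with h1 | h1
    · exact Or.inl ⟨t, by omega, hx⟩
    · have : t = h + 1 := by omega
      exact Or.inr (this ▸ hx)
  · rintro (⟨t, ht, hx⟩ | hx)
    · exact ⟨t, by omega, hx⟩
    · exact ⟨h + 1, le_rfl, hx⟩

/-- first-level classes -/
def cls {V : Type} (G : SimpleGraph V) (R : ℕ → Set V) (t : ℕ) : Set V :=
  {x | x ∈ nbhd G (R t) ∧ ∀ s < t, x ∉ nbhd G (R s)}

theorem cls_cover {V : Type} (G : SimpleGraph V) (R : ℕ → Set V) (h : ℕ) {x : V}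
    (hx : x ∈ nbhd G (lun R h)) : ∃ t ≤ h, x ∈ cls G R t := by
  classical
  obtain ⟨y, ⟨t, ht, hy⟩, hadj⟩ := hx
  have hex : ∃ t, x ∈ nbhd G (R t) := ⟨t, y, hy, hadj⟩
  exact ⟨Nat.find hex, (Nat.find_min' hex ⟨y, hy, hadj⟩).trans ht, Nat.find_spec hex,
    fun s hs => Nat.find_min hex hs⟩

/-- Level version of `first_time`. -/
theorem first_time_lev {V : Type} [Finite V] {G : SimpleGraph V} {R : ℕ → Set V} {h : ℕ}
    (H : Lev G R h) (P : Set V → Prop) (h0 : ¬ P (R 0)) (h1 : P (lun R h)) :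
    ∃ l, 1 ≤ l ∧ l ≤ h ∧ ∃ R' : ℕ → Set V, (∀ t, R' t ⊆ R t) ∧ R' 0 = R 0 ∧ Lev G R' l ∧
      ∃ y ∈ R l, ∃ B, lun R' l = insert y B ∧ ¬ P B ∧ P (insert y B) := by
  induction h with
  | zero => rw [lun_zero] at h1; exact absurd h1 h0
  | succ h ih =>
    by_cases hP : P (lun R h)
    · obtain ⟨l, hl, hl', rest⟩ := ih (H.mono (by omega)) hP
      exact ⟨l, hl, by omega, rest⟩
    · rw [lun_succ] at h1
      obtain ⟨T, hT, y, hy, hn, hp⟩ := first_time P _ _ hP h1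
      refine ⟨h + 1, by omega, le_rfl, fun t => if t = h + 1 then insert y T else R t, ?_, ?_,
        H.trunc (Set.insert_subset hy hT), y, hy, lun R h ∪ T, ?_, hn, ?_⟩
      · intro t; dsimp only; split_ifs with e
        · rw [e]; exact Set.insert_subset hy hT
        · exact le_rfl
      · simp
      · rw [lun_succ]
        have : lun (fun t => if t = h + 1 then insert y T else R t) h = lun R h := by
          ext x; constructor
          · rintro ⟨t, ht, hx⟩
            have : t ≠ h + 1 := by omega
            simp only [this, if_false] at hx
            exact ⟨t, ht, hx⟩
          · rintro ⟨t, ht, hx⟩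
            have : t ≠ h + 1 := by omega
            exact ⟨t, ht, by simpa only [this, if_false] using hx⟩
        rw [this]; simp
      · rwa [Set.union_insert] at hp

section Grow
variable {V : Type} [Fintype V] {G : SimpleGraph V} {I : Finset ℤ} {A : ℤ → Set V}
    {θ δ β : ℝ} {ρ : ℕ}

theorem pair_clean (S : Setup G I A θ δ β ρ) {i j : ℤ} (hi : i ∈ I) (hj : j ∈ I) (hij : i ≠ j)
    {E F : Set V} (hE : E ⊆ A i) (hF : 2 * θ ≤ mm A j F) :
    ∃ B ⊆ E, mm A i B ≤ δ ∧ ∀ X ⊆ E \ B, X.Nonempty → mm A i X ≤ δ →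
      θ / (2 * δ) * mm A i X ≤ mm A j (nbhd G X ∩ F) := by
  classical
  have hδ := S.δpos
  have hθ := S.θpos
  let Fam : Set (Set V) := {B | B ⊆ E ∧ mm A i B ≤ 2 * δ ∧
    mm A j (nbhd G B ∩ F) ≤ θ / (2 * δ) * mm A i B}
  have hne : Fam.Nonempty := by
    refine ⟨∅, Set.empty_subset _, ?_, ?_⟩
    · rw [mm_empty]; positivity
    · simp [nbhd_empty, mm_empty]
  obtain ⟨B, ⟨hB1, hB2, hB3⟩, hmax⟩ := (Set.toFinite Fam).exists_maximalFor Set.ncard Fam hne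
  refine ⟨B, hB1, ?_, ?_⟩
  · by_contra hc
    push Not at hc
    have h1 := S.nd' hi hj hij (hB1.trans hE) hc.le F
    have h2 : θ / (2 * δ) * mm A i B ≤ θ / (2 * δ) * (2 * δ) := by gcongr
    have h3 : θ / (2 * δ) * (2 * δ) = θ := by field_simp
    linarith
  · intro X hX hXne hXδ
    by_contra hc
    push Not at hc
    have hdis : Disjoint B X := by
      rw [Set.disjoint_left]; intro x hx hx'; exact (hX hx').2 hx
    have hBδ : mm A i B ≤ δ := by
      by_contra hc
      push Not at hc
      have h1 := S.nd' hi hj hij (hB1.trans hE) hc.le F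
      have h2 : θ / (2 * δ) * mm A i B ≤ θ / (2 * δ) * (2 * δ) := by gcongr
      have h3 : θ / (2 * δ) * (2 * δ) = θ := by field_simp
      linarith
    have hin : B ∪ X ∈ Fam := by
      refine ⟨Set.union_subset hB1 (fun x hx => (hX hx).1), ?_, ?_⟩
      · rw [mm_union A i hdis]; linarith
      · rw [mm_union A i hdis, nbhd_union, Set.union_inter_distrib_right, mul_add]
        linarith [mm_union_le A j (nbhd G B ∩ F) (nbhd G X ∩ F)]
    have hcard : B.ncard < (B ∪ X).ncard := by
      rw [Set.ncard_union_eq hdis (Set.toFinite _) (Set.toFinite _)]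
      have := (Set.ncard_pos (Set.toFinite X)).2 hXne
      omega
    have := hmax hin hcard.le
    omega

theorem clean (S : Setup G I A θ δ β ρ) (p : ℕ) : ∀ (e : ℕ → ℤ) (E : ℕ → Set V)
    (_ : ∀ i ≤ p, e i ∈ I) (_ : ∀ i ≤ p, ∀ j ≤ p, e i = e j → i = j)
    (_ : ∀ i ≤ p, E i ⊆ A (e i))
    (_ : ∀ i, 1 ≤ i → i ≤ p → 2 * θ + p * δ ≤ mm A (e i) (E i)),
    ∃ E' : ℕ → Set V, (∀ i ≤ p, E' i ⊆ E i) ∧ (∀ i ≤ p, mm A (e i) (E i \ E' i) ≤ p * δ) ∧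
      ∀ i j, i < j → j ≤ p → ∀ X ⊆ E' i, X.Nonempty → mm A (e i) X ≤ δ →
        θ / (2 * δ) * mm A (e i) X ≤ mm A (e j) (nbhd G X ∩ E' j) := by
  have hδ := S.δpos
  induction p with
  | zero =>
    intro e E _ _ _ _
    exact ⟨E, fun _ _ => le_rfl, fun i _ => by simp [mm_empty], fun i j h1 h2 => by omega⟩
  | succ p ih =>
    intro e E he hinj hE hm
    push_cast at hm
    obtain ⟨E₁, h1, h2, h3⟩ := ih (fun i => e (i + 1)) (fun i => E (i + 1))
      (fun i hi => he _ (by omega)) (fun i hi j hj h => by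
        have := hinj _ (by omega) _ (by omega) h; omega)
      (fun i hi => hE _ (by omega))
      (fun i hi hi' => by have := hm (i + 1) (by omega) (by omega); linarith)
    have hbig : ∀ i ≤ p, 2 * θ ≤ mm A (e (i + 1)) (E₁ i) := by
      intro i hi
      have a := hm (i + 1) (by omega) (by omega)
      have b := h2 i hi
      have c := mm_inter_add_diff A (e (i + 1)) (E (i + 1)) (E₁ i)
      rw [Set.inter_eq_self_of_subset_right (h1 i hi)] at c
      linarith
    have hB : ∀ i, ∃ B : Set V, i ≤ p → (B ⊆ E 0 ∧ mm A (e 0) B ≤ δ ∧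
        ∀ X ⊆ E 0 \ B, X.Nonempty → mm A (e 0) X ≤ δ →
        θ / (2 * δ) * mm A (e 0) X ≤ mm A (e (i + 1)) (nbhd G X ∩ E₁ i)) := by
      intro i
      by_cases hi : i ≤ p
      · obtain ⟨B, b1, b2, b3⟩ := pair_clean S (he 0 (by omega)) (he (i + 1) (by omega))
          (fun h => by have := hinj _ (by omega) _ (by omega) h; omega) (hE 0 (by omega)) (hbig i hi)
        exact ⟨B, fun _ => ⟨b1, b2, b3⟩⟩
      · exact ⟨∅, fun h => absurd h hi⟩
    choose B hB using hB
    refine ⟨fun i => if i = 0 then E 0 \ ⋃ x ∈ Finset.range (p + 1), B x else E₁ (i - 1), ?_, ?_, ?_⟩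
    · intro i hi
      rcases i with _ | i
      · simp only [if_true]; exact Set.sdiff_subset
      · simpa using h1 i (by omega)
    · intro i hi
      rcases i with _ | i
      · simp only [if_true]
        refine (mm_mono A _ (Y := ⋃ x ∈ Finset.range (p + 1), B x) ?_).trans ?_
        · rintro x ⟨hx, hx'⟩
          by_contra hc
          exact hx' ⟨hx, hc⟩
        · refine (mm_biUnion_le A _ _ _).trans ?_
          refine (Finset.sum_le_card_nsmul _ _ δ ?_).trans ?_
          · intro x hx
            exact (hB x (by simp at hx; omega)).2.1
          · simp
      · have := h2 i (by omega)
        simp only [Nat.succ_ne_zero, if_false, Nat.add_sub_cancel]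
        push_cast
        linarith
    · intro i j hij hj X hX hne hXδ
      rcases j with _ | j
      · omega
      rcases i with _ | i
      · simp only [if_true] at hX
        simp only [Nat.succ_ne_zero, if_false, Nat.add_sub_cancel]
        refine (hB j (by omega)).2.2 X (hX.trans ?_) hne hXδ
        apply Set.sdiff_subset_sdiff_right
        intro x hx
        simp only [Set.mem_iUnion]
        exact ⟨j, by simp; omega, hx⟩
      · simp only [Nat.succ_ne_zero, if_false, Nat.add_sub_cancel] at hX ⊢
        exact h3 i j (by omega) (by omega) X hX hne hXδ

theorem grow (S : Setup G I A θ δ β ρ) (e : ℕ → ℤ) (E : ℕ → Set V) (p : ℕ) (hp : p + 2 = ρ)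
    (he : ∀ i ≤ p, e i ∈ I) (hinj : ∀ i ≤ p, ∀ j ≤ p, e i = e j → i = j)
    (hE : ∀ i ≤ p, E i ⊆ A (e i))
    (hm : ∀ i, 1 ≤ i → i ≤ p → 3 * θ ≤ mm A (e i) (E i)) :
    ∃ Bad : Set V, mm A (e 0) Bad ≤ ρ * δ ∧ ∀ w ∈ E 0, w ∉ Bad →
      ∃ (h : ℕ) (σ : ℕ → ℕ) (R : ℕ → Set V), 1 ≤ h ∧ h ≤ p ∧ R 0 = {w} ∧ σ 0 = 0 ∧
        (∀ s t, s < t → t ≤ h → σ s < σ t) ∧ (∀ t ≤ h, σ t ≤ p) ∧ (∀ t ≤ h, R t ⊆ E (σ t)) ∧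
        Lev G R h ∧ δ ≤ mm A (e (σ h)) (R h) := by
  have hδ := S.δpos
  have hθ := S.θpos
  have hβ := S.βpos
  have hρδ := S.ρδ
  have hρ2 := S.ρ2'
  have hpρ : (p : ℝ) + 2 = ρ := by exact_mod_cast hp
  obtain ⟨E', h1, h2, h3⟩ := clean S p e E he hinj hE (fun i hi hi' => by
    have := hm i hi hi'
    nlinarith)
  refine ⟨E 0 \ E' 0, ?_, ?_⟩
  · refine (h2 0 (by omega)).trans ?_
    gcongr
    omega
  intro w hw hwB
  have hwE : w ∈ E' 0 := by
    by_contra hc; exact hwB ⟨hw, hc⟩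
  have key : ∀ t ≤ p, ∃ (h : ℕ) (σ : ℕ → ℕ) (R : ℕ → Set V), h ≤ t ∧ R 0 = {w} ∧ σ 0 = 0 ∧
        (∀ s t, s < t → t ≤ h → σ s < σ t) ∧ (∀ s ≤ h, σ s ≤ t) ∧ (∀ t ≤ h, R t ⊆ E' (σ t)) ∧
        Lev G R h ∧ (δ ≤ mm A (e (σ h)) (R h) ∨
          1 ≤ β ^ t * (mm A (e (σ h)) (R h) * (Fintype.card V : ℝ))) := by
    intro t
    induction t with
    | zero =>
      intro _
      refine ⟨0, fun _ => 0, fun _ => {w}, le_rfl, rfl, rfl, fun s t h h' => by omega,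
        fun _ _ => le_rfl, fun _ _ => by simpa using hwE, ⟨fun t ht => by omega,
          fun s t h h' => by omega⟩, Or.inr ?_⟩
      simpa using S.single_ge (he 0 (by omega)) (hE 0 (by omega) hw)
    | succ t ih =>
      intro ht
      obtain ⟨h, σ, R, a1, a2, a3, a4, a5, a6, a7, a8⟩ := ih (by omega)
      by_cases hbig : δ ≤ mm A (e (σ h)) (R h)
      · exact ⟨h, σ, R, by omega, a2, a3, a4, fun s hs => (a5 s hs).trans (by omega), a6, a7,
          Or.inl hbig⟩
      have a9 := a8.resolve_left hbig
      push Not at hbig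
      have hmpos : 0 < mm A (e (σ h)) (R h) := by
        rcases (mm_nonneg A (e (σ h)) (R h)).lt_or_eq with h' | h'
        · exact h'
        · rw [← h'] at a9; simp at a9; linarith
      have hne : (R h).Nonempty := (mm_pos_nonempty A _ hmpos).mono Set.inter_subset_left
      have hexp := h3 (σ h) (t + 1) (by have := a5 h le_rfl; omega) ht (R h) (a6 h le_rfl) hne hbig.le
      have hpos : 0 < θ / (2 * δ) * mm A (e (σ h)) (R h) := by positivity
      obtain ⟨l, hl, hlm⟩ := mm_pigeon A (e (t + 1)) (Finset.range (h + 1))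
        (fun l => cls G R l ∩ E' (t + 1)) _ (ρ : ℝ) _ (by linarith) (by
          rw [Finset.card_range]; exact_mod_cast (by omega)) (by
          rintro x ⟨hx, hx'⟩
          obtain ⟨l, hl, hxl⟩ := cls_cover G R h (x := x) (nbhd_mono G (Y := lun R h) (fun y hy => ⟨h, le_rfl, hy⟩) hx)
          simp only [Set.mem_iUnion]
          exact ⟨l, by simp; omega, hxl, hx'⟩) hexp hpos
      have hl' : l ≤ h := by simp at hl; omega
      refine ⟨l + 1, fun s => if s = l + 1 then t + 1 else σ s,
        fun s => if s = l + 1 then cls G R l ∩ E' (t + 1) else R s, by omega, by simpa using a2,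
        by simpa using a3, ?_, ?_, ?_, ⟨?_, ?_⟩, Or.inr ?_⟩
      · intro s s' hss hs'
        have : s ≠ l + 1 := by omega
        simp only [this, if_false]
        split_ifs with hh
        · have := a5 s (by omega); omega
        · exact a4 s s' hss (by omega)
      · intro s hs
        dsimp only
        split_ifs with hh
        · exact le_rfl
        · exact (a5 s (by omega)).trans (by omega)
      · intro s hs
        dsimp only
        split_ifs with hh
        · exact Set.inter_subset_right
        · exact a6 s (by omega)
      · intro s hs
        have : s ≠ l + 1 := by omega
        simp only [this, if_false]
        split_ifs with hh
        · have : s = l := by omega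
          subst this
          rintro b ⟨⟨⟨x, hx, hb⟩, _⟩, _⟩
          exact ⟨x, hx, hb⟩
        · exact a7.1 s (by omega)
      · intro s s' hss hs'
        have : s ≠ l + 1 := by omega
        simp only [this, if_false]
        split_ifs with hh
        · rintro a ha b ⟨⟨_, hb⟩, _⟩ hadj
          exact hb s (by omega) ⟨a, ha, hadj⟩
        · exact a7.2 s s' hss (by omega)
      · simp only [if_true]
        have hgood : mm A (e (σ h)) (R h) ≤ β * mm A (e (t + 1)) (cls G R l ∩ E' (t + 1)) := by
          refine le_trans ?_ (mul_le_mul_of_nonneg_left hlm hβ.le)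
          have h8 := S.δθ
          have : β * (θ / (2 * δ) * mm A (e (σ h)) (R h) / ρ) =
            (β * θ) / (2 * (ρ * δ)) * mm A (e (σ h)) (R h) := by
            field_simp
          rw [this]
          have h1' : 1 ≤ (β * θ) / (2 * (ρ * δ)) := by
            rw [le_div_iff₀ (by positivity)]
            have : 0 < ρ * δ := by positivity
            linarith
          nlinarith
        calc (1 : ℝ) ≤ β ^ t * (mm A (e (σ h)) (R h) * (Fintype.card V : ℝ)) := a9
          _ ≤ β ^ t * ((β * mm A (e (t + 1)) (cls G R l ∩ E' (t + 1))) * (Fintype.card V : ℝ)) := by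
            gcongr
          _ = _ := by ring
  obtain ⟨h, σ, R, a1, a2, a3, a4, a5, a6, a7, a8⟩ := key p le_rfl
  have a9 : δ ≤ mm A (e (σ h)) (R h) := by
    rcases a8 with a8 | a8
    · exact a8
    · have hn := S.βn
      have e1 : ρ - 1 = p + 1 := by omega
      rw [e1] at hn
      have hnpos : (0 : ℝ) < Fintype.card V := by
        have : 0 < Fintype.card V := Fintype.card_pos_iff.2 ⟨w⟩
        exact_mod_cast this
      have hq : 0 < β ^ p * (Fintype.card V : ℝ) := by positivity
      have hlt : (β ^ p * (Fintype.card V : ℝ)) * β <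
          (β ^ p * (Fintype.card V : ℝ)) * mm A (e (σ h)) (R h) := by
        calc _ = β ^ (p + 1) * (Fintype.card V : ℝ) := by ring
          _ < 1 := hn
          _ ≤ _ := a8
          _ = _ := by ring
      have := lt_of_mul_lt_mul_left hlt hq.le
      have h8 := S.δθ
      have h9 := S.θ1
      nlinarith
  refine ⟨h, σ, R, ?_, a1, a2, a3, a4, a5, fun t ht => (a6 t ht).trans (h1 _ (a5 t ht)), a7, a9⟩
  by_contra hc
  have : h = 0 := by omega
  subst this
  rw [a2, a3] at a9
  have := S.single (he 0 (by omega)) (hE 0 (by omega) hw)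
  linarith

end Grow

/-- The internal invariant (natural-number indexed bi-levelling). -/
structure CoreD {V : Type} [Fintype V] (G : SimpleGraph V) (I : Finset ℤ) (A : ℤ → Set V)
    (L M : ℕ → Set V) (a b : ℕ) (ql qm : ℕ → ℤ) (C : ℕ → Set V) (qc : ℕ → ℤ) (Y : ℕ → Set V)
    (N : ℕ) (σ : ℝ) : Prop where
  a1 : 1 ≤ a
  b1 : 1 ≤ b
  root : L 0 = M 0
  root1 : (L 0).ncard = 1
  hql : ∀ i ≤ a, ql i ∈ I ∧ L i ⊆ A (ql i)
  hqm : ∀ i, 1 ≤ i → i ≤ b → qm i ∈ I ∧ M i ⊆ A (qm i)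
  hqc : ∀ t < N, qc t ∈ I ∧ C t ⊆ A (qc t)
  injL : ∀ i ≤ a, ∀ i' ≤ a, ql i = ql i' → i = i'
  injM : ∀ i, 1 ≤ i → i ≤ b → ∀ i', 1 ≤ i' → i' ≤ b → qm i = qm i' → i = i'
  injC : ∀ t < N, ∀ t' < N, qc t = qc t' → t = t'
  neCL : ∀ t < N, ∀ i ≤ a, qc t ≠ ql i
  neCM : ∀ t < N, ∀ i, 1 ≤ i → i ≤ b → qc t ≠ qm i
  neLM : ∀ i ≤ a, ∀ i', 1 ≤ i' → i' ≤ b → ql i ≠ qm i'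
  levL : Lev G L a
  levM : Lev G M b
  par : ∀ j, 1 ≤ j → j ≤ b → ∀ i, 1 ≤ i → i ≤ a → Anticomplete G (M j) (L i)
  LC : ∀ i < a, ∀ t < N, Anticomplete G (L i) (C t)
  MC : ∀ i < b, ∀ t < N, Anticomplete G (M i) (C t)
  covM : ∀ t < N, Covers G (M b) (C t)
  YL : ∀ t < N, Y t ⊆ L a
  Yc : ∀ t t', t ≤ t' → t' < N → Covers G (Y t) (C t')
  Ya : ∀ t < N, ∀ t' < t, Anticomplete G (Y t) (C t')
  size : ∀ t < N, σ ≤ mm A (qc t) (C t)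

/-- Existence of a core of given length, height, size. -/
def Core {V : Type} [Fintype V] (G : SimpleGraph V) (I : Finset ℤ) (A : ℤ → Set V)
    (N h : ℕ) (σ : ℝ) : Prop :=
  ∃ (L M : ℕ → Set V) (a b : ℕ) (ql qm : ℕ → ℤ) (C : ℕ → Set V) (qc : ℕ → ℤ) (Y : ℕ → Set V),
    a + b = h ∧ CoreD G I A L M a b ql qm C qc Y N σ

/-- Subadditive covering bound. -/
theorem subadd_bound {V : Type} [Fintype V] (f : Set V → ℝ) (hf0 : f ∅ = 0)
    (hf : ∀ X Y, f (X ∪ Y) ≤ f X + f Y) (δ : ℝ) (hδ : 0 ≤ δ) (r : ℕ) (hr : 1 ≤ r) :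
    ∀ (n : ℕ) (S : Set V), S.ncard = n → (∀ T ⊆ S, T.ncard ≤ r → f T ≤ δ) →
      f S ≤ δ * (S.ncard / r + 1) := by
  intro n
  induction n using Nat.strong_induction_on with
  | _ n ih =>
    intro S hS h
    have hr' : (0 : ℝ) < r := by exact_mod_cast hr
    by_cases hc : S.ncard ≤ r
    · refine (h S le_rfl hc).trans ?_
      have : (0 : ℝ) ≤ S.ncard / r := by positivity
      nlinarith
    · push Not at hc
      obtain ⟨T, hT, hTc⟩ := Set.exists_subset_card_eq (s := S) (n := r) hc.le
      have hd : (S \ T).ncard = S.ncard - r := by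
        rw [Set.ncard_sdiff hT (Set.toFinite _), hTc]
      have h1 := ih (S.ncard - r) (by omega) (S \ T) hd
        (fun T' hT' => h T' (hT'.trans Set.sdiff_subset))
      have h2 := h T hT hTc.le
      have h3 := hf T (S \ T)
      rw [Set.union_sdiff_cancel hT] at h3
      rw [hd] at h1
      have h4 : ((S.ncard - r : ℕ) : ℝ) / r = S.ncard / r - 1 := by
        rw [Nat.cast_sub hc.le]; field_simp
      rw [h4] at h1
      nlinarith

theorem core_ext {V : Type} [Fintype V] {G : SimpleGraph V} {I : Finset ℤ} {A : ℤ → Set V}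
    {θ δ β : ℝ} {ρ : ℕ} (S : Setup G I A θ δ β ρ) {k h : ℕ} (hk : 1 ≤ k) {σ : ℝ} (hσ : 2 * θ < σ)
    (H : Core G I A (ρ * k) h σ) : Core G I A k (h + 1) (σ / 2 - θ) := by
  obtain ⟨L, M, a, b, ql, qm, C, qc, Y, hab, D⟩ := H
  have hδ := S.δpos
  have hθ := S.θpos
  have hβ := S.βpos
  have hδθ := S.δle
  have hρ2 := S.ρ2
  by_cases hex : ∃ g, g + 2 ≤ ρ ∧ ∃ s ⊆ M b, ∃ t0, g * k ≤ t0 ∧ t0 < (g + 1) * k ∧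
      δ ≤ mm A (qc t0) (nbhd G s ∩ C t0) ∧
      ∀ t, (g + 1) * k ≤ t → t < (g + 2) * k → mm A (qc t) (nbhd G s ∩ C t) ≤ σ / 2
  · obtain ⟨g, hg, s, hs, t0, ht0, ht0', hbig, hsmall⟩ := hex
    have hgk : (g + 2) * k ≤ ρ * k := Nat.mul_le_mul_right k hg
    have e2 : (g + 2) * k = (g + 1) * k + k := by ring
    have ht0N : t0 < ρ * k := by omega
    set o := (g + 1) * k with ho
    have hot : ∀ t < k, o + t < ρ * k := fun t ht => by omega
    have hb0 : (0 : ℕ) ≠ b := by have := D.b1; omega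
    have ha0 : (0 : ℕ) ≠ a := by have := D.a1; omega
    set X := nbhd G s ∩ C t0 with hX
    have hLsub : {x | ∃ t, o ≤ t ∧ t < ρ * k ∧ x ∈ Y t} ⊆ L a := by
      rintro x ⟨t, _, ht, hx⟩; exact D.YL t ht hx
    set La := {x | ∃ t, o ≤ t ∧ t < ρ * k ∧ x ∈ Y t} with hLa
    have hLs : ∀ i, (if i = a then La else L i) ⊆ L i := by
      intro i; split_ifs with e
      · rw [e]; exact hLsub
      · exact le_rfl
    set M' : ℕ → Set V := fun i => if i = b + 1 then X else if i = b then s else M i with hM'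
    have hMs : ∀ i ≤ b, M' i ⊆ M i := by
      intro i hi
      have : i ≠ b + 1 := by omega
      simp only [hM', this, if_false]
      split_ifs with e
      · rw [e]; exact hs
      · exact le_rfl
    have hMb1 : M' (b + 1) = X := by simp [hM']
    have hMb : M' b = s := by simp [hM']
    refine ⟨fun i => if i = a then La else L i, M', a, b + 1, ql,
      fun i => if i = b + 1 then qc t0 else qm i,
      fun t => (C (o + t) ∩ nbhd G X) \ nbhd G s, fun t => qc (o + t), fun t => Y (o + t),
      by omega, ?_⟩
    have hqm' : ∀ i, i ≤ b → (if i = b + 1 then qc t0 else qm i) = qm i := by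
      intro i hi; rw [if_neg (by omega)]
    refine
    { a1 := D.a1
      b1 := by omega
      root := ?_
      root1 := ?_
      hql := fun i hi => ⟨(D.hql i hi).1, (hLs i).trans (D.hql i hi).2⟩
      hqm := ?_
      hqc := fun t ht => ⟨(D.hqc _ (hot t ht)).1, fun x hx => (D.hqc _ (hot t ht)).2 hx.1.1⟩
      injL := D.injL
      injM := ?_
      injC := fun t ht t' ht' e => by
        have := D.injC _ (hot t ht) _ (hot t' ht') e; omega
      neCL := fun t ht i hi => D.neCL _ (hot t ht) i hi
      neCM := ?_
      neLM := ?_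
      levL := D.levL.trunc hLsub
      levM := ⟨?_, ?_⟩
      par := ?_
      LC := ?_
      MC := ?_
      covM := ?_
      YL := ?_
      Yc := fun t t' h1 h2 y hy => D.Yc (o + t) (o + t') (by omega) (hot t' h2) y hy.1.1
      Ya := fun t ht t' h1 x hx y hy => D.Ya (o + t) (hot t ht) (o + t') (by omega) x hx y hy.1.1
      size := ?_ }
    · have : (0 : ℕ) ≠ b + 1 := by omega
      simp only [hM', ha0, hb0, this, if_false]; exact D.root
    · simp only [ha0, if_false]; exact D.root1
    · intro i h1 h2
      rcases Nat.lt_or_ge b i with h | h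
      · have : i = b + 1 := by omega
        subst this
        rw [hMb1, if_pos rfl]
        exact ⟨(D.hqc _ ht0N).1, fun x hx => (D.hqc _ ht0N).2 hx.2⟩
      · rw [hqm' i h]
        exact ⟨(D.hqm i h1 h).1, (hMs i h).trans (D.hqm i h1 h).2⟩
    · intro i h1 h2 i' h1' h2' e
      rcases Nat.lt_or_ge b i with h | h <;> rcases Nat.lt_or_ge b i' with h' | h'
      · omega
      · have : i = b + 1 := by omega
        rw [hqm' i' h', if_pos this] at e
        exact absurd e (D.neCM _ ht0N _ h1' h')
      · have : i' = b + 1 := by omega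
        rw [hqm' i h, if_pos this] at e
        exact absurd e.symm (D.neCM _ ht0N _ h1 h)
      · rw [hqm' i h, hqm' i' h'] at e
        exact D.injM i h1 h i' h1' h' e
    · intro t ht i h1 h2
      rcases Nat.lt_or_ge b i with h | h
      · have : i = b + 1 := by omega
        rw [if_pos this]
        intro e
        have := D.injC _ (hot t ht) _ ht0N e
        omega
      · rw [hqm' i h]; exact D.neCM _ (hot t ht) i h1 h
    · intro i hi i' h1 h2
      rcases Nat.lt_or_ge b i' with h | h
      · have : i' = b + 1 := by omega
        rw [if_pos this]
        exact (D.neCL _ ht0N i hi).symm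
      · rw [hqm' i' h]; exact D.neLM i hi i' h1 h
    · intro t ht
      rcases Nat.lt_or_ge t b with h | h
      · have : t ≠ b := by omega
        have h' : t ≠ b + 1 := by omega
        intro y hy
        obtain ⟨x, hx, hxy⟩ := D.levM.1 t h y (hMs _ (by omega) hy)
        exact ⟨x, by simp only [hM', this, h', if_false]; exact hx, hxy⟩
      · have : t = b := by omega
        subst this
        rw [hMb1, hMb]
        rintro y ⟨⟨x, hx, hxy⟩, _⟩
        exact ⟨x, hx, hxy⟩
    · intro i t hit ht
      rcases Nat.lt_or_ge b t with h | h
      · have : t = b + 1 := by omega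
        subst this
        rw [hMb1]
        intro x hx y hy
        exact D.MC i (by omega) t0 ht0N x (hMs i (by omega) hx) y hy.2
      · intro x hx y hy
        exact D.levM.2 i t hit h x (hMs i (by omega) hx) y (hMs t h hy)
    · intro j h1 h2 i h1' h2'
      rcases Nat.lt_or_ge b j with h | h
      · have : j = b + 1 := by omega
        subst this
        rw [hMb1]
        intro x hx y hy hadj
        split_ifs at hy with e
        · obtain ⟨t, ht1, ht2, hy⟩ := hy
          exact D.Ya t ht2 t0 (by omega) y hy x hx.2 hadj.symm
        · exact D.LC i (by omega) t0 ht0N y hy x hx.2 hadj.symm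
      · intro x hx y hy
        exact D.par j h1 h i h1' h2' x (hMs j h hx) y (hLs i hy)
    · intro i hi t ht x hx y hy
      exact D.LC i hi _ (hot t ht) x (hLs i hx) y hy.1.1
    · intro i hi t ht x hx y hy hadj
      rcases Nat.lt_or_ge i b with h | h
      · exact D.MC i h _ (hot t ht) x (hMs i (by omega) hx) y hy.1.1 hadj
      · have : i = b := by omega
        subst this
        rw [hMb] at hx
        exact hy.2 ⟨x, hx, hadj⟩
    · intro t ht
      rw [hMb1]
      rintro y ⟨⟨_, x, hx, hxy⟩, _⟩
      exact ⟨x, hx, hxy⟩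
    · intro t ht x hx
      simp only [if_true]
      exact ⟨o + t, by omega, hot t ht, hx⟩
    · intro t ht
      have h1 := D.size _ (hot t ht)
      have h2 := hsmall (o + t) (by omega) (by omega)
      have h3 := S.nd' (D.hqc _ ht0N).1 (D.hqc _ (hot t ht)).1
        (fun e => by have := D.injC _ ht0N _ (hot t ht) e; omega) (X := X)
        (fun x hx => (D.hqc _ ht0N).2 hx.2) hbig (C (o + t))
      have h4 := mm_inter_add_diff A (qc (o + t)) (C (o + t) ∩ nbhd G X) (nbhd G s)
      have h5 : mm A (qc (o + t)) (C (o + t) ∩ nbhd G X ∩ nbhd G s) ≤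
          mm A (qc (o + t)) (nbhd G s ∩ C (o + t)) := mm_mono A _ (fun x hx => ⟨hx.2, hx.1.1⟩)
      rw [Set.inter_comm] at h3
      linarith
  · exfalso
    push Not at hex
    have claim : ∀ i, i + 1 ≤ ρ → ∃ s ⊆ M b, (s.ncard : ℝ) ≤ β ^ i * (Fintype.card V : ℝ) ∧
        ∃ t, i * k ≤ t ∧ t < (i + 1) * k ∧ σ / 2 < mm A (qc t) (nbhd G s ∩ C t) := by
      intro i
      induction i with
      | zero =>
        intro _
        have h0 : 0 < ρ * k := Nat.mul_pos (by omega) (by omega)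
        refine ⟨M b, le_rfl, ?_, 0, by omega, by omega, ?_⟩
        · rw [pow_zero, one_mul, ← Nat.card_eq_fintype_card]
          exact_mod_cast Set.ncard_le_card _
        · have h1 := D.size 0 h0
          have : nbhd G (M b) ∩ C 0 = C 0 := by
            apply Set.inter_eq_self_of_subset_right
            intro y hy
            exact D.covM 0 h0 y hy
          rw [this]; linarith
      | succ i ih =>
        intro hi
        obtain ⟨s, hs, hsc, t, ht, ht', hbig⟩ := ih (by omega)
        let Fam : Set (Set V) := {T | T ⊆ s ∧ δ ≤ mm A (qc t) (nbhd G T ∩ C t)}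
        have hne : Fam.Nonempty := ⟨s, le_rfl, by linarith⟩
        obtain ⟨T, ⟨hT1, hT2⟩, hmin⟩ := (Set.toFinite Fam).exists_minimalFor Set.ncard Fam hne
        obtain ⟨t', h1, h2, h3⟩ := hex i (by omega) T (hT1.trans hs) t ht ht' hT2
        have hgk : (i + 2) * k ≤ ρ * k := Nat.mul_le_mul_right k hi
        have ht'N : t' < ρ * k := by omega
        refine ⟨T, hT1.trans hs, ?_, t', h1, h2, h3⟩
        have hcard : 2 ≤ T.ncard := by
          by_contra hc
          have hle : mm A (qc t') (nbhd G T ∩ C t') ≤ θ := by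
            have hss : T.Subsingleton := by
              rw [← Set.ncard_le_one_iff_subsingleton]; omega
            rcases hss.eq_empty_or_singleton with e | ⟨v, e⟩
            · rw [e, nbhd_empty, Set.empty_inter, mm_empty]; exact hθ.le
            · rw [e]
              refine (mm_mono A _ Set.inter_subset_left).trans ?_
              have hv : v ∈ M b := hs (hT1 (by rw [e]; rfl))
              exact S.link _ (D.hqm b D.b1 le_rfl).1 _ (D.hqc _ ht'N).1
                (D.neCM _ ht'N b D.b1 le_rfl).symm v ((D.hqm b D.b1 le_rfl).2 hv)
          linarith
        have hb := subadd_bound (fun X => mm A (qc t) (nbhd G X ∩ C t)) (by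
            simp [nbhd_empty, mm_empty]) (fun X Y => by
            simp only [nbhd_union, Set.union_inter_distrib_right]
            exact mm_union_le A _ _ _) δ hδ.le (T.ncard - 1) (by omega) _ s rfl (by
            intro T' hT' hc
            by_contra hcon
            push Not at hcon
            have := hmin (j := T') ⟨hT', hcon.le⟩ (by omega)
            omega)
        have hr : (0 : ℝ) < ((T.ncard - 1 : ℕ) : ℝ) := by
          exact_mod_cast (by omega : 0 < T.ncard - 1)
        have h5 : σ / 4 * ((T.ncard - 1 : ℕ) : ℝ) ≤ δ * s.ncard := by
          have : σ / 4 ≤ δ * (s.ncard / ((T.ncard - 1 : ℕ) : ℝ)) := by linarith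
          calc _ ≤ δ * (s.ncard / ((T.ncard - 1 : ℕ) : ℝ)) * ((T.ncard - 1 : ℕ) : ℝ) := by gcongr
            _ = _ := by field_simp
        have h6 : (T.ncard : ℝ) ≤ 2 * ((T.ncard - 1 : ℕ) : ℝ) := by
          exact_mod_cast (by omega : T.ncard ≤ 2 * (T.ncard - 1))
        have h7 : (T.ncard : ℝ) * σ ≤ 8 * δ * s.ncard := by nlinarith
        have h8 : 8 * δ ≤ β * θ := by
          have := S.δθ
          have := S.ρ2'
          nlinarith
        have h9 : (T.ncard : ℝ) * θ ≤ (β * s.ncard) * θ := by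
          have : (0 : ℝ) ≤ T.ncard := by positivity
          have : (0 : ℝ) ≤ s.ncard := by positivity
          nlinarith
        have h10 := le_of_mul_le_mul_right h9 hθ
        calc (T.ncard : ℝ) ≤ β * s.ncard := h10
          _ ≤ β * (β ^ i * (Fintype.card V : ℝ)) := by gcongr
          _ = _ := by ring
    obtain ⟨s, hs, hsc, t, ht, ht', hbig⟩ := claim (ρ - 1) (by omega)
    have h1 := S.βn
    have h2 : s.ncard = 0 := by
      have : (s.ncard : ℝ) < 1 := by linarith
      have : s.ncard < 1 := by exact_mod_cast this
      omega
    rw [Set.ncard_eq_zero (Set.toFinite s)] at h2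
    rw [h2, nbhd_empty, Set.empty_inter, mm_empty] at hbig
    linarith

theorem core_iter {V : Type} [Fintype V] {G : SimpleGraph V} {I : Finset ℤ} {A : ℤ → Set V}
    {θ δ β : ℝ} {ρ : ℕ} (S : Setup G I A θ δ β ρ) {k : ℕ} (hk : 1 ≤ k) {η : ℝ} (hη : 2 * θ < η) :
    ∀ (m h : ℕ), Core G I A (k * ρ ^ m) h (2 ^ m * (η + 2 * θ) - 2 * θ) → Core G I A k (h + m) η := by
  intro m
  have hθ := S.θpos
  induction m with
  | zero => intro h H; simpa using H
  | succ m ih =>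
    intro h H
    have h1 : Core G I A (k * ρ ^ m) (h + 1) ((2 ^ (m + 1) * (η + 2 * θ) - 2 * θ) / 2 - θ) := by
      apply core_ext S
      · exact Nat.mul_pos hk (Nat.pow_pos (by have := S.ρ2; omega))
      · have : (2 : ℝ) ≤ 2 ^ (m + 1) := by
          rw [pow_succ]
          have : (1 : ℝ) ≤ 2 ^ m := one_le_pow₀ (by norm_num)
          linarith
        nlinarith
      · have : ρ * (k * ρ ^ m) = k * ρ ^ (m + 1) := by ring
        rw [this]; exact H
    have e : (2 ^ (m + 1) * (η + 2 * θ) - 2 * θ) / 2 - θ = 2 ^ m * (η + 2 * θ) - 2 * θ := by ring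
    rw [e] at h1
    have := ih _ h1
    rwa [show h + (m + 1) = h + 1 + m by ring]

section Base
variable {V : Type} [Fintype V] {G : SimpleGraph V} {I : Finset ℤ} {A : ℤ → Set V}
    {θ δ β : ℝ} {ρ : ℕ}

theorem grade_aux (Λ : Set V) (D : ℤ → Set V) (J : Finset ℤ) (N : ℕ) (η : ℝ) (hη : 0 < η)
    (hθ : 0 ≤ θ)
    (hcov : ∀ j ∈ J, Covers G Λ (D j))
    (hlink : ∀ j ∈ J, ∀ v ∈ Λ, mm A j (nbhd G {v}) ≤ θ)
    (hbig : ∀ j ∈ J, N * (η + θ) ≤ mm A j (D j)) (hN : N ≤ J.card) :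
    ∀ m ≤ N, ∃ (Λm : Set V) (c : ℕ → ℤ) (C Y : ℕ → Set V), Λm ⊆ Λ ∧
      (∀ t < m, c t ∈ J ∧ C t ⊆ D (c t) ∧ Y t ⊆ Λm ∧ C t ⊆ nbhd G (Y t) ∧ η ≤ mm A (c t) (C t)) ∧
      (∀ t < m, ∀ t' < m, c t = c t' → t = t') ∧
      (∀ t t', t < t' → t' < m → Anticomplete G (Y t) (C t') ∧ Y t ⊆ Y t') ∧
      ∀ j ∈ J, (∀ t < m, c t ≠ j) → mm A j (nbhd G Λm ∩ D j) ≤ m * (η + θ) := by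
  classical
  intro m
  induction m with
  | zero =>
    intro _
    refine ⟨∅, fun _ => 0, fun _ => ∅, fun _ => ∅, Set.empty_subset _, fun t ht => by omega,
      fun t ht => by omega, fun t t' h h' => by omega, fun j hj _ => ?_⟩
    simp [nbhd_empty, mm_empty]
  | succ m ih =>
    intro hm
    obtain ⟨Λm, c, C, Y, h1, h2, h3, h4, h5⟩ := ih (by omega)
    let P : Set V → Prop := fun X => ∃ j ∈ J, (∀ t < m, c t ≠ j) ∧
      m * (η + θ) + η ≤ mm A j (nbhd G X ∩ D j)
    have hP0 : ¬ P Λm := by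
      rintro ⟨j, hj, hu, hle⟩
      have := h5 j hj hu
      linarith
    have hP1 : P (Λm ∪ Λ) := by
      obtain ⟨j, hj, hu⟩ : ∃ j ∈ J, j ∉ (Finset.range m).image c := by
        apply Finset.exists_mem_notMem_of_card_lt_card
        calc _ ≤ (Finset.range m).card := Finset.card_image_le
          _ = m := Finset.card_range m
          _ < _ := by omega
      refine ⟨j, hj, fun t ht e => hu (Finset.mem_image.2 ⟨t, by simpa using ht, e⟩), ?_⟩
      have e1 : nbhd G (Λm ∪ Λ) ∩ D j = D j := by
        apply Set.inter_eq_self_of_subset_right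
        intro d hd
        obtain ⟨x, hx, hxd⟩ := hcov j hj d hd
        exact ⟨x, Or.inr hx, hxd⟩
      rw [e1]
      refine le_trans ?_ (hbig j hj)
      have : ((m : ℝ) + 1) ≤ N := by exact_mod_cast hm
      nlinarith
    obtain ⟨T, hT, y, hy, hn, j, hj, hu, hle⟩ := first_time P Λm Λ hP0 hP1
    have hsub : Λm ∪ insert y T ⊆ Λ := Set.union_subset h1 (Set.insert_subset hy hT)
    refine ⟨Λm ∪ insert y T, fun t => if t = m then j else c t,
      fun t => if t = m then (nbhd G (Λm ∪ insert y T) ∩ D j) \ nbhd G Λm else C t,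
      fun t => if t = m then Λm ∪ insert y T else Y t, hsub, ?_, ?_, ?_, ?_⟩
    · intro t ht
      by_cases e : t = m
      · simp only [e, if_true]
        refine ⟨hj, fun x hx => hx.1.2, le_rfl, fun x hx => hx.1.1, ?_⟩
        have a := h5 j hj hu
        have b := mm_inter_add_diff A j (nbhd G (Λm ∪ insert y T) ∩ D j) (nbhd G Λm)
        have d : mm A j (nbhd G (Λm ∪ insert y T) ∩ D j ∩ nbhd G Λm) ≤ mm A j (nbhd G Λm ∩ D j) :=
          mm_mono A j (fun x hx => ⟨hx.2, hx.1.2⟩)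
        linarith
      · simp only [e, if_false]
        obtain ⟨a1, a2, a3, a4⟩ := h2 t (by omega)
        exact ⟨a1, a2, a3.trans Set.subset_union_left, a4⟩
    · intro t ht t' ht' e
      by_cases e1 : t = m <;> by_cases e2 : t' = m
      · omega
      · simp only [e1, e2, if_true, if_false] at e
        exact absurd e.symm (hu t' (by omega))
      · simp only [e1, e2, if_true, if_false] at e
        exact absurd e (hu t (by omega))
      · simp only [e1, e2, if_false] at e
        exact h3 t (by omega) t' (by omega) e
    · intro t t' htt ht'
      have e1 : t ≠ m := by omega
      by_cases e2 : t' = m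
      · simp only [e1, e2, if_true, if_false]
        have hY := (h2 t (by omega)).2.2.1
        refine ⟨?_, hY.trans Set.subset_union_left⟩
        intro x hx d hd hadj
        exact hd.2 ⟨x, hY hx, hadj⟩
      · simp only [e1, e2, if_false]
        exact h4 t t' htt (by omega)
    · intro j' hj' hu'
      have hu2 : ∀ t < m, c t ≠ j' := by
        intro t ht
        have := hu' t (by omega)
        dsimp only at this
        rwa [if_neg (by omega)] at this
      have hlt : mm A j' (nbhd G (Λm ∪ T) ∩ D j') < m * (η + θ) + η := by
        by_contra hc
        push Not at hc
        exact hn ⟨j', hj', hu2, hc⟩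
      have e1 : nbhd G (Λm ∪ insert y T) ∩ D j' ⊆ nbhd G {y} ∪ (nbhd G (Λm ∪ T) ∩ D j') := by
        rw [Set.union_insert, nbhd_insert]
        rintro x ⟨hx | hx, hx'⟩
        · exact Or.inl hx
        · exact Or.inr ⟨hx, hx'⟩
      have := (mm_mono A j' e1).trans (mm_union_le A j' _ _)
      have hl := hlink j' hj' y hy
      push_cast
      linarith

theorem grade (Λ : Set V) (D : ℤ → Set V) (J : Finset ℤ) (N : ℕ) (η : ℝ) (hη : 0 < η)
    (hθ : 0 ≤ θ)
    (hcov : ∀ j ∈ J, Covers G Λ (D j))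
    (hlink : ∀ j ∈ J, ∀ v ∈ Λ, mm A j (nbhd G {v}) ≤ θ)
    (hbig : ∀ j ∈ J, N * (η + θ) ≤ mm A j (D j)) (hN : N ≤ J.card) :
    ∃ (c : ℕ → ℤ) (C Y : ℕ → Set V),
      (∀ t < N, c t ∈ J ∧ C t ⊆ D (c t) ∧ Y t ⊆ Λ ∧ η ≤ mm A (c t) (C t)) ∧
      (∀ t < N, ∀ t' < N, c t = c t' → t = t') ∧
      (∀ t t', t ≤ t' → t' < N → Covers G (Y t) (C t')) ∧
      (∀ t < N, ∀ t' < t, Anticomplete G (Y t) (C t')) := by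
  obtain ⟨Λm, c, C, Y, h1, h2, h3, h4, h5⟩ :=
    grade_aux Λ D J N η hη hθ hcov hlink hbig hN N le_rfl
  refine ⟨fun t => c (N - 1 - t), fun t => C (N - 1 - t), fun t => Y (N - 1 - t), ?_, ?_, ?_, ?_⟩
  · intro t ht
    obtain ⟨a1, a2, a3, a4, a5⟩ := h2 (N - 1 - t) (by omega)
    exact ⟨a1, a2, a3.trans h1, a5⟩
  · intro t ht t' ht' e
    have := h3 _ (by omega) _ (by omega) e
    omega
  · intro t t' htt ht' d hd
    obtain ⟨x, hx, hxd⟩ := (h2 (N - 1 - t') (by omega)).2.2.2.1 hd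
    refine ⟨x, ?_, hxd⟩
    rcases Nat.eq_or_lt_of_le htt with e | e
    · subst e; exact hx
    · exact (h4 (N - 1 - t') (N - 1 - t) (by omega) (by omega)).2 hx
  · intro t ht t' htt
    exact (h4 (N - 1 - t) (N - 1 - t') (by omega) (by omega)).1

theorem exists_chain {R : ℕ → Set V} {h : ℕ} (H : Lev G R h) {x : V} (hx : x ∈ R h) :
    ∃ f : ℕ → V, f h = x ∧ (∀ t ≤ h, f t ∈ R t) ∧ ∀ t < h, G.Adj (f t) (f (t + 1)) := by
  induction h generalizing x with
  | zero => exact ⟨fun _ => x, rfl, fun t ht => by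
      have : t = 0 := by omega
      subst this; exact hx, fun t ht => by omega⟩
  | succ h ih =>
    obtain ⟨y, hy, hyx⟩ := H.1 h (by omega) x hx
    obtain ⟨f, f1, f2, f3⟩ := ih (H.mono (by omega)) hy
    refine ⟨fun t => if t = h + 1 then x else f t, by simp, ?_, ?_⟩
    · intro t ht
      dsimp only
      split_ifs with e
      · rw [e]; exact hx
      · exact f2 t (by omega)
    · intro t ht
      have e : t ≠ h + 1 := by omega
      simp only [e, if_false]
      split_ifs with e2
      · have : t = h := by omega
        rw [this, f1]; exact hyx
      · exact f3 t (by omega)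

/-- class of a chain relative to a path -/
def ClassOf (G : SimpleGraph V) (f q : ℕ → V) (a s i x : ℕ) : Prop :=
  1 ≤ i ∧ i ≤ a ∧ x < s ∧ G.Adj (f i) (q x) ∧ (∀ t, i < t → t ≤ a → ∀ y < s, ¬ G.Adj (f t) (q y)) ∧
    ∀ y, x < y → y < s → ¬ G.Adj (f i) (q y)

theorem exists_class (f q : ℕ → V) (a s : ℕ) (ha : 1 ≤ a) (hs : 1 ≤ s)
    (h : G.Adj (f 1) (q 0)) : ∃ i x, ClassOf G f q a s i x := by
  classical
  have hmax : ∀ (P : ℕ → Prop) (n m : ℕ), P m → m ≤ n →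
      ∃ i, m ≤ i ∧ i ≤ n ∧ P i ∧ ∀ t, i < t → t ≤ n → ¬ P t := by
    intro P n m hm hmn
    refine ⟨Nat.findGreatest P n, Nat.le_findGreatest hmn hm, Nat.findGreatest_le n,
      Nat.findGreatest_spec hmn hm, fun t h1 h2 => Nat.findGreatest_is_greatest h1 h2⟩
  obtain ⟨i, i1, i2, ⟨y, hy, hiy⟩, i4⟩ := hmax (fun t => ∃ y < s, G.Adj (f t) (q y)) a 1
    ⟨0, by omega, h⟩ ha
  obtain ⟨x, x1, x2, x3, x4⟩ := hmax (fun y => G.Adj (f i) (q y)) (s - 1) y hiy (by omega)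
  exact ⟨i, x, i1, i2, by omega, x3, fun t h1 h2 y hy hadj => i4 t h1 h2 ⟨y, hy, hadj⟩,
    fun y h1 h2 => x4 y h1 (by omega)⟩

theorem base2 (S : Setup G I A θ δ β ρ) (p : ℕ) (hp : p + 2 = ρ)
    (F Mm : ℕ → Set V) (l s H : ℕ) (qp : ℕ → V) (qF qM : ℕ → ℤ) (JD : Finset ℤ)
    (hl : l ≤ p) (hs : 1 ≤ s) (hsp : s ≤ p + 1) (hsH : s < H) (hHs : H ≤ s + p)
    (levF : Lev G F l) (levM : Lev G Mm H)
    (hMs : ∀ t ≤ s, Mm t = {qp t}) (hF0 : F 0 = {qp 0})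
    (hqF : ∀ t, 1 ≤ t → t ≤ l → qF t ∈ I ∧ F t ⊆ A (qF t))
    (hqM : ∀ t ≤ H, qM t ∈ I ∧ Mm t ⊆ A (qM t))
    (injF : ∀ t, 1 ≤ t → t ≤ l → ∀ t', 1 ≤ t' → t' ≤ l → qF t = qF t' → t = t')
    (injM : ∀ t ≤ H, ∀ t' ≤ H, qM t = qM t' → t = t')
    (neFM : ∀ t, 1 ≤ t → t ≤ l → ∀ t' ≤ H, qF t ≠ qM t')
    (hFM : ∀ t ≤ l, ∀ y, s ≤ y → y ≤ H → Anticomplete G (F t) (Mm y))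
    (hJI : JD ⊆ I) (hJF : ∀ j ∈ JD, ∀ t, 1 ≤ t → t ≤ l → qF t ≠ j)
    (hJM : ∀ j ∈ JD, ∀ t ≤ H, qM t ≠ j)
    (hlast : δ ≤ mm A (qM H) (Mm H)) (hJc : ρ ^ 4 ≤ JD.card)
    (hcovF : ∀ j ∈ JD, 1 / 4 ≤ mm A j (nbhd G (lun F l))) :
    ∃ h, 3 ≤ h ∧ h ≤ l + H ∧ ∀ (n : ℕ) (η : ℝ), 0 < η → n * ρ ^ 4 ≤ JD.card →
      n * (η + θ) ≤ 1 / (8 * (ρ : ℝ) ^ 4) → Core G I A n h η := by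
  classical
  have hθ := S.θpos
  have hρ2 := S.ρ2'
  -- chains
  have hch : ∀ a φ, ∃ f : ℕ → V, a ≤ l → φ ∈ F a → (f a = φ ∧ (∀ t ≤ a, f t ∈ F t) ∧
      ∀ t < a, G.Adj (f t) (f (t + 1))) := by
    intro a φ
    by_cases h : a ≤ l ∧ φ ∈ F a
    · obtain ⟨f, hf⟩ := exists_chain (levF.mono h.1) h.2
      exact ⟨f, fun _ _ => hf⟩
    · exact ⟨fun _ => φ, fun h1 h2 => absurd ⟨h1, h2⟩ h⟩
  choose f hf using hch
  let Φ : ℕ → ℕ → ℕ → Set V := fun a i x => {φ | φ ∈ F a ∧ ClassOf G (f a φ) qp a s i x}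
  let D0 : Set V := (nbhd G (lun F l) ∩ nbhd G (Mm H)) \ {d | ∃ y ≤ s, G.Adj (qp y) d}
  let Dt : ℕ × ℕ × ℕ × ℕ → Set V := fun τ =>
    {d | d ∈ D0 ∧ d ∈ cls G F τ.1 ∧ d ∈ nbhd G (Φ τ.1 τ.2.1 τ.2.2.1) ∧ d ∈ cls G Mm (s + τ.2.2.2)}
  let Ts : Finset (ℕ × ℕ × ℕ × ℕ) :=
    Finset.range (p + 1) ×ˢ Finset.range (p + 1) ×ˢ Finset.range (p + 1) ×ˢ Finset.range (p + 1)
  have hTs : Ts.card ≤ ρ ^ 4 := by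
    simp only [Ts, Finset.card_product, Finset.card_range]
    calc _ = (p + 1) ^ 4 := by ring
      _ ≤ _ := Nat.pow_le_pow_left (by omega) 4
  -- every element gets a tuple
  have hD0 : D0 ⊆ ⋃ τ ∈ Ts, Dt τ := by
    intro d hd
    obtain ⟨⟨hd1, hd2⟩, hd3⟩ := hd
    obtain ⟨a, ha, hda⟩ := cls_cover G F l hd1
    obtain ⟨φ, hφ, hφd⟩ := hda.1
    have ha1 : 1 ≤ a := by
      by_contra hc
      have : a = 0 := by omega
      subst this
      rw [hF0] at hφ
      rw [Set.mem_singleton_iff] at hφ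
      subst hφ
      exact hd3 ⟨0, by omega, hφd⟩
    obtain ⟨f1, f2, f3⟩ := hf a φ ha hφ
    have h0 : f a φ 0 = qp 0 := by
      have := f2 0 (by omega)
      rwa [hF0] at this
    obtain ⟨i, x, hix⟩ := exists_class (G := G) (f a φ) qp a s ha1 hs (by
      have := f3 0 (by omega)
      rw [h0] at this
      exact this.symm)
    obtain ⟨m, hm, hdm⟩ := cls_cover G Mm H (x := d)
      (nbhd_mono G (Y := lun Mm H) (fun y hy => ⟨H, le_rfl, hy⟩) hd2)
    have hms : s < m := by
      by_contra hc
      obtain ⟨y, hy, hyd⟩ := hdm.1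
      rw [hMs m (by omega)] at hy
      rw [Set.mem_singleton_iff] at hy
      subst hy
      exact hd3 ⟨m, by omega, hyd⟩
    simp only [Set.mem_iUnion]
    refine ⟨(a, i, x, m - s), ?_, ⟨⟨hd1, hd2⟩, hd3⟩, hda, ⟨φ, ⟨hφ, hix⟩, hφd⟩, ?_⟩
    · simp only [Ts, Finset.mem_product, Finset.mem_range]
      have := hix.2.1
      have := hix.2.2.1
      omega
    · dsimp only
      rwa [show s + (m - s) = m by omega]
  have hDm : ∀ j ∈ JD, 1 / 8 ≤ mm A j D0 := by
    intro j hj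
    have h1 := S.nd' (hqM H le_rfl).1 (hJI hj) (hJM j hj H le_rfl) (hqM H le_rfl).2 hlast
      (nbhd G (lun F l))
    have h2 := hcovF j hj
    have h3 := mm_inter_add_diff A j (nbhd G (lun F l) ∩ nbhd G (Mm H))
      {d | ∃ y ≤ s, G.Adj (qp y) d}
    have h4 : mm A j (nbhd G (lun F l) ∩ nbhd G (Mm H) ∩ {d | ∃ y ≤ s, G.Adj (qp y) d}) ≤
        ρ * θ := by
      have : nbhd G (lun F l) ∩ nbhd G (Mm H) ∩ {d | ∃ y ≤ s, G.Adj (qp y) d} ⊆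
          ⋃ y ∈ Finset.range (s + 1), nbhd G {qp y} := by
        rintro d ⟨_, y, hy, hyd⟩
        simp only [Set.mem_iUnion]
        exact ⟨y, by simp; omega, qp y, rfl, hyd⟩
      refine (mm_mono A j this).trans ((mm_biUnion_le A j _ _).trans ?_)
      refine (Finset.sum_le_card_nsmul _ _ θ ?_).trans ?_
      · intro y hy
        have hy' : y ≤ s := by simp at hy; omega
        refine S.link _ (hqM y (by omega)).1 j (hJI hj) (hJM j hj y (by omega)) _
          ((hqM y (by omega)).2 ?_)
        rw [hMs y hy']; rfl
      · rw [Finset.card_range, nsmul_eq_mul]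
        have : ((s + 1 : ℕ) : ℝ) ≤ ρ := by exact_mod_cast (by omega)
        gcongr
    have h5 := S.θρ
    rw [Set.inter_comm (nbhd G (Mm H))] at h1
    have h6 : θ ≤ ρ * θ := by nlinarith
    show 1 / 8 ≤ mm A j ((nbhd G (lun F l) ∩ nbhd G (Mm H)) \ {d | ∃ y ≤ s, G.Adj (qp y) d})
    linarith
  have hpig : ∀ j, ∃ τ ∈ Ts, j ∈ JD → 1 / 8 / ((ρ : ℝ) ^ 4) ≤ mm A j (Dt τ) := by
    intro j
    by_cases hj : j ∈ JD
    · obtain ⟨τ, h1, h2⟩ := mm_pigeon A j Ts Dt D0 ((ρ : ℝ) ^ 4) (1 / 8) (by positivity)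
        (by exact_mod_cast hTs) hD0 (hDm j hj) (by norm_num)
      exact ⟨τ, h1, fun _ => h2⟩
    · exact ⟨(0, 0, 0, 0), by simp [Ts], fun h => absurd h hj⟩
  choose τf hτ1 hτ2 using hpig
  obtain ⟨τ, hτ, hfib⟩ := Finset.exists_le_card_fiber_of_mul_le_card_of_maps_to (s := JD) (t := Ts)
    (f := τf) (n := JD.card / ρ ^ 4) (fun j _ => hτ1 j) ⟨(0, 0, 0, 0), by simp [Ts]⟩ (by
      calc _ ≤ ρ ^ 4 * (JD.card / ρ ^ 4) := Nat.mul_le_mul_right _ hTs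
        _ ≤ _ := Nat.mul_div_le _ _)
  obtain ⟨a, i, x, m'⟩ := τ
  set J' := JD.filter (fun j => τf j = (a, i, x, m')) with hJ'
  have hJmem : ∀ j ∈ J', j ∈ JD ∧ 1 / 8 / ((ρ : ℝ) ^ 4) ≤ mm A j (Dt (a, i, x, m')) := by
    intro j hj
    rw [hJ', Finset.mem_filter] at hj
    have h1 := hτ2 j hj.1
    rw [hj.2] at h1
    exact ⟨hj.1, h1⟩
  have hρpos : 0 < ρ ^ 4 := Nat.pow_pos (by omega)
  obtain ⟨j0, hj0⟩ : J'.Nonempty := by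
    rw [← Finset.card_pos]
    have : 1 ≤ JD.card / ρ ^ 4 := (Nat.one_le_div_iff hρpos).2 hJc
    omega
  obtain ⟨d, ⟨hd0, hda, ⟨φ, hφ, hφd⟩, hdm⟩, _⟩ := mm_pos_nonempty A j0
    (lt_of_lt_of_le (by positivity) (hJmem j0 hj0).2)
  dsimp only at hda hφ hdm
  have hal : a ≤ l := by
    by_contra hc
    obtain ⟨a', ha', hda'⟩ := cls_cover G F l hd0.1.1
    exact hda.2 a' (by omega) hda'.1
  have hmH : s + m' ≤ H := by
    by_contra hc
    exact hdm.2 H (by omega) hd0.1.2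
  have hm1 : 1 ≤ m' := by
    by_contra hc
    obtain ⟨y, hy, hyd⟩ := hdm.1
    have : m' = 0 := by omega
    rw [this, Nat.add_zero, hMs s le_rfl] at hy
    rw [Set.mem_singleton_iff] at hy
    subst hy
    exact hd0.2 ⟨s, le_rfl, hyd⟩
  have hi1 : 1 ≤ i := hφ.2.1
  have hia : i ≤ a := hφ.2.2.1
  have hxs : x < s := hφ.2.2.2.1
  clear hφd hdm hda hd0
  refine ⟨(a - i + 1) + (s + m' - x), by omega, by omega, ?_⟩
  intro n η hη hn hnη
  -- the graded blocks
  have hnJ : n ≤ J'.card := ((Nat.le_div_iff_mul_le hρpos).2 hn).trans hfib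
  have hΦF : Φ a i x ⊆ F a := fun φ h => h.1
  obtain ⟨qc, C, Y, g1, g2, g3, g4⟩ := grade (G := G) (A := A) (θ := θ) (Φ a i x)
    (fun j => Dt (a, i, x, m') ∩ A j) J' n η hη hθ.le (by
      rintro j hj d ⟨⟨_, _, ⟨φ, hφ, hφd⟩, _⟩, _⟩
      exact ⟨φ, hφ, hφd⟩) (by
      intro j hj v hv
      exact S.link _ (hqF a (by omega) hal).1 j (hJI (hJmem j hj).1)
        (hJF j (hJmem j hj).1 a (by omega) hal) v ((hqF a (by omega) hal).2 (hΦF hv))) (by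
      intro j hj
      have h1 := (hJmem j hj).2
      have h2 : mm A j (Dt (a, i, x, m') ∩ A j) = mm A j (Dt (a, i, x, m')) := by
        unfold mm; rw [Set.inter_assoc, Set.inter_self]
      rw [h2]
      refine hnη.trans (le_trans (le_of_eq ?_) h1)
      field_simp) hnJ
  have hC : ∀ t < n, ∀ d ∈ C t, d ∈ Dt (a, i, x, m') := fun t ht d hd => ((g1 t ht).2.1 hd).1
  have hcJ : ∀ t < n, qc t ∈ JD := fun t ht => (hJmem _ (g1 t ht).1).1
  let L : ℕ → Set V := fun t => if t = 0 then {qp x} else {y | ∃ φ ∈ Φ a i x, f a φ (i + t - 1) = y}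
  have hL0 : L 0 = {qp x} := by simp [L]
  have hLt : ∀ t, 1 ≤ t → ∀ y, y ∈ L t ↔ ∃ φ ∈ Φ a i x, f a φ (i + t - 1) = y := by
    intro t ht y
    have : t ≠ 0 := by omega
    simp [L, this]
  have hLF : ∀ t, 1 ≤ t → t ≤ a - i + 1 → L t ⊆ F (i + t - 1) := by
    intro t h1 h2 y hy
    obtain ⟨φ, hφ, rfl⟩ := (hLt t h1 y).1 hy
    exact (hf a φ hal hφ.1).2.1 _ (by omega)
  have hMx : Mm x = {qp x} := hMs x hxs.le
  have hLΦ : ∀ y ∈ Φ a i x, y ∈ L (a - i + 1) := by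
    intro y hy
    refine (hLt _ (by omega) y).2 ⟨y, hy, ?_⟩
    rw [show i + (a - i + 1) - 1 = a by omega]
    exact (hf a y hal hy.1).1
  refine ⟨L, fun t => Mm (x + t), a - i + 1, s + m' - x,
    fun t => if t = 0 then qM x else qF (i + t - 1), fun t => qM (x + t), C, qc, Y, rfl, ?_⟩
  have hql0 : ∀ t, 1 ≤ t → (if t = 0 then qM x else qF (i + t - 1)) = qF (i + t - 1) := by
    intro t ht; rw [if_neg (by omega)]
  refine
  { a1 := by omega
    b1 := by omega
    root := by rw [hL0, Nat.add_zero, hMx]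
    root1 := by rw [hL0, Set.ncard_singleton]
    hql := ?_
    hqm := fun t h1 h2 => hqM (x + t) (by omega)
    hqc := fun t ht => ⟨hJI (hcJ t ht), fun d hd => ((g1 t ht).2.1 hd).2⟩
    injL := ?_
    injM := fun t h1 h2 t' h1' h2' e => by
      have := injM _ (by omega) _ (by omega) e; omega
    injC := g2
    neCL := ?_
    neCM := fun t ht i h1 h2 => (hJM _ (hcJ t ht) _ (by omega)).symm
    neLM := ?_
    levL := ⟨?_, ?_⟩
    levM := ⟨fun t ht => levM.1 (x + t) (by omega),
      fun t t' h1 h2 => levM.2 (x + t) (x + t') (by omega) (by omega)⟩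
    par := ?_
    LC := ?_
    MC := ?_
    covM := ?_
    YL := fun t ht y hy => hLΦ y ((g1 t ht).2.2.1 hy)
    Yc := g3
    Ya := g4
    size := fun t ht => (g1 t ht).2.2.2 }
  · intro t ht
    by_cases e : t = 0
    · subst e
      simp only [if_true, hL0]
      have := hqM x (by omega)
      rwa [hMx] at this
    · rw [hql0 t (by omega)]
      have := hqF (i + t - 1) (by omega) (by omega)
      exact ⟨this.1, (hLF t (by omega) ht).trans this.2⟩
  · intro t ht t' ht' e
    by_cases e1 : t = 0 <;> by_cases e2 : t' = 0
    · omega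
    · simp only [e1, e2, if_true, if_false] at e
      exact absurd e.symm (neFM _ (by omega) (by omega) _ (by omega))
    · simp only [e1, e2, if_true, if_false] at e
      exact absurd e (neFM _ (by omega) (by omega) _ (by omega))
    · simp only [e1, e2, if_false] at e
      have := injF _ (by omega) (by omega) _ (by omega) (by omega) e
      omega
  · intro t ht i' hi'
    by_cases e : i' = 0
    · simp only [e, if_true]
      exact (hJM _ (hcJ t ht) _ (by omega)).symm
    · simp only [e, if_false]
      exact (hJF _ (hcJ t ht) _ (by omega) (by omega)).symm
  · intro t ht t' h1 h2 e
    by_cases e1 : t = 0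
    · simp only [e1, if_true] at e
      have := injM _ (by omega) _ (by omega) e
      omega
    · simp only [e1, if_false] at e
      exact neFM _ (by omega) (by omega) _ (by omega) e
  · intro t ht y hy
    obtain ⟨φ, hφ, rfl⟩ := (hLt _ (by omega) y).1 hy
    by_cases e : t = 0
    · subst e
      refine ⟨qp x, by rw [hL0]; rfl, ?_⟩
      have := hφ.2.2.2.2.1
      exact this.symm
    · refine ⟨f a φ (i + t - 1), (hLt t (by omega) _).2 ⟨φ, hφ, rfl⟩, ?_⟩
      have := (hf a φ hal hφ.1).2.2 (i + t - 1) (by omega)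
      rwa [show i + t - 1 + 1 = i + (t + 1) - 1 by omega] at this
  · intro t t' htt ht' y hy z hz
    by_cases e : t = 0
    · subst e
      rw [hL0, Set.mem_singleton_iff] at hy
      subst hy
      obtain ⟨φ, hφ, rfl⟩ := (hLt _ (by omega) z).1 hz
      intro hadj
      exact hφ.2.2.2.2.2.1 (i + t' - 1) (by omega) (by omega) x hxs hadj.symm
    · exact levF.2 (i + t - 1) (i + t' - 1) (by omega) (by omega) y
        (hLF t (by omega) (by omega) hy) z (hLF t' (by omega) (by omega) hz)
  · intro t h1 h2 t' h1' h2' y hy z hz hadj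
    rcases Nat.lt_or_ge (x + t) s with h | h
    · rw [hMs _ h.le, Set.mem_singleton_iff] at hy
      subst hy
      obtain ⟨φ, hφ, rfl⟩ := (hLt _ (by omega) z).1 hz
      by_cases e : t' = 1
      · subst e
        exact hφ.2.2.2.2.2.2 (x + t) (by omega) h hadj.symm
      · exact hφ.2.2.2.2.2.1 (i + t' - 1) (by omega) (by omega) _ h hadj.symm
    · exact hFM (i + t' - 1) (by omega) (x + t) h (by omega) z (hLF t' h1' h2' hz) y hy hadj.symm
  · intro t ht t' ht' y hy d hd hadj
    have hdD := hC t' ht' d hd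
    by_cases e : t = 0
    · subst e
      rw [hL0, Set.mem_singleton_iff] at hy
      subst hy
      exact hdD.1.2 ⟨x, hxs.le, hadj⟩
    · exact hdD.2.1.2 (i + t - 1) (by dsimp only; omega) ⟨y, hLF t (by omega) (by omega) hy, hadj⟩
  · intro t ht t' ht' y hy d hd hadj
    exact (hC t' ht' d hd).2.2.2.2 (x + t) (by dsimp only; omega) ⟨y, hy, hadj⟩
  · intro t ht d hd
    obtain ⟨y, hy, hyd⟩ := (hC t ht d hd).2.2.2.1
    refine ⟨y, ?_, hyd⟩
    rwa [show x + (s + m' - x) = s + m' by omega]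
end Base

section Base1
variable {V : Type} [Fintype V] {G : SimpleGraph V} {I : Finset ℤ} {A : ℤ → Set V}
    {θ δ β : ℝ} {ρ : ℕ}

theorem exists_enum (J : Finset ℤ) : ∃ e : ℕ → ℤ, (∀ t < J.card, e t ∈ J) ∧
    ∀ t < J.card, ∀ t' < J.card, e t = e t' → t = t' := by
  refine ⟨fun t => if h : t < J.card then J.orderEmbOfFin rfl ⟨t, h⟩ else 0, ?_, ?_⟩
  · intro t ht
    simp only [ht, dif_pos]
    exact Finset.orderEmbOfFin_mem _ _ _
  · intro t ht t' ht' e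
    simp only [ht, ht', dif_pos] at e
    have := (J.orderEmbOfFin rfl).injective e
    simpa using this

theorem mm_self {i : ℤ} (h : (A i).Nonempty) : mm A i (A i) = 1 := by
  have h1 := mm_add_compl A i h (A i)
  have : mm A i (A i)ᶜ = 0 := by simp [mm]
  linarith

theorem stepF (S : Setup G I A θ δ β ρ) (p : ℕ) (R : ℕ → Set V) (h : ℕ) (q : ℕ → ℤ) (v : V)
    (lev : Lev G R h) (h0 : R 0 = {v}) (hq : ∀ t ≤ h, q t ∈ I ∧ R t ⊆ A (q t))
    (hlast : δ ≤ mm A (q h) (R h)) (J : Finset ℤ) (hJI : J ⊆ I) (hqJ : ∀ t ≤ h, q t ∉ J)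
    (hpJ : p < J.card) :
    ∃ (l : ℕ) (F : ℕ → Set V) (JR JD : Finset ℤ), 1 ≤ l ∧ l ≤ h ∧ (∀ t, F t ⊆ R t) ∧ F 0 = R 0 ∧
      Lev G F l ∧ JR ⊆ J ∧ JD ⊆ J ∧ Disjoint JR JD ∧ JR.card = p + 1 ∧
      J.card ≤ JD.card + 2 * p + 1 ∧
      (∀ j ∈ JR, 3 / 4 - θ ≤ mm A j (nbhd G (lun F l))ᶜ) ∧
      ∀ j ∈ JD, 1 / 4 ≤ mm A j (nbhd G (lun F l)) := by
  classical
  have hθ := S.θpos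
  have hθ1 := S.θ1
  let good : Set V → Finset ℤ := fun X => J.filter (fun j => 1 / 4 ≤ mm A j (nbhd G X))
  have hv : v ∈ A (q 0) := (hq 0 (by omega)).2 (by rw [h0]; rfl)
  obtain ⟨l, hl1, hl2, F, hF, hF0, hlev, y, hy, B, hB, hnP, hP⟩ := first_time_lev lev
    (fun X => J.card ≤ (good X).card + p) (by
      have : good (R 0) = ∅ := by
        rw [Finset.eq_empty_iff_forall_notMem]
        intro j hj
        rw [Finset.mem_filter] at hj
        have := S.link _ (hq 0 (by omega)).1 j (hJI hj.1)
          (fun e => hqJ 0 (by omega) (e ▸ hj.1)) v hv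
        rw [h0] at hj
        linarith [hj.2]
      rw [this]; simp; omega) (by
      have : good (lun R h) = J := by
        apply Finset.filter_true_of_mem
        intro j hj
        have h1 := S.nd _ (hq h le_rfl).1 j (hJI hj) (fun e => hqJ h le_rfl (e ▸ hj)) _
          (hq h le_rfl).2 hlast
        have h2 := mm_add_compl A j (S.blk.1 j (hJI hj)) (nbhd G (R h))
        have h3 : mm A j (nbhd G (R h)) ≤ mm A j (nbhd G (lun R h)) :=
          mm_mono A j (nbhd_mono G (fun y hy => ⟨h, le_rfl, hy⟩))
        linarith
      rw [this]; omega)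
  have hbad : p + 1 ≤ (J.filter (fun j => ¬ 1 / 4 ≤ mm A j (nbhd G B))).card := by
    have := Finset.card_filter_add_card_filter_not (s := J)
      (fun j => 1 / 4 ≤ mm A j (nbhd G B))
    simp only [good] at hnP
    omega
  obtain ⟨JR, hJR, hJRc⟩ := Finset.exists_subset_card_eq hbad
  have hJRJ : JR ⊆ J := hJR.trans (Finset.filter_subset _ _)
  refine ⟨l, F, JR, good (lun F l) \ JR, hl1, hl2, hF, hF0, hlev, hJRJ,
    Finset.sdiff_subset.trans (Finset.filter_subset _ _), Finset.disjoint_sdiff, hJRc, ?_, ?_, ?_⟩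
  · have h1 := Finset.le_card_sdiff JR (good (lun F l))
    rw [hB] at h1 ⊢
    omega
  · intro j hj
    have h1 := (Finset.mem_filter.1 (hJR hj)).2
    push Not at h1
    have h2 := S.link _ (hq l hl2).1 j (hJI (hJRJ hj)) (fun e => hqJ l hl2 (e ▸ hJRJ hj)) y
      ((hq l hl2).2 hy)
    have h3 := mm_union_le A j (nbhd G {y}) (nbhd G B)
    rw [← nbhd_insert, ← hB] at h3
    have h4 := mm_add_compl A j (S.blk.1 j (hJI (hJRJ hj))) (nbhd G (lun F l))
    linarith
  · intro j hj
    exact (Finset.mem_filter.1 (Finset.mem_sdiff.1 hj).1).2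

theorem stepQ (S : Setup G I A θ δ β ρ) (p : ℕ) (hp : p + 2 = ρ)
    (R : ℕ → Set V) (h : ℕ) (q : ℕ → ℤ) (v : V) (U : Set V) (hhp : h ≤ p)
    (lev : Lev G R h) (h0 : R 0 = {v}) (hq : ∀ t ≤ h, q t ∈ I ∧ R t ⊆ A (q t))
    (hinj : ∀ t ≤ h, ∀ t' ≤ h, q t = q t' → t = t')
    (hlast : δ ≤ mm A (q h) (R h)) (JR : Finset ℤ) (hJI : JR ⊆ I) (hqJ : ∀ t ≤ h, q t ∉ JR)
    (hJRc : JR.card = p + 1) (hU : ∀ j ∈ JR, 3 / 4 - θ ≤ mm A j U) :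
    ∃ (s H : ℕ) (qp : ℕ → V) (Mm : ℕ → Set V) (qM : ℕ → ℤ), 1 ≤ s ∧ s ≤ p + 1 ∧ s < H ∧
      H ≤ s + p ∧ Lev G Mm H ∧ (∀ t ≤ s, Mm t = {qp t}) ∧ qp 0 = v ∧
      (∀ t ≤ H, qM t ∈ I ∧ Mm t ⊆ A (qM t)) ∧ (∀ t ≤ H, ∀ t' ≤ H, qM t = qM t' → t = t') ∧
      (∀ t ≤ H, (∃ t' ≤ h, qM t = q t') ∨ qM t ∈ JR) ∧ (∀ y, s ≤ y → y ≤ H → Mm y ⊆ U) ∧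
      δ ≤ mm A (qM H) (Mm H) := by
  classical
  have hθ := S.θpos
  have hθ1 := S.θ1
  have hρ2 := S.ρ2'
  have hv : v ∈ A (q 0) := (hq 0 (by omega)).2 (by rw [h0]; rfl)
  obtain ⟨l, hl1, hl2, Q, hQ, hQ0, hlev, y, hy, B, hB, hnP, j1, hj1, hP⟩ := first_time_lev lev
    (fun X => ∃ j ∈ JR, 1 / 4 ≤ mm A j (nbhd G X ∩ U)) (by
      rintro ⟨j, hj, hle⟩
      have h1 := S.link _ (hq 0 (by omega)).1 j (hJI hj)
          (fun e => hqJ 0 (by omega) (e ▸ hj)) v hv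
      have h2 : mm A j (nbhd G (R 0) ∩ U) ≤ mm A j (nbhd G {v}) := by
        rw [h0]; exact mm_mono A j Set.inter_subset_left
      linarith) (by
      obtain ⟨j, hj⟩ : JR.Nonempty := Finset.card_pos.1 (by omega)
      refine ⟨j, hj, ?_⟩
      have h1 := S.nd' (hq h le_rfl).1 (hJI hj) (fun e => hqJ h le_rfl (e ▸ hj))
        (hq h le_rfl).2 hlast U
      have h2 : mm A j (nbhd G (R h) ∩ U) ≤ mm A j (nbhd G (lun R h) ∩ U) :=
        mm_mono A j (Set.inter_subset_inter_left _ (nbhd_mono G (fun y hy => ⟨h, le_rfl, hy⟩)))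
      have := hU j hj
      linarith)
  rw [← hB] at hP
  obtain ⟨t0, ht0, hZ⟩ := mm_pigeon A j1 (Finset.range (l + 1)) (fun t => cls G Q t ∩ U) _ (ρ : ℝ)
    (1 / 4) (by linarith) (by rw [Finset.card_range]; exact_mod_cast (by omega)) (by
      rintro x ⟨hx, hx'⟩
      obtain ⟨t, ht, hxt⟩ := cls_cover G Q l hx
      simp only [Set.mem_iUnion]
      exact ⟨t, by simp; omega, hxt, hx'⟩) hP (by norm_num)
  have ht0l : t0 ≤ l := by simp at ht0; omega
  obtain ⟨e, he1, he2⟩ := exists_enum (JR.erase j1)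
  have hec : (JR.erase j1).card = p := by rw [Finset.card_erase_of_mem hj1]; omega
  rw [hec] at he1 he2
  have he3 : ∀ t < p, e t ∈ JR ∧ e t ≠ j1 := fun t ht =>
    ⟨Finset.mem_of_mem_erase (he1 t ht), Finset.ne_of_mem_erase (he1 t ht)⟩
  let eP : ℕ → ℤ := fun i => if i = 0 then j1 else e (i - 1)
  let EP : ℕ → Set V := fun i => if i = 0 then cls G Q t0 ∩ U ∩ A j1
    else (U ∩ A (eP i)) \ nbhd G (lun Q l)
  have heP0 : eP 0 = j1 := by simp [eP]
  have hEP0 : EP 0 = cls G Q t0 ∩ U ∩ A j1 := by simp [EP]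
  have heP : ∀ i, 1 ≤ i → eP i = e (i - 1) := fun i hi => by
    have : i ≠ 0 := by omega
    simp [eP, this]
  have hEP : ∀ i, 1 ≤ i → EP i = (U ∩ A (eP i)) \ nbhd G (lun Q l) := fun i hi => by
    have : i ≠ 0 := by omega
    simp [EP, this]
  have hePJ : ∀ i ≤ p, eP i ∈ JR := by
    intro i hi
    rcases Nat.eq_zero_or_pos i with h | h
    · subst h; rw [heP0]; exact hj1
    · rw [heP i h]; exact (he3 _ (by omega)).1
  have hePinj : ∀ i ≤ p, ∀ j ≤ p, eP i = eP j → i = j := by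
    intro i hi j hj hij
    rcases Nat.eq_zero_or_pos i with h | h <;> rcases Nat.eq_zero_or_pos j with h' | h'
    · omega
    · rw [h, heP0, heP j h'] at hij
      exact absurd hij.symm (he3 _ (by omega)).2
    · rw [h', heP0, heP i h] at hij
      exact absurd hij (he3 _ (by omega)).2
    · rw [heP i h, heP j h'] at hij
      have := he2 _ (by omega) _ (by omega) hij
      omega
  have hEPU : ∀ i, EP i ⊆ U := by
    intro i
    rcases Nat.eq_zero_or_pos i with h | h
    · subst h; rw [hEP0]; exact fun x hx => hx.1.2
    · rw [hEP i h]; exact fun x hx => hx.1.1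
  have hEPA : ∀ i, EP i ⊆ A (eP i) := by
    intro i
    rcases Nat.eq_zero_or_pos i with h | h
    · subst h; rw [hEP0, heP0]; exact fun x hx => hx.2
    · rw [hEP i h]; exact fun x hx => hx.1.2
  obtain ⟨Bad, hBad, hgrow⟩ := grow S eP EP p hp (fun i hi => hJI (hePJ i hi)) hePinj
    (fun i _ => hEPA i) (by
      intro i h1 h2
      rw [hEP i h1]
      set j := eP i with hj
      have hjJ : j ∈ JR := hePJ i h2
      have a1 : mm A j (nbhd G B ∩ U) < 1 / 4 := by
        by_contra hc
        push Not at hc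
        exact hnP ⟨j, hjJ, hc⟩
      have a2 := S.link _ (hq l hl2).1 j (hJI hjJ) (fun e => hqJ l hl2 (e ▸ hjJ)) y
        ((hq l hl2).2 hy)
      have a3 : U ∩ nbhd G (lun Q l) ⊆ nbhd G {y} ∪ (nbhd G B ∩ U) := by
        rw [hB, nbhd_insert]
        rintro x ⟨hx, hx' | hx'⟩
        · exact Or.inl hx'
        · exact Or.inr ⟨hx', hx⟩
      have a4 := (mm_mono A j a3).trans (mm_union_le A j _ _)
      have a5 := mm_inter_add_diff A j U (nbhd G (lun Q l))
      have a6 := hU j hjJ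
      have a7 : mm A j (U \ nbhd G (lun Q l)) ≤ mm A j ((U ∩ A j) \ nbhd G (lun Q l)) :=
        mm_mono' A j (fun x hx => ⟨⟨hx.1.1, hx.2⟩, hx.1.2⟩)
      linarith)
  obtain ⟨w, hwZ, hwB⟩ : ∃ w, w ∈ EP 0 ∧ w ∉ Bad := by
    by_contra hc
    push Not at hc
    have h1 : mm A j1 (cls G Q t0 ∩ U) ≤ mm A j1 Bad := by
      apply mm_mono'
      intro x hx
      exact hc x (by rw [hEP0]; exact hx)
    rw [heP0] at hBad
    have h2 : 1 / 4 / (ρ : ℝ) ≤ ρ * δ := by linarith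
    have h3 := S.ρδ
    have h4 := S.θρ
    rw [div_le_iff₀ (by linarith)] at h2
    nlinarith
  obtain ⟨hP, σ, P, b1, b2, b3, b4, b5, b6, b7, b8, b9⟩ := hgrow w hwZ hwB
  rw [hEP0] at hwZ
  obtain ⟨⟨⟨⟨z, hz, hzw⟩, hwc⟩, hwU⟩, hwj⟩ := hwZ
  obtain ⟨f, f1, f2, f3⟩ := exists_chain (hlev.mono ht0l) hz
  have hσ1 : ∀ t, 1 ≤ t → t ≤ hP → 1 ≤ σ t := by
    intro t h1 h2
    have := b5 0 t h1 h2
    omega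
  have hσinj : ∀ t ≤ hP, ∀ t' ≤ hP, σ t = σ t' → t = t' := by
    intro t ht t' ht' e
    rcases Nat.lt_trichotomy t t' with h | h | h
    · have := b5 t t' h ht'; omega
    · exact h
    · have := b5 t' t h ht; omega
  let Mm : ℕ → Set V := fun t => if t ≤ t0 then {f t} else P (t - (t0 + 1))
  let qM : ℕ → ℤ := fun t => if t ≤ t0 then q t else eP (σ (t - (t0 + 1)))
  have M1 : ∀ t ≤ t0, Mm t = {f t} := fun t ht => by simp [Mm, ht]
  have M2 : ∀ t, t0 < t → Mm t = P (t - (t0 + 1)) := fun t ht => by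
    have : ¬ t ≤ t0 := by omega
    simp [Mm, this]
  have q1 : ∀ t ≤ t0, qM t = q t := fun t ht => by simp [qM, ht]
  have q2 : ∀ t, t0 < t → qM t = eP (σ (t - (t0 + 1))) := fun t ht => by
    have : ¬ t ≤ t0 := by omega
    simp [qM, this]
  have hfq : ∀ t ≤ t0, f t ∈ Q t := f2
  refine ⟨t0 + 1, t0 + 1 + hP, fun t => if t ≤ t0 then f t else w, Mm, qM, by omega, by omega,
    by omega, by omega, ⟨?_, ?_⟩, ?_, ?_, ?_, ?_, ?_, ?_, ?_⟩
  · intro t ht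
    rcases Nat.lt_trichotomy t t0 with h' | h' | h'
    · rw [M1 t (by omega), M1 (t + 1) (by omega)]
      intro b hb
      rw [Set.mem_singleton_iff] at hb
      subst hb
      exact ⟨f t, rfl, f3 t h'⟩
    · subst h'
      rw [M1 t le_rfl, M2 (t + 1) (by omega), Nat.sub_self, b3]
      intro b hb
      rw [Set.mem_singleton_iff] at hb
      subst hb
      exact ⟨f t, rfl, by rw [f1]; exact hzw⟩
    · rw [M2 t h', M2 (t + 1) (by omega), show t + 1 - (t0 + 1) = t - (t0 + 1) + 1 by omega]
      exact b8.1 _ (by omega)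
  · intro t t' htt ht'
    rcases Nat.lt_or_ge t0 t with h' | h'
    · rw [M2 t h', M2 t' (by omega)]
      exact b8.2 _ _ (by omega) (by omega)
    · rw [M1 t h']
      intro a ha b hb hadj
      rw [Set.mem_singleton_iff] at ha
      subst ha
      rcases Nat.lt_or_ge t0 t' with h'' | h''
      · rw [M2 t' h''] at hb
        by_cases e1 : t' = t0 + 1
        · rw [e1, Nat.sub_self, b3, Set.mem_singleton_iff] at hb
          subst hb
          exact hwc t (by omega) ⟨f t, f2 t h', hadj⟩
        · have hb2 := b7 _ (by omega) hb
          rw [hEP _ (hσ1 _ (by omega) (by omega))] at hb2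
          exact hb2.2 ⟨f t, ⟨t, by omega, f2 t h'⟩, hadj⟩
      · rw [M1 t' h'', Set.mem_singleton_iff] at hb
        subst hb
        exact hlev.2 t t' htt (by omega) _ (f2 t h') _ (f2 t' h'') hadj
  · intro t ht
    rcases Nat.lt_or_ge t0 t with h' | h'
    · have : ¬ t ≤ t0 := by omega
      rw [M2 t h']
      simp only [this, if_false]
      rw [show t - (t0 + 1) = 0 by omega, b3]
    · rw [M1 t h']; simp [h']
  · simp only [Nat.zero_le, if_true]
    have := f2 0 (by omega)
    rwa [hQ0, h0, Set.mem_singleton_iff] at this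
  · intro t ht
    rcases Nat.lt_or_ge t0 t with h' | h'
    · rw [M2 t h', q2 t h']
      exact ⟨hJI (hePJ _ (b6 _ (by omega))), (b7 _ (by omega)).trans (hEPA _)⟩
    · rw [M1 t h', q1 t h']
      refine ⟨(hq t (by omega)).1, ?_⟩
      rw [Set.singleton_subset_iff]
      exact (hq t (by omega)).2 (hQ t (f2 t h'))
  · intro t ht t' ht' e
    rcases Nat.lt_or_ge t0 t with h1 | h1 <;> rcases Nat.lt_or_ge t0 t' with h2 | h2
    · rw [q2 t h1, q2 t' h2] at e
      have := hσinj _ (by omega) _ (by omega)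
        (hePinj _ (b6 _ (by omega)) _ (b6 _ (by omega)) e)
      omega
    · rw [q2 t h1, q1 t' h2] at e
      exact absurd (e ▸ hePJ _ (b6 _ (by omega))) (hqJ t' (by omega))
    · rw [q1 t h1, q2 t' h2] at e
      exact absurd (e ▸ hePJ _ (b6 _ (by omega))) (hqJ t (by omega))
    · rw [q1 t h1, q1 t' h2] at e
      exact hinj _ (by omega) _ (by omega) e
  · intro t ht
    rcases Nat.lt_or_ge t0 t with h' | h'
    · rw [q2 t h']; exact Or.inr (hePJ _ (b6 _ (by omega)))
    · exact Or.inl ⟨t, by omega, q1 t h'⟩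
  · intro t h1 h2
    rw [M2 t (by omega)]
    exact (b7 _ (by omega)).trans (hEPU _)
  · rw [M2 _ (by omega), q2 _ (by omega), show t0 + 1 + hP - (t0 + 1) = hP by omega]
    exact b9

theorem base1 (S : Setup G I A θ δ β ρ) (p : ℕ) (hp : p + 2 = ρ)
    (hK : 4 * p + 2 + ρ ^ 4 ≤ I.card) :
    ∃ h, 3 ≤ h ∧ h ≤ 3 * p + 1 ∧ ∀ (n : ℕ) (η : ℝ), 0 < η → n * ρ ^ 4 + (4 * p + 2) ≤ I.card →
      n * (η + θ) ≤ 1 / (8 * (ρ : ℝ) ^ 4) → Core G I A n h η := by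
  classical
  have hθ := S.θpos
  have hθ1 := S.θ1
  have hρδ := S.ρδ
  obtain ⟨e, he1, he2⟩ := exists_enum I
  have hself : ∀ i ∈ I, 3 * θ ≤ mm A i (A i) := fun i hi => by
    rw [mm_self (S.blk.1 i hi)]; linarith
  let eQ : ℕ → ℕ := fun i => if i = 0 then 0 else p + i
  have hQ0 : eQ 0 = 0 := by simp [eQ]
  have hQ1 : ∀ i, 1 ≤ i → eQ i = p + i := fun i hi => by
    have : i ≠ 0 := by omega
    simp [eQ, this]
  have hQle : ∀ i ≤ p, eQ i ≤ 2 * p := by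
    intro i hi; simp only [eQ]; split_ifs <;> omega
  have hQinj : ∀ i j, eQ i = eQ j → i = j := by
    intro i j; simp only [eQ]; split_ifs <;> omega
  obtain ⟨BF, hBF, gF⟩ := grow S e (fun i => A (e i)) p hp (fun i hi => he1 i (by omega))
    (fun i hi j hj => he2 i (by omega) j (by omega)) (fun i _ => le_rfl)
    (fun i _ hi => hself _ (he1 i (by omega)))
  have hQK : ∀ i ≤ p, eQ i < I.card := fun i hi => by have := hQle i hi; omega
  obtain ⟨BQ, hBQ, gQ⟩ := grow S (fun i => e (eQ i)) (fun i => A (e (eQ i))) p hp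
    (fun i hi => he1 _ (hQK i hi))
    (fun i hi j hj h => hQinj _ _ (he2 _ (hQK i hi) _ (hQK j hj) h)) (fun i _ => le_rfl)
    (fun i _ hi => hself _ (he1 _ (hQK i hi)))
  rw [hQ0] at hBQ gQ
  obtain ⟨v, hv, hvF, hvQ⟩ : ∃ v ∈ A (e 0), v ∉ BF ∧ v ∉ BQ := by
    by_contra hc
    push Not at hc
    have h1 : A (e 0) ⊆ BF ∪ BQ := by
      intro x hx
      by_cases h : x ∈ BF
      · exact Or.inl h
      · exact Or.inr (hc x hx h)
    have h2 := (mm_mono A (e 0) h1).trans (mm_union_le A _ _ _)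
    rw [mm_self (S.blk.1 _ (he1 0 (by omega)))] at h2
    linarith
  obtain ⟨hF, σF, RF, a1, a2, a3, a4, a5, a6, a7, a8, a9⟩ := gF v hv hvF
  obtain ⟨hQ, σQ, RQ, b1, b2, b3, b4, b5, b6, b7, b8, b9⟩ := gQ v hv hvQ
  have hinjσ : ∀ (h : ℕ) (σ : ℕ → ℕ), (∀ s t, s < t → t ≤ h → σ s < σ t) →
      ∀ t ≤ h, ∀ t' ≤ h, σ t = σ t' → t = t' := by
    intro h σ b5 t ht t' ht' e
    rcases Nat.lt_trichotomy t t' with h | h | h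
    · have := b5 t t' h ht'; omega
    · exact h
    · have := b5 t' t h ht; omega
  have hF1 : ∀ t, 1 ≤ t → t ≤ hF → 1 ≤ σF t := by
    intro t h1 h2
    have := a5 0 t h1 h2
    omega
  let J : Finset ℤ := I \ (Finset.range (2 * p + 1)).image e
  have hJI : J ⊆ I := Finset.sdiff_subset
  have hJc : I.card ≤ J.card + (2 * p + 1) := by
    have h1 := Finset.le_card_sdiff ((Finset.range (2 * p + 1)).image e) I
    have h2 : ((Finset.range (2 * p + 1)).image e).card ≤ 2 * p + 1 :=
      Finset.card_image_le.trans (by simp)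
    show I.card ≤ (I \ (Finset.range (2 * p + 1)).image e).card + (2 * p + 1)
    omega
  have hJe : ∀ i ≤ 2 * p, e i ∉ J := by
    intro i hi h
    exact (Finset.mem_sdiff.1 h).2 (Finset.mem_image.2 ⟨i, by simp; omega, rfl⟩)
  have hρp : 0 < ρ ^ 4 := Nat.pow_pos (by omega)
  obtain ⟨l, F, JR, JD, c1, c2, c3, c4, c5, c6, c7, c8, c9, c10, c11, c12⟩ :=
    stepF S p RF hF (fun t => e (σF t)) v a8 a3
      (fun t ht => ⟨he1 _ (by have := a6 t ht; omega), a7 t ht⟩) a9 J hJI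
      (fun t ht => hJe _ (by have := a6 t ht; omega)) (by omega)
  obtain ⟨s, H, qp, Mm, qM, d1, d2, d3, d4, d5, d6, d7, d8, d9, d10, d11, d12⟩ :=
    stepQ S p hp RQ hQ (fun t => e (eQ (σQ t))) v (nbhd G (lun F l))ᶜ b2 b8 b3
      (fun t ht => ⟨he1 _ (hQK _ (b6 t ht)), b7 t ht⟩)
      (fun t ht t' ht' h => hinjσ hQ σQ b5 t ht t' ht' (hQinj _ _
        (he2 _ (hQK _ (b6 t ht)) _ (hQK _ (b6 t' ht')) h))) b9 JR (c6.trans hJI)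
      (fun t ht h => hJe _ (hQle _ (b6 t ht)) (c6 h)) c9 c11
  obtain ⟨h, h3, hh, hcore⟩ := base2 S p hp F Mm l s H qp (fun t => e (σF t)) qM JD (by omega) d1 d2
    d3 d4 c5 d5 d6 (by rw [c4, a3, d7])
    (fun t h1 h2 => ⟨he1 _ (by have := a6 t (by omega); omega), (c3 t).trans (a7 t (by omega))⟩)
    d8 (fun t h1 h2 t' h1' h2' h => hinjσ hF σF a5 t (by omega) t' (by omega)
      (he2 _ (by have := a6 t (by omega); omega) _ (by have := a6 t' (by omega); omega) h))
    d9 (by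
      intro t h1 h2 t' ht' heq
      have k1 := a6 t (by omega)
      have k2 := hF1 t h1 (by omega)
      rcases d10 t' ht' with ⟨t'', ht'', h⟩ | h
      · have k3 := he2 _ (by omega) _ (hQK _ (b6 t'' ht'')) (heq.trans h)
        simp only [eQ] at k3
        split_ifs at k3 <;> omega
      · rw [← heq] at h
        exact hJe _ (by omega) (c6 h))
    (by
      intro t ht y h1 h2 x hx z hz hadj
      exact d11 y h1 h2 hz ⟨x, ⟨t, ht, hx⟩, hadj⟩)
    (c7.trans hJI) (by
      intro j hj t h1 h2 heq
      exact hJe (σF t) (by have := a6 t (by omega); omega) (heq ▸ c7 hj))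
    (by
      intro j hj t ht heq
      rcases d10 t ht with ⟨t', ht', h⟩ | h
      · exact hJe _ (hQle _ (b6 t' ht')) (h ▸ heq ▸ c7 hj)
      · rw [heq] at h
        exact Finset.disjoint_left.1 c8 h hj)
    d12 (by omega) c12
  exact ⟨h, h3, by omega, fun n η h1 h2 h3 => hcore n η h1 (by omega) h3⟩

end Base1

section Final
variable {V : Type} [Fintype V] {G : SimpleGraph V} {I : Finset ℤ} {A : ℤ → Set V}
    {θ δ β : ℝ} {ρ : ℕ}

theorem isLevelling_of_lev (hA : IsBlockade I A) {R : ℕ → Set V} {h : ℕ} (q : ℕ → ℤ) (h1 : 1 ≤ h)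
    (hR : (R 0).ncard = 1) (hq : ∀ i ≤ h, q i ∈ I ∧ R i ⊆ A (q i))
    (hinj : ∀ i ≤ h, ∀ j ≤ h, q i = q j → i = j) (H : Lev G R h) : IsLevelling G R h := by
  refine ⟨h1, hR, ?_, ?_, ?_⟩
  · intro i hi j hj hij
    exact (hA.2 _ (hq i hi).1 _ (hq j hj).1 (fun e => hij (hinj i hi j hj e))).mono
      (hq i hi).2 (hq j hj).2
  · intro i hi hi'
    have := H.1 (i - 1) (by omega)
    rwa [Nat.sub_add_cancel hi] at this
  · intro i hi hi' t ht
    exact H.2 t i ht hi'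

theorem reaches_of {R : ℕ → Set V} {h : ℕ} {U : Set V} (H : IsLevelling G R h)
    (hd : ∀ i ≤ h, Disjoint (R i) U) (hc : Covers G (R h) U)
    (ha : ∀ i < h, Anticomplete G (R i) U) : Reaches G R h U := by
  obtain ⟨h1, hR, H1, H2, H3⟩ := H
  refine ⟨by omega, ?_, ?_, ?_, ?_⟩
  · simpa using hR
  · intro i hi j hj hij
    by_cases ei : i = h + 1
    · have ej : j ≠ h + 1 := by omega
      simp only [ei, ej, if_true, if_false]
      exact (hd j (by omega)).symm
    · by_cases ej : j = h + 1
      · simp only [ei, ej, if_true, if_false]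
        exact hd i (by omega)
      · simp only [ei, ej, if_false]
        exact H1 i (by omega) j (by omega) hij
  · intro i hi hi'
    have e' : i - 1 ≠ h + 1 := by omega
    by_cases ei : i = h + 1
    · simp only [e', if_false]
      subst ei
      simpa using hc
    · simp only [ei, e', if_false]
      exact H2 i hi (by omega)
  · intro i hi hi' t ht
    have e' : t ≠ h + 1 := by omega
    by_cases ei : i = h + 1
    · simp only [ei, e', if_true, if_false]
      exact ha t (by omega)
    · simp only [ei, e', if_false]
      exact H3 i hi (by omega) t ht

theorem core_convert (hA : IsBlockade I A) {k h : ℕ} {η : ℝ} (hη : 0 < η)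
    (H : Core G I A k h η) :
    ∃ (L : ℕ → Set V) (a : ℕ) (M : ℕ → Set V) (b : ℕ) (J : Finset ℤ) (C : ℤ → Set V),
      IsBiLevelling G L a M b J C ∧ RainbowBiLevelling I A L a M b J C ∧
      J.card = k ∧ a + b = h ∧ SizeGE I A J C η := by
  obtain ⟨L, M, a, b, ql, qm, C, qc, Y, hab, D⟩ := H
  have hJ : ∀ j ∈ (Finset.range k).image (fun n : ℕ => (n : ℤ)), j.toNat < k ∧ (j.toNat : ℤ) = j := by
    intro j hj
    simp only [Finset.mem_image, Finset.mem_range] at hj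
    obtain ⟨t, ht, rfl⟩ := hj
    simpa using ht
  have hdis : ∀ i ∈ I, ∀ j ∈ I, i ≠ j → Disjoint (A i) (A j) := hA.2
  have hne : ∀ t < k, (C t).Nonempty := fun t ht =>
    (mm_pos_nonempty A (qc t) (hη.trans_le (D.size t ht))).mono Set.inter_subset_left
  have levL : IsLevelling G L a := isLevelling_of_lev hA ql D.a1 D.root1 D.hql D.injL D.levL
  have hq' : ∀ i ≤ b, (if i = 0 then ql 0 else qm i) ∈ I ∧
      M i ⊆ A (if i = 0 then ql 0 else qm i) := by
    intro i hi
    by_cases e : i = 0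
    · subst e
      simp only [if_true, ← D.root]
      exact D.hql 0 (by omega)
    · simp only [e, if_false]
      exact D.hqm i (by omega) hi
  have levM : IsLevelling G M b := by
    refine isLevelling_of_lev hA (fun i => if i = 0 then ql 0 else qm i) D.b1
      (D.root ▸ D.root1) hq' ?_ D.levM
    intro i hi j hj hij
    by_cases e : i = 0 <;> by_cases e' : j = 0 <;> simp only [e, e', if_true, if_false] at hij
    · omega
    · exact absurd hij (D.neLM 0 (by omega) j (by omega) hj)
    · exact absurd hij.symm (D.neLM 0 (by omega) i (by omega) hi)
    · exact D.injM i (by omega) hi j (by omega) hj hij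
  have hU : ∀ x, x ∈ (⋃ j ∈ (Finset.range k).image (fun n : ℕ => (n : ℤ)), C j.toNat) →
      ∃ t < k, x ∈ C t := by
    intro x hx
    simp only [Set.mem_iUnion] at hx
    obtain ⟨j, hj, hx⟩ := hx
    exact ⟨_, (hJ j hj).1, hx⟩
  have reachL : Reaches G L a (⋃ j ∈ (Finset.range k).image (fun n : ℕ => (n : ℤ)), C j.toNat) := by
    refine reaches_of levL ?_ ?_ ?_
    · intro i hi
      rw [Set.disjoint_right]
      intro x hx hx'
      obtain ⟨t, ht, hx⟩ := hU x hx
      exact Set.disjoint_left.1 (hdis _ (D.hqc t ht).1 _ (D.hql i hi).1 (D.neCL t ht i hi))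
        ((D.hqc t ht).2 hx) ((D.hql i hi).2 hx')
    · intro x hx
      obtain ⟨t, ht, hx⟩ := hU x hx
      obtain ⟨y, hy, hxy⟩ := D.Yc t t le_rfl ht x hx
      exact ⟨y, D.YL t ht hy, hxy⟩
    · intro i hi y hy x hx
      obtain ⟨t, ht, hx⟩ := hU x hx
      exact D.LC i hi t ht y hy x hx
  have reachM : Reaches G M b (⋃ j ∈ (Finset.range k).image (fun n : ℕ => (n : ℤ)), C j.toNat) := by
    refine reaches_of levM ?_ ?_ ?_
    · intro i hi
      rw [Set.disjoint_right]
      intro x hx hx'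
      obtain ⟨t, ht, hx⟩ := hU x hx
      refine Set.disjoint_left.1 (hdis _ (D.hqc t ht).1 _ (hq' i hi).1 ?_)
        ((D.hqc t ht).2 hx) ((hq' i hi).2 hx')
      by_cases e : i = 0
      · simp only [e, if_true]
        exact D.neCL t ht 0 (by omega)
      · simp only [e, if_false]
        exact D.neCM t ht i (by omega) hi
    · intro x hx
      obtain ⟨t, ht, hx⟩ := hU x hx
      exact D.covM t ht x hx
    · intro i hi y hy x hx
      obtain ⟨t, ht, hx⟩ := hU x hx
      exact D.MC i hi t ht y hy x hx
  refine ⟨L, a, M, b, (Finset.range k).image (fun n : ℕ => (n : ℤ)), fun j => C j.toNat,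
    ⟨⟨?_, ?_⟩, levL, levM, ⟨D.root, ?_, ?_⟩, reachM, reachL, ?_⟩, ?_, ?_, hab, ?_⟩
  · intro j hj
    exact hne _ (hJ j hj).1
  · intro i hi j hj hij
    refine (hdis _ (D.hqc _ (hJ i hi).1).1 _ (D.hqc _ (hJ j hj).1).1 ?_).mono
      (D.hqc _ (hJ i hi).1).2 (D.hqc _ (hJ j hj).1).2
    intro e
    have := D.injC _ (hJ i hi).1 _ (hJ j hj).1 e
    have h1 := (hJ i hi).2
    have h2 := (hJ j hj).2
    omega
  · rw [Set.disjoint_left]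
    intro x hx hx'
    simp only [Set.mem_iUnion, Finset.mem_Icc] at hx hx'
    obtain ⟨j, hj, hx⟩ := hx
    obtain ⟨i, hi, hx'⟩ := hx'
    exact Set.disjoint_left.1 (hdis _ (D.hql i hi.2).1 _ (D.hqm j hj.1 hj.2).1
      (D.neLM i hi.2 j hj.1 hj.2)) ((D.hql i hi.2).2 hx') ((D.hqm j hj.1 hj.2).2 hx)
  · intro x hx y hx'
    simp only [Set.mem_iUnion, Finset.mem_Icc] at hx hx'
    obtain ⟨j, hj, hx⟩ := hx
    obtain ⟨i, hi, hx'⟩ := hx'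
    exact D.par j hj.1 hj.2 i hi.1 hi.2 x hx y hx'
  · intro j hj
    have h2 := (hJ j hj).2
    refine ⟨Y j.toNat, D.YL _ (hJ j hj).1, ?_, ?_⟩
    · intro i hi hji
      have h1 := (hJ i hi).2
      exact D.Yc _ _ (by omega) (hJ i hi).1
    · intro i hi hij
      have h1 := (hJ i hi).2
      exact D.Ya _ (hJ j hj).1 _ (by omega)
  · refine ⟨fun j => qc j.toNat, ql, qm, fun j hj => D.hqc _ (hJ j hj).1, D.hql, D.hqm, ?_,
      D.injL, D.injM, fun j hj => D.neCL _ (hJ j hj).1, fun j hj => D.neCM _ (hJ j hj).1, D.neLM⟩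
    intro j hj j' hj' e
    have := D.injC _ (hJ j hj).1 _ (hJ j' hj').1 e
    have h1 := (hJ j hj).2
    have h2 := (hJ j' hj').2
    omega
  · rw [Finset.card_image_of_injective _ Nat.cast_injective, Finset.card_range]
  · intro j hj i hi hsub
    obtain ⟨x, hx⟩ := hne _ (hJ j hj).1
    have e : i = qc j.toNat := by
      by_contra e
      exact Set.disjoint_left.1 (hdis _ hi _ (D.hqc _ (hJ j hj).1).1 e) (hsub hx)
        ((D.hqc _ (hJ j hj).1).2 hx)
    have h := D.size _ (hJ j hj).1
    rw [← e] at h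
    unfold mm at h
    rw [Set.inter_eq_left.2 hsub] at h
    have hpos : (0 : ℝ) < (A i).ncard := by
      have := (Set.ncard_pos (Set.toFinite (A i))).2 ⟨x, hsub hx⟩
      exact_mod_cast this
    exact (le_div_iff₀ hpos).1 h

/-- Numerical and structural setup from the hypotheses of the theorem. -/
theorem setup_of (k : ℕ) (hk : 1 ≤ k) (c : ℝ) (hc : 0 < c)
    (ρ : ℕ) (hρc : 1 + 1 / c ≤ ρ) (hρ2 : 2 ≤ ρ) (ℓ : ℕ) (hℓ : 3 * ρ - 2 ≤ ℓ)
    (K : ℕ) (hK : k * (ρ + 1) ^ (ℓ + 2) ≤ K)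
    (γ lam θ : ℝ) (hθ : θ = 1 / (2 ^ (8 + ℓ) * ((ρ : ℝ) ^ 3 * (K : ℝ))))
    (hlam : lam ≤ θ) (hγ : γ ≤ θ)
    (δ : ℝ) (hδ : δ = (K : ℝ) ^ (-(K : ℤ)) * (Fintype.card V : ℝ) ^ (-c))
    (hA : IsBlockade I A) (hlen : I.card = K)
    (hlink : LinkageLE G I A lam) (hdiv : ¬ Divergent G I A γ δ) :
    Setup G I A θ δ ((Fintype.card V : ℝ) ^ (-c) / 2) ρ := by
  have hkpow : (ρ + 1) ^ (ℓ + 2) ≤ K := le_trans (Nat.le_mul_of_pos_left _ hk) hK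
  have hρ2' : (2 : ℝ) ≤ ρ := by exact_mod_cast hρ2
  have hℓ4 : 4 ≤ ℓ := by omega
  have hK9 : 3 ^ (ℓ + 2) ≤ K := le_trans (Nat.pow_le_pow_left (by omega) _) hkpow
  have hK729 : 729 ≤ K := le_trans (le_trans (by norm_num) (Nat.pow_le_pow_right (n := 3) (by norm_num)
    (show 6 ≤ ℓ + 2 by omega))) hK9
  have hKpos : (0 : ℝ) < K := by
    have : 0 < K := by omega
    exact_mod_cast this
  have hθpos : 0 < θ := by rw [hθ]; positivity
  have hApos : ∀ i ∈ I, (0 : ℝ) < (A i).ncard := by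
    intro i hi
    have := (Set.ncard_pos (Set.toFinite (A i))).2 (hA.1 i hi)
    exact_mod_cast this
  have hn1 : (1 : ℝ) ≤ Fintype.card V := by
    have hI : I.Nonempty := Finset.card_pos.1 (by omega)
    obtain ⟨i, hi⟩ := hI
    obtain ⟨x, hx⟩ := hA.1 i hi
    have : 0 < Fintype.card V := Fintype.card_pos_iff.2 ⟨x⟩
    exact_mod_cast this
  have hnpos : (0 : ℝ) < Fintype.card V := by linarith
  have hB : (0 : ℝ) < (Fintype.card V : ℝ) ^ (-c) := Real.rpow_pos_of_pos hnpos _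
  refine ⟨hA, ?_, ?_, by omega, ?_, hθpos, by positivity, ?_, hρ2, ?_, ?_, ?_⟩
  · intro i hi j hj hij v hv
    have h := hlink i hi j hj hij v hv
    unfold mm
    rw [div_le_iff₀ (hApos j hj)]
    have e : nbhd G {v} = G.neighborSet v := by
      ext x; simp [nbhd]
    rw [e]
    refine h.trans ?_
    exact mul_le_mul_of_nonneg_right hlam (hApos j hj).le
  · intro i hi j hj hij X hX hδX
    by_contra hcon
    push Not at hcon
    apply hdiv
    refine ⟨j, hj, i, hi, hij.symm, (nbhd G X)ᶜ ∩ A j, Set.inter_subset_right, X, hX, ?_, ?_, ?_⟩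
    · unfold mm at hcon
      rw [le_div_iff₀ (hApos j hj)] at hcon
      exact (mul_le_mul_of_nonneg_right hγ (hApos j hj).le).trans hcon
    · unfold mm at hδX
      rw [le_div_iff₀ (hApos i hi), Set.inter_eq_left.2 hX] at hδX
      exact hδX
    · intro a ha b hb hab
      exact ha.1 ⟨b, hb, hab.symm⟩
  · rw [hδ]; positivity
  · have : (Fintype.card V : ℝ) ^ (-c) ≤ 1 :=
      Real.rpow_le_one_of_one_le_of_nonpos hn1 (by linarith)
    linarith
  · -- the divergence parameter is tiny
    have key : 16 * ρ * (2 ^ (8 + ℓ) * (ρ ^ 3 * K)) ≤ K ^ K := by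
      have h1 : 2 ^ (8 + ℓ) ≤ K * K := by
        calc 2 ^ (8 + ℓ) ≤ 2 ^ ((ℓ + 2) + (ℓ + 2)) * 2 ^ (0 + 0) := by
              rw [← pow_add]; exact Nat.pow_le_pow_right (by norm_num) (by omega)
          _ = 2 ^ (ℓ + 2) * 2 ^ (ℓ + 2) := by rw [pow_add]; simp
          _ ≤ K * K := by
              have : 2 ^ (ℓ + 2) ≤ K := le_trans (Nat.pow_le_pow_left (by omega) _) hkpow
              exact Nat.mul_le_mul this this
      have h2 : ρ ^ 4 ≤ K := by
        calc ρ ^ 4 ≤ (ρ + 1) ^ 4 := Nat.pow_le_pow_left (by omega) _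
          _ ≤ (ρ + 1) ^ (ℓ + 2) := Nat.pow_le_pow_right (by omega) (by omega)
          _ ≤ K := hkpow
      calc 16 * ρ * (2 ^ (8 + ℓ) * (ρ ^ 3 * K)) = 16 * 2 ^ (8 + ℓ) * ρ ^ 4 * K := by ring
        _ ≤ K * (K * K) * K * K := by gcongr; omega
        _ = K ^ 5 := by ring
        _ ≤ K ^ K := Nat.pow_le_pow_right (by omega) (by omega)
    have key' : 16 * (ρ : ℝ) * (2 ^ (8 + ℓ) * ((ρ : ℝ) ^ 3 * K)) ≤ (K : ℝ) ^ K := by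
      exact_mod_cast key
    have hKK : (0 : ℝ) < (K : ℝ) ^ K := by positivity
    have e1 : δ = (Fintype.card V : ℝ) ^ (-c) / (K : ℝ) ^ K := by
      rw [hδ, zpow_neg, zpow_natCast]; field_simp
    have hD : (0 : ℝ) < 2 ^ (8 + ℓ) * ((ρ : ℝ) ^ 3 * K) := by positivity
    rw [e1, hθ]
    rw [mul_one_div, ← mul_div_assoc, div_le_div_iff₀ hKK hD]
    nlinarith [mul_le_mul_of_nonneg_left key' hB.le]
  · have h2 : ρ ^ 2 ≤ K := by
      calc ρ ^ 2 ≤ (ρ + 1) ^ 2 := Nat.pow_le_pow_left (by omega) _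
        _ ≤ (ρ + 1) ^ (ℓ + 2) := Nat.pow_le_pow_right (by omega) (by omega)
        _ ≤ K := hkpow
    have h2' : (ρ : ℝ) ^ 2 ≤ K := by exact_mod_cast h2
    have hD : (0 : ℝ) < 2 ^ (8 + ℓ) * ((ρ : ℝ) ^ 3 * K) := by positivity
    rw [hθ, mul_one_div, div_le_one hD, pow_add]
    have h3 : (1 : ℝ) ≤ 2 ^ ℓ := one_le_pow₀ (by norm_num)
    have h4 : (ρ : ℝ) ^ 5 ≤ (ρ : ℝ) ^ 3 * K := by
      have : (ρ : ℝ) ^ 5 = (ρ : ℝ) ^ 3 * (ρ : ℝ) ^ 2 := by ring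
      rw [this]; gcongr
    have h5 : (ρ : ℝ) ^ 5 ≤ 2 ^ ℓ * ((ρ : ℝ) ^ 3 * K) :=
      h4.trans (le_mul_of_one_le_left (by positivity) h3)
    nlinarith
  · have hc1 : 1 ≤ c * ((ρ - 1 : ℕ) : ℝ) := by
      rw [Nat.cast_sub (by omega)]
      have : 1 / c ≤ (ρ : ℝ) - 1 := by linarith
      rw [div_le_iff₀ hc] at this
      push_cast
      linarith
    rw [div_pow, ← Real.rpow_mul_natCast hnpos.le]
    have h1 : (Fintype.card V : ℝ) ^ (-c * ((ρ - 1 : ℕ) : ℝ)) ≤ (Fintype.card V : ℝ) ^ (-1 : ℝ) :=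
      Real.rpow_le_rpow_of_exponent_le hn1 (by linarith)
    rw [Real.rpow_neg_one] at h1
    have h2 : (2 : ℝ) ≤ 2 ^ (ρ - 1) := by
      calc (2 : ℝ) = 2 ^ 1 := by norm_num
        _ ≤ 2 ^ (ρ - 1) := pow_le_pow_right₀ (by norm_num) (by omega)
    rw [div_mul_eq_mul_div, div_lt_one (by positivity)]
    calc _ ≤ (Fintype.card V : ℝ)⁻¹ * Fintype.card V := by gcongr
      _ = 1 := inv_mul_cancel₀ hnpos.ne'
      _ < _ := by linarith

theorem main_core (k : ℕ) (hk : 1 ≤ k) (ℓ : ℕ) (hℓ : 3 * ρ - 2 ≤ ℓ)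
    (K : ℕ) (hK : k * (ρ + 1) ^ (ℓ + 2) ≤ K) (hlen : I.card = K)
    (hθ : θ = 1 / (2 ^ (8 + ℓ) * ((ρ : ℝ) ^ 3 * (K : ℝ))))
    (S : Setup G I A θ δ β ρ) : Core G I A k ℓ (2 ^ 12 * θ) := by
  have hρ3 := S.ρ3
  have hρ3' : (3 : ℝ) ≤ ρ := by exact_mod_cast hρ3
  have hθp := S.θpos
  have hkpow : (ρ + 1) ^ (ℓ + 2) ≤ K := le_trans (Nat.le_mul_of_pos_left _ hk) hK
  have hKpos : (0 : ℝ) < K := by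
    have : 0 < K := lt_of_lt_of_le (by positivity) hkpow
    exact_mod_cast this
  -- room for the blocks
  have room : ∀ x : ℕ, x + 3 ≤ ℓ → k * ρ ^ x * ρ ^ 4 + (4 * (ρ - 2) + 2) ≤ I.card := by
    intro x hx
    rw [hlen]
    refine le_trans ?_ hK
    have h1 : ρ ^ x * ρ ^ 4 ≤ (ρ + 1) ^ (ℓ + 1) := by
      rw [← pow_add]
      exact (Nat.pow_le_pow_left (by omega) _).trans (Nat.pow_le_pow_right (by omega) (by omega))
    have h2 : 4 * (ρ - 2) + 2 ≤ (ρ + 1) ^ (ℓ + 1) := by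
      calc 4 * (ρ - 2) + 2 ≤ (ρ + 1) ^ 2 := by
            have : ρ - 2 ≤ ρ := by omega
            nlinarith
        _ ≤ (ρ + 1) ^ (ℓ + 1) := Nat.pow_le_pow_right (by omega) (by omega)
    have h3 : (ρ + 1) ^ (ℓ + 2) = (ρ + 1) * (ρ + 1) ^ (ℓ + 1) := by ring
    rw [h3, mul_assoc k]
    have h4 : k * (ρ ^ x * ρ ^ 4) ≤ k * (ρ + 1) ^ (ℓ + 1) := Nat.mul_le_mul_left _ h1
    have h5 : (ρ + 1) ^ (ℓ + 1) ≤ k * (ρ + 1) ^ (ℓ + 1) := Nat.le_mul_of_pos_left _ hk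
    nlinarith
  obtain ⟨h, h3, hle, H⟩ := base1 S (ρ - 2) (by omega) (by
    have := room 0 (by omega)
    have h' : ρ ^ 4 ≤ k * ρ ^ 0 * ρ ^ 4 := Nat.le_mul_of_pos_left _ (by rw [pow_zero, mul_one]; exact hk)
    omega)
  have hη : 2 * θ < 2 ^ 12 * θ := by nlinarith
  have hm : ℓ = h + (ℓ - h) := by omega
  obtain ⟨m, hm⟩ : ∃ m, ℓ = h + m := ⟨_, hm⟩
  rw [hm]
  apply core_iter S hk hη
  have h2m : (1 : ℝ) ≤ 2 ^ m := one_le_pow₀ (by norm_num)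
  apply H
  · nlinarith
  · exact room m (by omega)
  · have hb1 : (2 ^ m * (2 ^ 12 * θ + 2 * θ) - 2 * θ + θ) ≤ 2 ^ m * 2 ^ 13 * θ := by
      nlinarith [mul_pos (show (0 : ℝ) < 2 ^ m by positivity) hθp]
    have hb2 : 2 ^ m * 2 ^ 13 * θ ≤ 4 / ((ρ : ℝ) ^ 3 * K) := by
      rw [hθ, mul_one_div, div_le_div_iff₀ (by positivity) (by positivity)]
      have : (2 : ℝ) ^ m * 2 ^ 13 ≤ 4 * 2 ^ (8 + ℓ) := by
        have e : (4 : ℝ) * 2 ^ (8 + ℓ) = 2 ^ (ℓ + 10) := by rw [pow_add, pow_add]; norm_num; ring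
        rw [e, ← pow_add]
        exact pow_le_pow_right₀ (by norm_num) (by omega)
      have hp : (0 : ℝ) < (ρ : ℝ) ^ 3 * K := by positivity
      nlinarith
    have hKr : (k : ℝ) * (ρ : ℝ) ^ (m + 5) ≤ K := by
      have : k * ρ ^ (m + 5) ≤ K := by
        refine le_trans (Nat.mul_le_mul_left _ ?_) hK
        exact (Nat.pow_le_pow_left (by omega) _).trans (Nat.pow_le_pow_right (by omega) (by omega))
      exact_mod_cast this
    calc ((k * ρ ^ m : ℕ) : ℝ) * (2 ^ m * (2 ^ 12 * θ + 2 * θ) - 2 * θ + θ)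
        ≤ ((k * ρ ^ m : ℕ) : ℝ) * (4 / ((ρ : ℝ) ^ 3 * K)) := by
          gcongr; exact hb1.trans hb2
      _ ≤ 1 / (8 * (ρ : ℝ) ^ 4) := by
          rw [mul_div_assoc', div_le_div_iff₀ (by positivity) (by positivity)]
          push_cast
          have e1 : (k : ℝ) * (ρ : ℝ) ^ m * 4 * (8 * (ρ : ℝ) ^ 4) =
            32 * ((ρ : ℝ) ^ (m + 4) * k) := by ring
          have e2 : (k : ℝ) * (ρ : ℝ) ^ (m + 5) = ρ * ((ρ : ℝ) ^ (m + 4) * k) := by ring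
          rw [e1]
          rw [e2] at hKr
          have h81 : (32 : ℝ) ≤ ρ ^ 3 * ρ := by
            have : (27 : ℝ) ≤ ρ ^ 3 := by
              calc (27 : ℝ) = 3 ^ 3 := by norm_num
                _ ≤ _ := by gcongr
            nlinarith
          calc 32 * ((ρ : ℝ) ^ (m + 4) * k) ≤ (ρ ^ 3 * ρ) * ((ρ : ℝ) ^ (m + 4) * k) := by gcongr
            _ = ρ ^ 3 * (ρ * ((ρ : ℝ) ^ (m + 4) * k)) := by ring
            _ ≤ 1 * (ρ ^ 3 * K) := by rw [one_mul]; gcongr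

end Final

/-- obtaining an `A`-rainbow bi-levelling of length `k` and height
exactly `ℓ`. -/
theorem statement_15 {V : Type} [Fintype V] (G : SimpleGraph V)
    (k : ℕ) (hk : 1 ≤ k) (c : ℝ) (hc : 0 < c)
    (ρ : ℕ) (hρ : ρ = ⌈1 + 1/c⌉₊) (ℓ : ℕ) (hℓ : 3 * ρ - 2 ≤ ℓ)
    (K : ℕ) (hK : K = ⌈(k : ℝ) * (3 + 1/c) ^ (ℓ + 2)⌉₊)
    (γ lam : ℝ) (hγ0 : 0 < γ) (hlam0 : 0 < lam)
    (hlam : lam ≤ (2 : ℝ) ^ (-(8 : ℤ) - (ℓ : ℤ)) / ((ρ : ℝ) ^ 3 * (K : ℝ)))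
    (hγ : γ ≤ (2 : ℝ) ^ (-(8 : ℤ) - (ℓ : ℤ)) / ((ρ : ℝ) ^ 3 * (K : ℝ)))
    (δ : ℝ) (hδ : δ = (K : ℝ) ^ (-(K : ℤ)) * (Fintype.card V : ℝ) ^ (-c))
    (I : Finset ℤ) (A : ℤ → Set V) (hA : IsBlockade I A) (hlen : I.card = K)
    (hlink : LinkageLE G I A lam) (hdiv : ¬ Divergent G I A γ δ) :
    ∃ (L : ℕ → Set V) (a : ℕ) (M : ℕ → Set V) (b : ℕ) (J : Finset ℤ) (C : ℤ → Set V),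
      IsBiLevelling G L a M b J C ∧ RainbowBiLevelling I A L a M b J C ∧
      J.card = k ∧ a + b = ℓ ∧
      SizeGE I A J C ((2 : ℝ) ^ ((4 : ℤ) - (ℓ : ℤ)) / ((ρ : ℝ) ^ 3 * (K : ℝ))) := by
  have hc' : 0 < 1 / c := by positivity
  have hρ1 : 1 + 1 / c ≤ ρ := by rw [hρ]; exact Nat.le_ceil _
  have hρ2 : 2 ≤ ρ := by
    have : (1 : ℝ) < ρ := by linarith
    have : 1 < ρ := by exact_mod_cast this
    omega
  have hρu : (ρ : ℝ) < 1 + 1 / c + 1 := by rw [hρ]; exact Nat.ceil_lt_add_one (by positivity)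
  have hK' : k * (ρ + 1) ^ (ℓ + 2) ≤ K := by
    have h1 : (k : ℝ) * ((ρ : ℝ) + 1) ^ (ℓ + 2) ≤ K := by
      rw [hK]
      refine le_trans ?_ (Nat.le_ceil _)
      have h0 : (ρ : ℝ) + 1 ≤ 3 + 1 / c := by linarith
      exact mul_le_mul_of_nonneg_left (pow_le_pow_left₀ (by positivity) h0 _) (by positivity)
    exact_mod_cast h1
  have hKpos : (0 : ℝ) < K := by
    have : 0 < K := lt_of_lt_of_le (by positivity) hK'
    exact_mod_cast this
  have hρpos : (0 : ℝ) < ρ := by linarith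
  have eθ : (2 : ℝ) ^ (-(8 : ℤ) - (ℓ : ℤ)) / ((ρ : ℝ) ^ 3 * (K : ℝ)) =
      1 / (2 ^ (8 + ℓ) * ((ρ : ℝ) ^ 3 * (K : ℝ))) := by
    have : -(8 : ℤ) - (ℓ : ℤ) = -((8 + ℓ : ℕ) : ℤ) := by push_cast; ring
    rw [this, zpow_neg, zpow_natCast]
    field_simp
  have eη : (2 : ℝ) ^ ((4 : ℤ) - (ℓ : ℤ)) / ((ρ : ℝ) ^ 3 * (K : ℝ)) =
      2 ^ 12 * (1 / (2 ^ (8 + ℓ) * ((ρ : ℝ) ^ 3 * (K : ℝ)))) := by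
    rw [← eθ]
    have : (4 : ℤ) - (ℓ : ℤ) = ((12 : ℕ) : ℤ) + (-(8 : ℤ) - (ℓ : ℤ)) := by push_cast; ring
    rw [this, zpow_add₀ (by norm_num), zpow_natCast]
    ring
  rw [eθ] at hlam hγ
  rw [eη]
  have S := setup_of k hk c hc ρ hρ1 hρ2 ℓ hℓ K hK' γ lam _ rfl hlam hγ δ hδ hA hlen hlink hdiv
  exact core_convert hA (by positivity) (main_core k hk ℓ hℓ K hK' hlen rfl S)

end PurePairs
end
end
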